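/- Suppose λ > 0. Then for every θ ∈ ℝ and every E ∈ σ(H_{α,θ,b}): L(E) > 0 if and only if αE > 2(1−λ), and L(E) = 0 if and only if αE ≤ 2(1−λ). -/

import Mathlib

open scoped Real

/-- The quasi-periodic potential `v(x) = 2λcos(2πx)/(1 - αcos(2πx))`. -/
noncomputable def potV (α lam : ℝ) (x : ℝ) : ℝ :=
  2 * lam * Real.cos (2 * Real.pi * x) / (1 - α * Real.cos (2 * Real.pi * x))

/-- One-step transfer matrix `A(x,z) = [[z - V x, -1],[1,0]]`. -/
noncomputable def tMat (V : ℝ → ℝ) (x : ℝ) (z : ℂ) : Matrix (Fin 2) (Fin 2) ℂ :=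
  !![z - (V x : ℝ), -1; 1, 0]

/-- The `n`-step transfer matrix `A_n(x,z) = A(x+(n-1)b,z) ⋯ A(x+b,z) A(x,z)`. -/
noncomputable def tProd (V : ℝ → ℝ) (b : ℝ) (n : ℕ) (x : ℝ) (z : ℂ) :
    Matrix (Fin 2) (Fin 2) ℂ :=
  (((List.range n).reverse).map (fun j => tMat V (x + (j : ℝ) * b) z)).prod

/-- The operator norm of a 2×2 complex matrix, acting on the Euclidean space `ℂ²`. -/
noncomputable def opNorm2 (M : Matrix (Fin 2) (Fin 2) ℂ) : ℝ :=
  ‖Matrix.toEuclideanCLM (𝕜 := ℂ) M‖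

/-- The Lyapunov exponent `L(z) = lim_n (1/n)∫₀¹ log‖A_n(x,z)‖ dx`; the limit exists and
equals `inf_{n ≥ 1} (1/n)∫₀¹ log‖A_n(x,z)‖ dx` by subadditivity, so we take that as the
definition. -/
noncomputable def lyap (V : ℝ → ℝ) (b : ℝ) (z : ℂ) : ℝ :=
  ⨅ n : ℕ+, ((n : ℝ))⁻¹ * ∫ x in (0:ℝ)..(1:ℝ), Real.log (opNorm2 (tProd V b n x z))

/-- `IsSchrodingerOp V b θ H` says that `H` is the bounded operator on `ℓ²(ℤ)` given by
`(Hu)ₙ = u_{n+1} + u_{n-1} + V(nb+θ)uₙ`. -/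
def IsSchrodingerOp (V : ℝ → ℝ) (b θ : ℝ)
    (H : lp (fun _ : ℤ => ℂ) 2 →L[ℂ] lp (fun _ : ℤ => ℂ) 2) : Prop :=
  ∀ u : lp (fun _ : ℤ => ℂ) 2, ∀ n : ℤ,
    (H u : ∀ _ : ℤ, ℂ) n = (u : ∀ _ : ℤ, ℂ) (n + 1) + (u : ∀ _ : ℤ, ℂ) (n - 1)
      + (V ((n : ℝ) * b + θ) : ℂ) * (u : ∀ _ : ℤ, ℂ) n

namespace LD

/-- max-entry norm -/
noncomputable def nm (A : Matrix (Fin 2) (Fin 2) ℂ) : ℝ :=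
  max (max ‖A 0 0‖ ‖A 0 1‖) (max ‖A 1 0‖ ‖A 1 1‖)

lemma le_nm (A : Matrix (Fin 2) (Fin 2) ℂ) (i j : Fin 2) : ‖A i j‖ ≤ nm A := by
  unfold nm
  fin_cases i <;> fin_cases j <;> simp

lemma nm_le {A : Matrix (Fin 2) (Fin 2) ℂ} {c : ℝ} (h : ∀ i j, ‖A i j‖ ≤ c) : nm A ≤ c := by
  unfold nm
  simp [h]

lemma exists_nm (A : Matrix (Fin 2) (Fin 2) ℂ) : ∃ i j, ‖A i j‖ = nm A := by
  unfold nm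
  rcases max_choice (max ‖A 0 0‖ ‖A 0 1‖) (max ‖A 1 0‖ ‖A 1 1‖) with h | h <;> rw [h]
  · rcases max_choice (‖A 0 0‖) (‖A 0 1‖) with h | h <;> rw [h]
    exacts [⟨0, 0, rfl⟩, ⟨0, 1, rfl⟩]
  · rcases max_choice (‖A 1 0‖) (‖A 1 1‖) with h | h <;> rw [h]
    exacts [⟨1, 0, rfl⟩, ⟨1, 1, rfl⟩]

lemma nm_nonneg (A : Matrix (Fin 2) (Fin 2) ℂ) : 0 ≤ nm A :=
  (norm_nonneg _).trans (le_nm A 0 0)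

lemma nm_mul_le (A B : Matrix (Fin 2) (Fin 2) ℂ) : nm (A * B) ≤ 2 * (nm A * nm B) := by
  apply nm_le
  intro i j
  rw [Matrix.mul_apply, Fin.sum_univ_two]
  have h : ∀ k, ‖A i k * B k j‖ ≤ nm A * nm B := fun k => by
    rw [norm_mul]
    exact mul_le_mul (le_nm _ _ _) (le_nm _ _ _) (norm_nonneg _) (nm_nonneg _)
  calc _ ≤ _ := norm_add_le _ _
    _ ≤ _ := by linarith [h 0, h 1]

lemma nm_one : nm (1 : Matrix (Fin 2) (Fin 2) ℂ) = 1 := by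
  simp [nm]

lemma nm_smul (c : ℂ) (A : Matrix (Fin 2) (Fin 2) ℂ) : nm (c • A) = ‖c‖ * nm A := by
  simp only [nm, Matrix.smul_apply, smul_eq_mul, norm_mul,
    mul_max_of_nonneg _ _ (norm_nonneg c)]

lemma norm_det_le (A : Matrix (Fin 2) (Fin 2) ℂ) : ‖A.det‖ ≤ 2 * nm A ^ 2 := by
  rw [Matrix.det_fin_two]
  have h : ∀ i j k l, ‖A i j * A k l‖ ≤ nm A ^ 2 := fun i j k l => by
    rw [norm_mul, sq]
    exact mul_le_mul (le_nm _ _ _) (le_nm _ _ _) (norm_nonneg _) (nm_nonneg _)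
  calc _ ≤ _ := norm_sub_le _ _
    _ ≤ _ := by linarith [h 0 0 1 1, h 0 1 1 0]

lemma nm_continuous : Continuous nm := by
  unfold nm
  fun_prop

/-- Pluecker-type inequality -/
lemma plucker (X Y Z : Matrix (Fin 2) (Fin 2) ℂ) :
    nm (X * Y) * nm (Y * Z) ≤ nm (X * Y * Z) * nm Y + nm X * nm Z * ‖Y.det‖ := by
  obtain ⟨i, l, h1⟩ := exists_nm (X * Y)
  obtain ⟨k, j, h2⟩ := exists_nm (Y * Z)
  have hX : ∃ i', (X * Y * Z) i j * Y k l - (X * Y) i l * (Y * Z) k j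
      = X i i' * Y.det * (Z (1 - l) j) ∨ (X * Y * Z) i j * Y k l - (X * Y) i l * (Y * Z) k j
      = - (X i i' * Y.det * (Z (1 - l) j)) := by
    refine ⟨1 - k, ?_⟩
    fin_cases i <;> fin_cases l <;> fin_cases k <;> fin_cases j <;>
      simp only [Matrix.mul_apply, Fin.sum_univ_two, Matrix.det_fin_two, Fin.zero_eta, Fin.mk_one,
        Fin.isValue, sub_zero, sub_self] <;>
      first
        | (left; ring1)
        | (right; ring1)
  obtain ⟨i', hX⟩ := hX
  have h3 : ‖(X * Y * Z) i j * Y k l - (X * Y) i l * (Y * Z) k j‖ ≤ nm X * nm Z * ‖Y.det‖ := by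
    have : ‖(X * Y * Z) i j * Y k l - (X * Y) i l * (Y * Z) k j‖
        = ‖X i i'‖ * ‖Y.det‖ * ‖Z (1 - l) j‖ := by
      rcases hX with h | h <;> rw [h] <;> simp
    rw [this]
    calc ‖X i i'‖ * ‖Y.det‖ * ‖Z (1 - l) j‖ = ‖X i i'‖ * ‖Z (1 - l) j‖ * ‖Y.det‖ := by ring
      _ ≤ _ := by
        gcongr
        exacts [nm_nonneg _, le_nm _ _ _, le_nm _ _ _]
  have h4 : ‖(X * Y * Z) i j * Y k l‖ ≤ nm (X * Y * Z) * nm Y := by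
    rw [norm_mul]
    exact mul_le_mul (le_nm _ _ _) (le_nm _ _ _) (norm_nonneg _) (nm_nonneg _)
  rw [← h1, ← h2, ← norm_mul]
  calc ‖(X * Y) i l * (Y * Z) k j‖
      = ‖(X * Y * Z) i j * Y k l - ((X * Y * Z) i j * Y k l - (X * Y) i l * (Y * Z) k j)‖ := by
        congr 1; ring
    _ ≤ _ := norm_sub_le _ _
    _ ≤ _ := add_le_add h4 h3

open scoped Matrix.Norms.L2Operator in
lemma opNorm2_eq (A : Matrix (Fin 2) (Fin 2) ℂ) : opNorm2 A = ‖A‖ := by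
  rw [Matrix.l2_opNorm_def]; rfl

open scoped Matrix.Norms.L2Operator in
lemma opNorm2_mul_le (A B : Matrix (Fin 2) (Fin 2) ℂ) :
    opNorm2 (A * B) ≤ opNorm2 A * opNorm2 B := by
  simp only [opNorm2_eq]; exact norm_mul_le _ _

lemma opNorm2_nonneg (A : Matrix (Fin 2) (Fin 2) ℂ) : 0 ≤ opNorm2 A := norm_nonneg _

open scoped Matrix.Norms.L2Operator in
lemma opNorm2_one : opNorm2 1 = 1 := by
  simp only [opNorm2_eq]; exact norm_one

open scoped Matrix.Norms.L2Operator in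
lemma opNorm2_smul (c : ℂ) (A : Matrix (Fin 2) (Fin 2) ℂ) :
    opNorm2 (c • A) = ‖c‖ * opNorm2 A := by
  simp only [opNorm2_eq]; exact norm_smul _ _

open scoped Matrix.Norms.L2Operator in
lemma opNorm2_continuous : Continuous opNorm2 := by
  have : opNorm2 = fun A => ‖A‖ := funext opNorm2_eq
  rw [this]
  exact continuous_norm

lemma inner_le_opNorm2 (A : Matrix (Fin 2) (Fin 2) ℂ) (u v : EuclideanSpace ℂ (Fin 2)) :
    ‖inner ℂ u (Matrix.toEuclideanCLM (𝕜 := ℂ) A v)‖ ≤ opNorm2 A * ‖u‖ * ‖v‖ := by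
  calc _ ≤ ‖u‖ * ‖Matrix.toEuclideanCLM (𝕜 := ℂ) A v‖ := norm_inner_le_norm _ _
    _ ≤ ‖u‖ * (opNorm2 A * ‖v‖) := by
      gcongr
      exact ContinuousLinearMap.le_opNorm _ _
    _ = _ := by ring

lemma nm_le_opNorm2 (A : Matrix (Fin 2) (Fin 2) ℂ) : nm A ≤ opNorm2 A := by
  apply nm_le
  intro i j
  have := inner_le_opNorm2 A (EuclideanSpace.single i 1) (EuclideanSpace.single j 1)
  simpa [EuclideanSpace.inner_single_left] using this

lemma opNorm2_le_nm (A : Matrix (Fin 2) (Fin 2) ℂ) : opNorm2 A ≤ 2 * nm A := by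
  unfold opNorm2
  refine ContinuousLinearMap.opNorm_le_bound _ (by linarith [nm_nonneg A]) fun v => ?_
  have hN := nm_nonneg A
  have key : ∀ i, ‖(Matrix.toEuclideanCLM (𝕜 := ℂ) A v) i‖ ≤ nm A * (‖v 0‖ + ‖v 1‖) := by
    intro i
    have : (Matrix.toEuclideanCLM (𝕜 := ℂ) A v) i = A i 0 * v 0 + A i 1 * v 1 := by
      rw [Matrix.ofLp_toEuclideanCLM]
      simp [Matrix.mulVec, dotProduct, Fin.sum_univ_two]
    rw [this]
    calc _ ≤ _ := norm_add_le _ _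
      _ ≤ _ := by
        rw [norm_mul, norm_mul, mul_add]
        gcongr <;> apply le_nm
  rw [EuclideanSpace.norm_eq, EuclideanSpace.norm_eq, Fin.sum_univ_two, Fin.sum_univ_two]
  apply Real.sqrt_le_iff.2 ⟨by positivity, ?_⟩
  rw [mul_pow, Real.sq_sqrt (by positivity)]
  have h0 := key 0
  have h1 := key 1
  have e0 : ‖(Matrix.toEuclideanCLM (𝕜 := ℂ) A v) 0‖ ^ 2 ≤ (nm A * (‖v 0‖ + ‖v 1‖)) ^ 2 := by gcongr
  have e1 : ‖(Matrix.toEuclideanCLM (𝕜 := ℂ) A v) 1‖ ^ 2 ≤ (nm A * (‖v 0‖ + ‖v 1‖)) ^ 2 := by gcongr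
  nlinarith [sq_nonneg (nm A * (‖v 0‖ - ‖v 1‖))]

lemma one_le_opNorm2 (A : Matrix (Fin 2) (Fin 2) ℂ) (h : A.det = 1) : 1 ≤ opNorm2 A := by
  -- use A * adjugate
  by_contra hlt
  push Not at hlt
  open scoped Matrix.Norms.L2Operator in
  have hn : ‖A‖ < 1 := by rw [← opNorm2_eq]; exact hlt
  have ht : Filter.Tendsto (fun k : ℕ => A ^ k) Filter.atTop (nhds 0) := by
    open scoped Matrix.Norms.L2Operator in
    exact tendsto_pow_atTop_nhds_zero_of_norm_lt_one hn
  have hd : Continuous (fun B : Matrix (Fin 2) (Fin 2) ℂ => B.det) := by fun_prop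
  have := (hd.tendsto 0).comp ht
  simp only [Function.comp_def, Matrix.det_pow, h, one_pow] at this
  have h2 := tendsto_nhds_unique this tendsto_const_nhds
  simp at h2
end LD

namespace LD
open Polynomial

/-- `ee x = exp(2 pi i x)` -/
noncomputable def ee (x : ℝ) : ℂ := Complex.exp ((2 * Real.pi * x : ℝ) * Complex.I)

lemma norm_ee (x : ℝ) : ‖ee x‖ = 1 := Complex.norm_exp_ofReal_mul_I _

lemma ee_ne (x : ℝ) : ee x ≠ 0 := Complex.exp_ne_zero _

lemma ee_add (x y : ℝ) : ee (x + y) = ee x * ee y := by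
  unfold ee
  rw [← Complex.exp_add]; congr 1; push_cast; ring

lemma ee_zero : ee 0 = 1 := by simp [ee]

lemma ee_nat_mul (n : ℕ) (x : ℝ) : ee (n * x) = ee x ^ n := by
  unfold ee
  rw [← Complex.exp_nat_mul]; congr 1; push_cast; ring

lemma ee_int (n : ℤ) : ee n = 1 := by
  unfold ee
  rw [Complex.exp_eq_one_iff]
  exact ⟨n, by push_cast; ring⟩

lemma ee_one : ee 1 = 1 := by simpa using ee_int 1

lemma ee_periodic : Function.Periodic ee 1 := fun x => by rw [ee_add, ee_one, mul_one]

lemma ee_continuous : Continuous ee := by unfold ee; fun_prop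

lemma exists_ee {z : ℂ} (h : ‖z‖ = 1) : ∃ x, ee x = z := by
  refine ⟨z.arg / (2 * Real.pi), ?_⟩
  have hp := Real.pi_pos
  unfold ee
  rw [mul_div_cancel₀ _ (by positivity)]
  have := Complex.norm_mul_exp_arg_mul_I z
  rw [h] at this
  simpa using this

lemma ee_sq_add_one (x : ℝ) : ee x ^ 2 + 1 = 2 * Real.cos (2 * Real.pi * x) * ee x := by
  have h : (2 * Real.cos (2 * Real.pi * x) : ℂ) = ee x + (ee x)⁻¹ := by
    unfold ee
    rw [← Complex.exp_neg, Complex.ofReal_cos, Complex.cos]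
    push_cast; ring_nf
  rw [h, add_mul, inv_mul_cancel₀ (ee_ne x)]; ring

/-- scalar denominators -/
noncomputable def Cz (α : ℝ) (z : ℂ) : ℂ := z - α / 2 * (z ^ 2 + 1)

/-- matrices with denominators cleared -/
noncomputable def Mz (α lam E : ℝ) (z : ℂ) : Matrix (Fin 2) (Fin 2) ℂ :=
  !![E * z - (α * E + 2 * lam) / 2 * (z ^ 2 + 1), - Cz α z; Cz α z, 0]

/-- cocycle -/
noncomputable def Pz (α lam E : ℝ) (w : ℂ) : ℕ → ℂ → Matrix (Fin 2) (Fin 2) ℂ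
  | 0, _ => 1
  | n + 1, z => Mz α lam E (w ^ n * z) * Pz α lam E w n z

/-- product of the scalar denominators -/
noncomputable def Dz (α : ℝ) (w : ℂ) (n : ℕ) (z : ℂ) : ℂ := ∏ j ∈ Finset.range n, Cz α (w ^ j * z)

lemma Cz_continuous (α : ℝ) : Continuous (Cz α) := by unfold Cz; fun_prop

lemma Mz_continuous (α lam : ℝ) : Continuous (fun p : ℝ × ℂ => Mz α lam p.1 p.2) := by
  unfold Mz
  have := Cz_continuous α
  refine continuous_matrix fun i j => ?_
  fin_cases i <;> fin_cases j <;> simp <;> fun_prop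

lemma Pz_continuous (α lam : ℝ) (n : ℕ) :
    Continuous (fun p : ℝ × ℂ × ℂ => Pz α lam p.1 p.2.1 n p.2.2) := by
  induction n with
  | zero => exact continuous_const
  | succ n ih =>
    simp only [Pz]
    refine Continuous.mul ?_ ih
    exact (Mz_continuous α lam).comp
      (f := fun p : ℝ × ℂ × ℂ => (p.1, p.2.1 ^ n * p.2.2)) (by fun_prop)

lemma Pz_continuous_z (α lam E : ℝ) (w : ℂ) (n : ℕ) : Continuous (Pz α lam E w n) :=
  (Pz_continuous α lam n).comp (f := fun z : ℂ => (E, w, z)) (by fun_prop)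

lemma Dz_continuous (α : ℝ) (n : ℕ) : Continuous (fun p : ℂ × ℂ => Dz α p.1 n p.2) := by
  unfold Dz
  have := Cz_continuous α
  fun_prop

lemma det_Mz (α lam E : ℝ) (z : ℂ) : (Mz α lam E z).det = Cz α z ^ 2 := by
  simp [Mz, Matrix.det_fin_two]; ring

lemma Pz_zero (α lam E : ℝ) (w z : ℂ) : Pz α lam E w 0 z = 1 := rfl

lemma Pz_succ (α lam E : ℝ) (w : ℂ) (n : ℕ) (z : ℂ) :
    Pz α lam E w (n + 1) z = Mz α lam E (w ^ n * z) * Pz α lam E w n z := rfl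

lemma Pz_one (α lam E : ℝ) (w z : ℂ) : Pz α lam E w 1 z = Mz α lam E z := by
  simp [Pz_succ, Pz_zero]

lemma Dz_succ (α : ℝ) (w : ℂ) (n : ℕ) (z : ℂ) :
    Dz α w (n + 1) z = Dz α w n z * Cz α (w ^ n * z) := Finset.prod_range_succ _ _

lemma Dz_zero (α : ℝ) (w z : ℂ) : Dz α w 0 z = 1 := rfl

lemma det_Pz (α lam E : ℝ) (w : ℂ) (n : ℕ) (z : ℂ) :
    (Pz α lam E w n z).det = Dz α w n z ^ 2 := by
  induction n with
  | zero => simp [Pz, Dz]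
  | succ n ih => rw [Pz_succ, Matrix.det_mul, ih, det_Mz, Dz_succ]; ring

lemma Pz_add (α lam E : ℝ) (w : ℂ) (m n : ℕ) (z : ℂ) :
    Pz α lam E w (m + n) z = Pz α lam E w m (w ^ n * z) * Pz α lam E w n z := by
  induction m with
  | zero => simp [Pz]
  | succ m ih =>
    rw [show m + 1 + n = (m + n) + 1 by ring, Pz_succ, ih, Pz_succ, pow_add,
      mul_assoc (w ^ m), mul_assoc (Mz _ _ _ _)]

lemma Dz_add (α : ℝ) (w : ℂ) (m n : ℕ) (z : ℂ) :
    Dz α w (m + n) z = Dz α w m (w ^ n * z) * Dz α w n z := by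
  induction m with
  | zero => simp [Dz]
  | succ m ih =>
    rw [show m + 1 + n = (m + n) + 1 by ring, Dz_succ, ih, Dz_succ, pow_add]; ring_nf

/-- commuting with a rotation -/
lemma Pz_rot (α lam E : ℝ) (w : ℂ) (n : ℕ) (z : ℂ) :
    Pz α lam E w n (w * z) * Mz α lam E z = Mz α lam E (w ^ n * z) * Pz α lam E w n z := by
  rw [← Pz_succ, Pz_add, Pz_one, pow_one]

lemma cden_pos {α : ℝ} (hα : α ∈ Set.Ioo (-1 : ℝ) 1) (x : ℝ) : 0 < 1 - α * Real.cos x := by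
  have h : |α * Real.cos x| < 1 := by
    rw [abs_mul]
    calc |α| * |Real.cos x| ≤ |α| * 1 := by gcongr; exact Real.abs_cos_le_one x
      _ < 1 := by rw [mul_one]; exact abs_lt.2 hα
  linarith [(abs_lt.1 h).2]

lemma Cz_ee (α x : ℝ) : Cz α (ee x) = (1 - α * Real.cos (2 * Real.pi * x) : ℝ) * ee x := by
  unfold Cz
  rw [ee_sq_add_one]; push_cast; ring

lemma norm_Cz_ee {α : ℝ} (hα : α ∈ Set.Ioo (-1 : ℝ) 1) (x : ℝ) :
    ‖Cz α (ee x)‖ = 1 - α * Real.cos (2 * Real.pi * x) := by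
  rw [Cz_ee, norm_mul, norm_ee, mul_one, Complex.norm_real, Real.norm_eq_abs,
    abs_of_pos (cden_pos hα _)]

lemma Cz_ne {α : ℝ} (hα : α ∈ Set.Ioo (-1 : ℝ) 1) {z : ℂ} (hz : ‖z‖ = 1) : Cz α z ≠ 0 := by
  obtain ⟨x, rfl⟩ := exists_ee hz
  rw [← norm_pos_iff, norm_Cz_ee hα]; exact cden_pos hα _

lemma Mz_ee {α : ℝ} (hα : α ∈ Set.Ioo (-1 : ℝ) 1) (lam E x : ℝ) :
    Mz α lam E (ee x) = Cz α (ee x) • tMat (potV α lam) x E := by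
  have hc : ((1 - α * Real.cos (2 * Real.pi * x) : ℝ) : ℂ) ≠ 0 := by
    exact_mod_cast (cden_pos hα _).ne'
  have h1 : Cz α (ee x) * (potV α lam x : ℂ) = lam * (ee x ^ 2 + 1) := by
    rw [Cz_ee, ee_sq_add_one, potV]
    push_cast at hc ⊢
    field_simp
  ext i j
  fin_cases i <;> fin_cases j <;> simp [Mz, tMat]
  rw [mul_sub, h1, Cz]; ring

lemma tProd_succ (V : ℝ → ℝ) (b : ℝ) (n : ℕ) (x : ℝ) (z : ℂ) :
    tProd V b (n + 1) x z = tMat V (x + n * b) z * tProd V b n x z := by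
  simp [tProd, List.range_succ]

lemma tProd_zero (V : ℝ → ℝ) (b : ℝ) (x : ℝ) (z : ℂ) :
    tProd V b 0 x z = 1 := by
  simp [tProd]

lemma ee_pow_mul (n : ℕ) (b x : ℝ) : ee b ^ n * ee x = ee (x + n * b) := by
  rw [ee_add, ee_nat_mul, mul_comm]

lemma Pz_ee {α : ℝ} (hα : α ∈ Set.Ioo (-1 : ℝ) 1) (lam E b : ℝ) (n : ℕ) (x : ℝ) :
    Pz α lam E (ee b) n (ee x) = Dz α (ee b) n (ee x) • tProd (potV α lam) b n x E := by
  induction n with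
  | zero => simp [Pz, Dz, tProd_zero]
  | succ n ih =>
    rw [Pz_succ, ih, ee_pow_mul, Mz_ee hα, tProd_succ, Dz_succ, ee_pow_mul, smul_mul_smul_comm,
      mul_comm (Cz _ _)]

lemma Dz_ne {α : ℝ} (hα : α ∈ Set.Ioo (-1 : ℝ) 1) {w z : ℂ} (hw : ‖w‖ = 1) (hz : ‖z‖ = 1) (n : ℕ) :
    Dz α w n z ≠ 0 := by
  unfold Dz
  rw [Finset.prod_ne_zero_iff]
  intro j _
  exact Cz_ne hα (by simp [hw, hz])

lemma det_tProd (V : ℝ → ℝ) (b : ℝ) (n : ℕ) (x : ℝ) (z : ℂ) : (tProd V b n x z).det = 1 := by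
  induction n with
  | zero => simp [tProd_zero]
  | succ n ih => rw [tProd_succ, Matrix.det_mul, ih]; simp [tMat, Matrix.det_fin_two]

end LD

namespace LD
open MeasureTheory

lemma exists_approx {b : ℝ} (hb : Irrational b) (Q : ℕ) :
    ∃ (p : ℤ) (q : ℕ), Q ≤ q ∧ 0 < q ∧ IsCoprime p (q : ℤ) ∧ |b - p / q| ≤ 1 / (q : ℝ) ^ 2 := by
  have h1 := hb.eventually_forall_le_dist_cast_rat_of_den_le Q
  obtain ⟨ε, hε, h2⟩ := (Metric.eventually_nhds_iff.1 h1)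
  obtain ⟨n, hn⟩ := exists_nat_gt (2 / ε)
  have hn1 : (0 : ℝ) < n := lt_trans (by positivity) hn
  obtain ⟨r, hr1, hr2⟩ := Real.exists_rat_abs_sub_le_and_den_le b (n := n) (by exact_mod_cast hn1)
  have hden : (1 : ℝ) ≤ r.den := by exact_mod_cast r.pos
  refine ⟨r.num, r.den, ?_, r.pos, ?_, ?_⟩
  · by_contra hlt
    push Not at hlt
    have h3 := h2 (y := ε / 2) (by rw [Real.dist_eq, sub_zero, abs_of_pos (by positivity)]; linarith)
      r hlt.le
    rw [Real.dist_eq] at h3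
    have h4 : 1 / (((n : ℝ) + 1) * r.den) < ε / 2 := by
      rw [div_lt_iff₀ (by positivity)]
      rw [div_lt_iff₀ hε] at hn
      nlinarith
    linarith
  · exact Int.isCoprime_iff_nat_coprime.2 (by simpa using r.reduced)
  · have : (r : ℝ) = r.num / r.den := by exact_mod_cast (Rat.num_div_den r).symm
    rw [← this]
    refine hr1.trans ?_
    apply one_div_le_one_div_of_le (by positivity)
    rw [sq]
    gcongr
    have : (r.den : ℝ) ≤ n := by exact_mod_cast hr2
    linarith

lemma equidist {b : ℝ} {p : ℤ} {q : ℕ} (hq : 0 < q) (hpq : IsCoprime p (q : ℤ))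
    (hb : |b - p / q| ≤ 1 / (q : ℝ) ^ 2) {φ g : ℝ → ℝ} (hφ : Function.Periodic φ 1)
    (hg : Function.Periodic g 1) (hgi : ∀ a c, IntervalIntegrable g volume a c)
    (hφg : ∀ x y : ℝ, |x - y| ≤ 2 / (q : ℝ) → φ x ≤ g y) (x : ℝ) :
    ∑ j ∈ Finset.range q, φ (x + j * b) ≤ q * ∫ y in (0 : ℝ)..1, g y := by
  have hq' : (0 : ℝ) < q := by exact_mod_cast hq
  have hqz : (0 : ℤ) < q := by exact_mod_cast hq
  set f : ℕ → ℕ := fun j => ((j : ℤ) * p % q).toNat with hf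
  have hfz : ∀ j, (f j : ℤ) = (j : ℤ) * p % q := fun j =>
    Int.toNat_of_nonneg (Int.emod_nonneg _ hqz.ne')
  have hmaps : ∀ j ∈ Finset.range q, f j ∈ Finset.range q := by
    intro j _
    rw [Finset.mem_range]
    have := Int.emod_lt_of_pos ((j : ℤ) * p) hqz
    rw [← hfz] at this
    exact_mod_cast this
  have hinj : Set.InjOn f (Finset.range q : Set ℕ) := by
    intro i hi j hj hij
    have h1 : (i : ℤ) * p % q = (j : ℤ) * p % q := by rw [← hfz, ← hfz, hij]
    have h2 : (q : ℤ) ∣ ((i : ℤ) - j) * p := by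
      rw [sub_mul]
      exact Int.ModEq.dvd (Int.ModEq.symm h1)
    have h3 : (q : ℤ) ∣ (i : ℤ) - j := (hpq.symm).dvd_of_dvd_mul_right h2
    have h4 := Int.eq_zero_of_abs_lt_dvd h3 (by
      simp at hi hj
      rw [abs_lt]; constructor <;> omega)
    omega
  have himg : (Finset.range q).image f = Finset.range q :=
    Finset.eq_of_subset_of_card_le (Finset.image_subset_iff.2 hmaps)
      (by rw [Finset.card_image_of_injOn hinj])
  set G : ℕ → ℝ := fun k => q * ∫ y in (x + (k : ℝ) / q)..(x + ((k + 1 : ℕ) : ℝ) / q), g y with hG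
  have hstep : ∀ j ∈ Finset.range q, φ (x + j * b) ≤ G (f j) := by
    intro j hj
    rw [Finset.mem_range] at hj
    set t : ℤ := (j : ℤ) * p / q with ht
    have hdiv : (j : ℤ) * p = f j + q * t := by
      rw [hfz]; exact (Int.emod_add_mul_ediv _ _).symm
    have hdivR : (j : ℝ) * p = f j + q * t := by exact_mod_cast hdiv
    have e1 : φ (x + j * b) = φ (x + f j / q + j * (b - p / q)) := by
      have : x + j * b = (x + f j / q + j * (b - p / q)) + t * 1 := by
        have : (f j : ℝ) = j * p - q * t := by linarith
        rw [this]; field_simp; ring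
      rw [this]
      exact hφ.int_mul t _
    have herr : |(j : ℝ) * (b - p / q)| ≤ 1 / q := by
      rw [abs_mul, Nat.abs_cast]
      calc (j : ℝ) * |b - p / q| ≤ q * (1 / (q : ℝ) ^ 2) := by
            gcongr
        _ = 1 / q := by field_simp
    have hlen : x + (f j : ℝ) / q ≤ x + ((f j + 1 : ℕ) : ℝ) / q := by
      gcongr; linarith
    have h2 : ∫ y in (x + (f j : ℝ) / q)..(x + ((f j + 1 : ℕ) : ℝ) / q), φ (x + j * b)
        ≤ ∫ y in (x + (f j : ℝ) / q)..(x + ((f j + 1 : ℕ) : ℝ) / q), g y := by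
      apply intervalIntegral.integral_mono_on hlen (by simp) (hgi _ _)
      intro y hy
      rw [e1]
      apply hφg
      have h3 := abs_le.1 herr
      have h4 : ((f j + 1 : ℕ) : ℝ) / q = f j / q + 1 / q := by push_cast; ring
      rw [h4] at hy
      have : (2 : ℝ) / q = 1 / q + 1 / q := by ring
      rw [this, abs_le]
      constructor <;> linarith [hy.1, hy.2, h3.1, h3.2]
    rw [intervalIntegral.integral_const, smul_eq_mul] at h2
    have h5 : x + ((f j + 1 : ℕ) : ℝ) / q - (x + (f j : ℝ) / q) = 1 / q := by push_cast; ring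
    rw [h5] at h2
    calc φ (x + j * b) = q * (1 / q * φ (x + j * b)) := by field_simp
      _ ≤ _ := mul_le_mul_of_nonneg_left h2 hq'.le
  calc ∑ j ∈ Finset.range q, φ (x + j * b) ≤ ∑ j ∈ Finset.range q, G (f j) :=
        Finset.sum_le_sum hstep
    _ = ∑ k ∈ (Finset.range q).image f, G k := (Finset.sum_image hinj).symm
    _ = ∑ k ∈ Finset.range q, G k := by rw [himg]
    _ = q * ∫ y in x..(x + 1), g y := by
        rw [hG, ← Finset.mul_sum]
        rw [intervalIntegral.sum_integral_adjacent_intervals (a := fun k : ℕ => x + (k : ℝ) / q)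
          (fun k _ => hgi _ _)]
        simp [hq'.ne']
    _ = _ := by rw [hg.intervalIntegral_add_eq x 0, zero_add]

end LD

namespace LD
open MeasureTheory

lemma circAvg (f : ℂ → ℝ) : Real.circleAverage f 0 1 = ∫ x in (0 : ℝ)..1, f (ee x) := by
  have hp := Real.pi_pos
  rw [Real.circleAverage]
  have h := intervalIntegral.integral_comp_mul_left (a := 0) (b := 1)
    (fun θ => f (circleMap 0 1 θ)) (c := 2 * Real.pi) (by positivity)
  rw [mul_zero, mul_one] at h
  rw [← h]
  apply intervalIntegral.integral_congr
  intro x _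
  simp [circleMap, ee]

/-- the constant `exp ∫ log c` -/
noncomputable def kap (α : ℝ) : ℝ := (1 + √(1 - α ^ 2)) / 2

lemma kap_pos (α : ℝ) : 0 < kap α := by unfold kap; positivity

lemma kap_eq {α : ℝ} (hα : α ∈ Set.Ioo (-1 : ℝ) 1) : kap α + α ^ 2 / (4 * kap α) = 1 := by
  have h1 : 0 ≤ 1 - α ^ 2 := by nlinarith [hα.1, hα.2]
  have h2 := Real.sq_sqrt h1
  have h3 := kap_pos α
  field_simp
  unfold kap
  nlinarith

lemma cden_factor {α : ℝ} (hα : α ∈ Set.Ioo (-1 : ℝ) 1) (x : ℝ) :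
    1 - α * Real.cos (2 * Real.pi * x) = kap α * ‖ee x - (α / (2 * kap α) : ℝ)‖ ^ 2 := by
  have h3 := kap_pos α
  have h4 := kap_eq hα
  rw [← Complex.normSq_eq_norm_sq, Complex.normSq_apply]
  have hre : (ee x).re = Real.cos (2 * Real.pi * x) := by
    unfold ee; rw [Complex.exp_ofReal_mul_I_re]
  have him : (ee x).im = Real.sin (2 * Real.pi * x) := by
    unfold ee; rw [Complex.exp_ofReal_mul_I_im]
  simp only [Complex.sub_re, Complex.sub_im, Complex.ofReal_re, Complex.ofReal_im, hre, him, sub_zero]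
  have h5 := Real.sin_sq_add_cos_sq (2 * Real.pi * x)
  set C := Real.cos (2 * Real.pi * x)
  set S := Real.sin (2 * Real.pi * x)
  have h6 : kap α * ((C - α / (2 * kap α)) * (C - α / (2 * kap α)) + S * S)
     = kap α * (S ^ 2 + C ^ 2) - α * C + α ^ 2 / (4 * kap α) := by
    field_simp; ring
  rw [h6, h5]; linarith

lemma alpha_kap {α : ℝ} (hα : α ∈ Set.Ioo (-1 : ℝ) 1) : |α / (2 * kap α)| < 1 := by
  have h3 := kap_pos α
  rw [abs_div, abs_of_pos (show 0 < 2 * kap α by positivity), div_lt_one (by positivity)]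
  have : 1 ≤ 2 * kap α := by
    unfold kap
    have := Real.sqrt_nonneg (1 - α ^ 2)
    linarith
  exact lt_of_lt_of_le (abs_lt.2 hα) this

lemma integral_log_cden {α : ℝ} (hα : α ∈ Set.Ioo (-1 : ℝ) 1) :
    ∫ x in (0 : ℝ)..1, Real.log (1 - α * Real.cos (2 * Real.pi * x)) = Real.log (kap α) := by
  have h3 := kap_pos α
  have hne : ∀ x, 0 < ‖ee x - (α / (2 * kap α) : ℝ)‖ := by
    intro x
    have h := cden_pos hα (2 * Real.pi * x)
    rw [cden_factor hα] at h
    by_contra h0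
    have : ‖ee x - (α / (2 * kap α) : ℝ)‖ = 0 := le_antisymm (not_lt.1 h0) (norm_nonneg _)
    rw [this] at h; simp at h
  have h1 : ∀ x, Real.log (1 - α * Real.cos (2 * Real.pi * x))
      = Real.log (kap α) + 2 * Real.log ‖ee x - (α / (2 * kap α) : ℝ)‖ := by
    intro x
    rw [cden_factor hα, Real.log_mul h3.ne' (pow_ne_zero _ (hne x).ne'), Real.log_pow]
    push_cast; ring
  simp_rw [h1]
  have hc : Continuous fun x => Real.log ‖ee x - (α / (2 * kap α) : ℝ)‖ := by
    have := ee_continuous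
    exact Continuous.log (by fun_prop) fun x => (hne x).ne'
  rw [intervalIntegral.integral_add (by simp) ((hc.const_mul 2).intervalIntegrable _ _),
    intervalIntegral.integral_const_mul]
  have h2 := circAvg (fun z => Real.log ‖z - (α / (2 * kap α) : ℝ)‖)
  rw [circleAverage_log_norm_sub_const_eq_posLog] at h2
  rw [← h2, Real.posLog_eq_zero_iff _ |>.2]
  · simp
  · rw [abs_norm, Complex.norm_real]
    exact (alpha_kap hα).le

lemma log_cden_continuous {α : ℝ} (hα : α ∈ Set.Ioo (-1 : ℝ) 1) :
    Continuous fun x => Real.log (1 - α * Real.cos (2 * Real.pi * x)) :=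
  Continuous.log (by fun_prop) fun x => (cden_pos hα _).ne'

lemma opNorm2_pos {A : Matrix (Fin 2) (Fin 2) ℂ} (h : A.det ≠ 0) : 0 < opNorm2 A := by
  have h1 := norm_det_le A
  have h2 := nm_le_opNorm2 A
  have h3 := norm_pos_iff.2 h
  have h4 := nm_nonneg A
  by_contra hc
  have : nm A = 0 := by linarith
  rw [this] at h1; simp at h1; exact h h1

lemma nm_pos {A : Matrix (Fin 2) (Fin 2) ℂ} (h : A.det ≠ 0) : 0 < nm A := by
  have := opNorm2_pos h
  have := opNorm2_le_nm A
  linarith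

lemma det_Pz_ne {α : ℝ} (hα : α ∈ Set.Ioo (-1 : ℝ) 1) (lam E : ℝ) {w z : ℂ}
    (hw : ‖w‖ = 1) (hz : ‖z‖ = 1) (n : ℕ) : (Pz α lam E w n z).det ≠ 0 := by
  rw [det_Pz]; exact pow_ne_zero _ (Dz_ne hα hw hz n)

lemma log_op_continuous {α : ℝ} (hα : α ∈ Set.Ioo (-1 : ℝ) 1) (lam E b : ℝ) (n : ℕ) :
    Continuous fun x => Real.log (opNorm2 (Pz α lam E (ee b) n (ee x))) :=
  Continuous.log (opNorm2_continuous.comp ((Pz_continuous_z _ _ _ _ _).comp ee_continuous))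
    fun x => (opNorm2_pos (det_Pz_ne hα _ _ (norm_ee b) (norm_ee x) n)).ne'

lemma log_nm_continuous {α : ℝ} (hα : α ∈ Set.Ioo (-1 : ℝ) 1) (lam E b : ℝ) (n : ℕ) :
    Continuous fun x => Real.log (nm (Pz α lam E (ee b) n (ee x))) :=
  Continuous.log (nm_continuous.comp ((Pz_continuous_z _ _ _ _ _).comp ee_continuous))
    fun x => (nm_pos (det_Pz_ne hα _ _ (norm_ee b) (norm_ee x) n)).ne'

/-- integrated log norm -/
noncomputable def In (α lam E b : ℝ) (n : ℕ) : ℝ :=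
  ∫ x in (0 : ℝ)..1, Real.log (opNorm2 (Pz α lam E (ee b) n (ee x)))

lemma integral_log_Dz {α : ℝ} (hα : α ∈ Set.Ioo (-1 : ℝ) 1) (b : ℝ) (n : ℕ) :
    ∫ x in (0 : ℝ)..1, Real.log ‖Dz α (ee b) n (ee x)‖ = n * Real.log (kap α) := by
  have h1 : ∀ x, Real.log ‖Dz α (ee b) n (ee x)‖ = ∑ j ∈ Finset.range n,
      Real.log (1 - α * Real.cos (2 * Real.pi * (x + j * b))) := by
    intro x
    unfold Dz
    rw [norm_prod, Real.log_prod]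
    · refine Finset.sum_congr rfl fun j _ => ?_
      rw [ee_pow_mul, norm_Cz_ee hα]
    · intro j _
      rw [ee_pow_mul, norm_Cz_ee hα]; exact (cden_pos hα _).ne'
  simp_rw [h1]
  rw [intervalIntegral.integral_finsetSum]
  · have h2 : ∀ j ∈ Finset.range n, ∫ x in (0 : ℝ)..1,
        Real.log (1 - α * Real.cos (2 * Real.pi * (x + j * b))) = Real.log (kap α) := by
      intro j _
      rw [intervalIntegral.integral_comp_add_right
        (fun x => Real.log (1 - α * Real.cos (2 * Real.pi * x))), ← integral_log_cden hα]
      have hper : Function.Periodic (fun x => Real.log (1 - α * Real.cos (2 * Real.pi * x))) 1 := by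
        intro x
        simp only
        rw [mul_add, mul_one, Real.cos_add_two_pi]
      have := hper.intervalIntegral_add_eq (0 + j * b) 0
      rw [zero_add] at this
      rw [zero_add, add_comm 1 _, this, zero_add]
    rw [Finset.sum_congr rfl h2]; simp
  · intro j _
    apply Continuous.intervalIntegrable
    exact (log_cden_continuous hα).comp (f := fun x => x + j * b) (by fun_prop)

lemma In_eq {α : ℝ} (hα : α ∈ Set.Ioo (-1 : ℝ) 1) (lam E b : ℝ) (n : ℕ) :
    ∫ x in (0 : ℝ)..1, Real.log (opNorm2 (tProd (potV α lam) b n x E))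
      = In α lam E b n - n * Real.log (kap α) := by
  rw [← integral_log_Dz hα b n, In, ← intervalIntegral.integral_sub]
  · apply intervalIntegral.integral_congr
    intro x _
    simp only
    have hD := norm_pos_iff.2 (Dz_ne hα (norm_ee b) (norm_ee x) n)
    have ht : 0 < opNorm2 (tProd (potV α lam) b n x E) :=
      opNorm2_pos (by rw [det_tProd]; exact one_ne_zero)
    rw [Pz_ee hα, opNorm2_smul, Real.log_mul hD.ne' ht.ne']; ring
  · exact (log_op_continuous hα _ _ _ _).intervalIntegrable _ _
  · apply Continuous.intervalIntegrable
    refine Continuous.log (((Dz_continuous α n).comp (f := fun x => (ee b, ee x))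
      (by have := ee_continuous; fun_prop)).norm) fun x => ?_
    exact (norm_pos_iff.2 (Dz_ne hα (norm_ee b) (norm_ee x) n)).ne'

lemma lyap_term_nonneg (V : ℝ → ℝ) (b : ℝ) (z : ℂ) (n : ℕ+) :
    0 ≤ ((n : ℝ))⁻¹ * ∫ x in (0:ℝ)..(1:ℝ), Real.log (opNorm2 (tProd V b n x z)) := by
  apply mul_nonneg (by positivity)
  apply intervalIntegral.integral_nonneg zero_le_one
  intro x _
  exact Real.log_nonneg (one_le_opNorm2 _ (det_tProd _ _ _ _ _))

lemma lyap_nonneg (V : ℝ → ℝ) (b : ℝ) (z : ℂ) : 0 ≤ lyap V b z :=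
  le_ciInf (lyap_term_nonneg V b z)

lemma In_ge {α : ℝ} (hα : α ∈ Set.Ioo (-1 : ℝ) 1) (lam E b : ℝ) {n : ℕ} (hn : 0 < n) :
    n * (lyap (potV α lam) b E + Real.log (kap α)) ≤ In α lam E b n := by
  have h : lyap (potV α lam) b E ≤ ((n : ℝ))⁻¹ * ∫ x in (0:ℝ)..(1:ℝ),
      Real.log (opNorm2 (tProd (potV α lam) b n x E)) :=
    ciInf_le ⟨0, by rintro _ ⟨m, rfl⟩; exact lyap_term_nonneg _ _ _ m⟩ (⟨n, hn⟩ : ℕ+)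
  rw [In_eq hα] at h
  have hn' : (0 : ℝ) < n := by exact_mod_cast hn
  rw [inv_mul_eq_div, le_div_iff₀ hn'] at h
  linarith

lemma exists_In_le {α : ℝ} (hα : α ∈ Set.Ioo (-1 : ℝ) 1) (lam E b : ℝ) {δ : ℝ} (hδ : 0 < δ) :
    ∃ n : ℕ, 0 < n ∧ In α lam E b n ≤ n * (lyap (potV α lam) b E + Real.log (kap α) + δ) := by
  obtain ⟨n, h⟩ := exists_lt_of_ciInf_lt (show lyap (potV α lam) b E <
    lyap (potV α lam) b E + δ by linarith)
  refine ⟨n, n.pos, ?_⟩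
  have hn' : (0 : ℝ) < (n : ℕ) := by exact_mod_cast n.pos
  rw [In_eq hα, inv_mul_eq_div, div_lt_iff₀ hn'] at h
  linarith

lemma lyap_ge_of {α : ℝ} (hα : α ∈ Set.Ioo (-1 : ℝ) 1) (lam E b : ℝ) (c : ℝ)
    (h : ∀ n : ℕ, 0 < n → n * (c + Real.log (kap α)) ≤ In α lam E b n) :
    c ≤ lyap (potV α lam) b E := by
  apply le_ciInf
  intro n
  have hn' : (0 : ℝ) < (n : ℕ) := by exact_mod_cast n.pos
  rw [In_eq hα, inv_mul_eq_div, le_div_iff₀ hn']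
  have := h n n.pos
  linarith

end LD

namespace LD
open MeasureTheory Polynomial

/-- scalar polynomial -/
noncomputable def CP (α : ℝ) (a : ℂ) : ℂ[X] := C a * X - C (α / 2 : ℂ) * ((C a * X) ^ 2 + 1)

/-- matrix polynomial, scaled variable -/
noncomputable def MP (α lam E : ℝ) (a : ℂ) : Matrix (Fin 2) (Fin 2) ℂ[X] :=
  !![C (E : ℂ) * (C a * X) - C ((α * E + 2 * lam) / 2 : ℂ) * ((C a * X) ^ 2 + 1), - CP α a;
    CP α a, 0]

/-- polynomial version of the cocycle -/
noncomputable def PP (α lam E : ℝ) (w : ℂ) : ℕ → Matrix (Fin 2) (Fin 2) ℂ[X]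
  | 0 => 1
  | n + 1 => MP α lam E (w ^ n) * PP α lam E w n

lemma eval_MP (α lam E : ℝ) (a z : ℂ) (i j : Fin 2) :
    (MP α lam E a i j).eval z = Mz α lam E (a * z) i j := by
  fin_cases i <;> fin_cases j <;> simp [MP, Mz, CP, Cz]

lemma eval_PP (α lam E : ℝ) (w : ℂ) (n : ℕ) (z : ℂ) (i j : Fin 2) :
    (PP α lam E w n i j).eval z = Pz α lam E w n z i j := by
  induction n generalizing i j with
  | zero => fin_cases i <;> fin_cases j <;> simp [PP, Pz]
  | succ n ih =>
    simp only [PP, Pz_succ, Matrix.mul_apply, Fin.sum_univ_two, eval_add, eval_mul, ih, eval_MP]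

lemma natDegree_CP (α : ℝ) (a : ℂ) : (CP α a).natDegree ≤ 2 := by
  unfold CP; compute_degree

lemma natDegree_MP (α lam E : ℝ) (a : ℂ) (i j : Fin 2) : (MP α lam E a i j).natDegree ≤ 2 := by
  have h := natDegree_CP α a
  fin_cases i <;> fin_cases j <;> simp [MP, h]
  compute_degree

lemma coeff_two_MP (α lam E : ℝ) (a : ℂ) (i j : Fin 2) :
    (MP α lam E a i j).coeff 2 = a ^ 2 * Mz α lam E 0 i j := by
  have h0 : ((C a : ℂ[X]) ^ 2 * X ^ 2).coeff 2 = a ^ 2 := by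
    rw [← C_pow, coeff_C_mul, coeff_X_pow]; simp
  have h : (CP α a).coeff 2 = a ^ 2 * Cz α 0 := by
    unfold CP Cz
    rw [mul_pow]
    simp [coeff_one, h0]; ring
  fin_cases i <;> fin_cases j
  · simp only [MP, Mz]
    rw [mul_pow]
    simp [coeff_one, h0]; ring
  · simp [MP, Mz, h]
  · simp [MP, Mz, h]
  · simp [MP, Mz]

lemma natDegree_PP (α lam E : ℝ) (w : ℂ) (n : ℕ) (i j : Fin 2) :
    (PP α lam E w n i j).natDegree ≤ 2 * n := by
  induction n generalizing i j with
  | zero => fin_cases i <;> fin_cases j <;> simp [PP]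
  | succ n ih =>
    simp only [PP, Matrix.mul_apply, Fin.sum_univ_two]
    refine natDegree_add_le_of_degree_le ?_ ?_
    all_goals
      refine natDegree_mul_le.trans ?_
      rw [mul_add, add_comm, mul_one]
      exact add_le_add (ih _ _) (natDegree_MP _ _ _ _ _ _)

lemma coeff_top_PP (α lam E : ℝ) (w : ℂ) (hw : ‖w‖ = 1) (n : ℕ) : ∃ c : ℂ, ‖c‖ = 1 ∧ ∀ i j,
    (PP α lam E w n i j).coeff (2 * n) = c * (Mz α lam E 0 ^ n) i j := by
  induction n with
  | zero => exact ⟨1, by simp, fun i j => by fin_cases i <;> fin_cases j <;> simp [PP]⟩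
  | succ n ih =>
    obtain ⟨c, hc, h⟩ := ih
    refine ⟨(w ^ n) ^ 2 * c, by simp [hw, hc], fun i j => ?_⟩
    simp only [PP, Matrix.mul_apply, Fin.sum_univ_two, coeff_add]
    rw [show 2 * (n + 1) = 2 + 2 * n by ring]
    rw [coeff_mul_add_eq_of_natDegree_le (natDegree_MP _ _ _ _ _ _) (natDegree_PP _ _ _ _ _ _ _),
      coeff_mul_add_eq_of_natDegree_le (natDegree_MP _ _ _ _ _ _) (natDegree_PP _ _ _ _ _ _ _), h, h,
      coeff_two_MP, coeff_two_MP, pow_succ' (Mz α lam E 0), Matrix.mul_apply, Fin.sum_univ_two]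
    ring

lemma Pz_at_zero (α lam E : ℝ) (w : ℂ) (n : ℕ) : Pz α lam E w n 0 = Mz α lam E 0 ^ n := by
  induction n with
  | zero => simp [Pz]
  | succ n ih => rw [Pz_succ, ih, mul_zero, pow_succ']

lemma ee_eq_iff {x y : ℝ} (h : ee x = ee y) : ∃ n : ℤ, x = y + n := by
  unfold ee at h
  rw [Complex.exp_eq_exp_iff_exists_int] at h
  obtain ⟨n, hn⟩ := h
  refine ⟨n, ?_⟩
  have hp : (Real.pi : ℂ) ≠ 0 := by exact_mod_cast Real.pi_ne_zero
  have h2 : ((x : ℝ) : ℂ) = y + n := by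
    have : (2 * Real.pi * Complex.I) * (x : ℂ) = (2 * Real.pi * Complex.I) * (y + n) := by
      push_cast at hn
      linear_combination hn
    exact mul_left_cancel₀ (by simp [hp]) this
  exact_mod_cast h2

lemma ee_preimage_countable (w : ℂ) : (ee ⁻¹' {w}).Countable := by
  by_cases h : ∃ y, ee y = w
  · obtain ⟨y, rfl⟩ := h
    refine (Set.countable_range (fun n : ℤ => y + (n : ℝ))).mono ?_
    intro x hx
    obtain ⟨n, hn⟩ := ee_eq_iff hx
    exact ⟨n, hn.symm⟩
  · have : ee ⁻¹' {w} = ∅ := by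
      ext x; simp; intro hx; exact h ⟨x, hx⟩
    rw [this]; exact Set.countable_empty

lemma ae_eval_ee_ne {p : ℂ[X]} (hp : p ≠ 0) : ∀ᵐ x : ℝ, p.eval (ee x) ≠ 0 := by
  have : {x : ℝ | p.eval (ee x) = 0}.Countable := by
    have h : {x : ℝ | p.eval (ee x) = 0} ⊆ ⋃ w ∈ (p.roots.toFinset : Set ℂ), ee ⁻¹' {w} := by
      intro x hx
      simp only [Set.mem_iUnion]
      exact ⟨ee x, by simpa [hp] using hx, rfl⟩
    refine Set.Countable.mono h ?_
    exact (Finset.countable_toSet _).biUnion fun w _ => ee_preimage_countable w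
  have h0 := this.measure_zero volume
  rw [ae_iff]; simpa using h0

lemma log_eval_integrable (p : ℂ[X]) :
    IntervalIntegrable (fun x => Real.log ‖p.eval (ee x)‖) volume 0 1 := by
  have h := p.intervalIntegrable_mahlerMeasure
  have hp := Real.pi_pos
  have h2 := h.comp_mul_left (c := 2 * Real.pi) (by simp)
  rw [zero_div, div_self (by positivity)] at h2
  refine h2.congr ?_
  intro x _
  simp [circleMap, ee]

lemma logMahler_eq (p : ℂ[X]) :
    p.logMahlerMeasure = ∫ x in (0 : ℝ)..1, Real.log ‖p.eval (ee x)‖ := by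
  rw [logMahlerMeasure_def, circAvg]

lemma logMahler_le {p : ℂ[X]} (hp : p ≠ 0) {g : ℝ → ℝ}
    (hgi : IntervalIntegrable (fun x => Real.log (g x)) volume 0 1)
    (h : ∀ x, ‖p.eval (ee x)‖ ≤ g x) :
    p.logMahlerMeasure ≤ ∫ x in (0 : ℝ)..1, Real.log (g x) := by
  rw [logMahler_eq]
  apply intervalIntegral.integral_mono_ae zero_le_one (log_eval_integrable p) hgi
  filter_upwards [ae_eval_ee_ne hp] with x hx
  exact Real.log_le_log (norm_pos_iff.2 hx) (h x)

/-- Herman lower bound -/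
lemma herman {α : ℝ} (hα : α ∈ Set.Ioo (-1 : ℝ) 1) (lam E b : ℝ) (hβ : 2 < α * E + 2 * lam) :
    0 < lyap (potV α lam) b E := by
  set β := α * E + 2 * lam with hβd
  have hα2 : α ^ 2 < 1 := by nlinarith [hα.1, hα.2]
  have hD : 0 < β ^ 2 - 4 * α ^ 2 := by nlinarith
  set μ := -(β + √(β ^ 2 - 4 * α ^ 2)) / 4 with hμ
  have hs := Real.sq_sqrt hD.le
  have hμe : μ ^ 2 + β / 2 * μ + α ^ 2 / 4 = 0 := by rw [hμ]; nlinarith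
  have hμk : kap α < |μ| := by
    have h1 : √(1 - α ^ 2) ≤ √(β ^ 2 - 4 * α ^ 2) := Real.sqrt_le_sqrt (by nlinarith)
    have h2 : 2 * √(1 - α ^ 2) ≤ √(β ^ 2 - 4 * α ^ 2) := by
      apply Real.le_sqrt_of_sq_le
      rw [mul_pow, Real.sq_sqrt (by linarith)]
      nlinarith
    have h3 : |μ| = (β + √(β ^ 2 - 4 * α ^ 2)) / 4 := by
      rw [hμ, neg_div, abs_neg, abs_of_pos (by positivity)]
    rw [h3, kap]
    have h4 : 2 < β := hβ
    generalize √(β ^ 2 - 4 * α ^ 2) = A at *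
    generalize √(1 - α ^ 2) = B at *
    generalize β = β' at h4
    linarith
  have hkp := kap_pos α
  have hμ0 : μ ≠ 0 := by
    intro h; rw [h] at hμk; simp at hμk; linarith
  -- eigenvector
  set s : ℝ := μ ^ 2 + α ^ 2 / 4 with hsd
  have hspos : 0 < s := by positivity
  have key : ∀ n : ℕ, 0 < n → n * ((Real.log |μ| - Real.log (kap α)) + Real.log (kap α))
      ≤ In α lam E b n := by
    intro n hn
    set P := PP α lam E (ee b) n with hP
    set u : Fin 2 → ℂ := ![(μ : ℂ), -(α : ℂ) / 2] with hu
    have hMu : (Mz α lam E 0).mulVec u = (μ : ℂ) • u := by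
      have hμe' : (μ : ℂ) ^ 2 + β / 2 * μ + α ^ 2 / 4 = 0 := by exact_mod_cast hμe
      have hβc : (β : ℂ) = α * E + 2 * lam := by rw [hβd]; push_cast; ring
      rw [hβc] at hμe'
      ext i
      fin_cases i
      · simp [Mz, Cz, hu, Matrix.mulVec, dotProduct]
        linear_combination (-1 : ℂ) * hμe'
      · simp [Mz, Cz, hu, Matrix.mulVec, dotProduct]; ring
    have hMnu : ∀ k : ℕ, (Mz α lam E 0 ^ k).mulVec u = ((μ : ℂ) ^ k) • u := by
      intro k
      induction k with
      | zero => simp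
      | succ k ih =>
        rw [pow_succ', ← Matrix.mulVec_mulVec, ih, Matrix.mulVec_smul, hMu, smul_smul, pow_succ]
    set f : ℂ[X] := C (1 / s : ℂ) * ∑ i, ∑ j, C (u i * u j) * P i j with hf
    have hfe : ∀ z, f.eval z = 1 / s * (u ⬝ᵥ (Pz α lam E (ee b) n z).mulVec u) := by
      intro z
      simp only [hf, hP, eval_mul, eval_C, Fin.sum_univ_two, eval_add, eval_PP, Matrix.mulVec,
        dotProduct]
      ring
    have hs' : (s : ℂ) ≠ 0 := by exact_mod_cast hspos.ne'
    have huu : u ⬝ᵥ u = s := by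
      simp [hu, hsd, dotProduct, Fin.sum_univ_two]; ring
    have hf0 : f.coeff 0 = (μ : ℂ) ^ n := by
      rw [coeff_zero_eq_eval_zero, hfe, Pz_at_zero, hMnu, dotProduct_smul, huu, smul_eq_mul]
      field_simp
    have hfne : f ≠ 0 := by
      intro h; rw [h] at hf0; rw [coeff_zero] at hf0
      exact pow_ne_zero n hμ0 (by exact_mod_cast hf0.symm)
    have hfb : ∀ z, ‖f.eval z‖ ≤ opNorm2 (Pz α lam E (ee b) n z) := by
      intro z
      have h1 := inner_le_opNorm2 (Pz α lam E (ee b) n z) (WithLp.toLp 2 u) (WithLp.toLp 2 u)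
      have h2 : inner ℂ (WithLp.toLp 2 u) ((Matrix.toEuclideanCLM (𝕜 := ℂ)
          (Pz α lam E (ee b) n z)) (WithLp.toLp 2 u))
          = (u ⬝ᵥ (Pz α lam E (ee b) n z).mulVec u) := by
        have hcu : ∀ i, (starRingEnd ℂ) (u i) = u i := by
          intro i
          have h2 : (starRingEnd ℂ) (2 : ℂ) = 2 := Complex.conj_ofReal 2
          fin_cases i <;> simp [hu, h2]
        simp only [PiLp.inner_apply, dotProduct, Fin.sum_univ_two, Matrix.ofLp_toEuclideanCLM,
          RCLike.inner_apply, hcu]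
        ring
      have h3 : ‖(WithLp.toLp 2 u : EuclideanSpace ℂ (Fin 2))‖ ^ 2 = s := by
        rw [EuclideanSpace.norm_sq_eq, Fin.sum_univ_two]
        simp [hu, hsd, div_pow]; norm_num
      rw [h2, mul_assoc, ← sq, h3] at h1
      rw [hfe, norm_mul]
      have : ‖(1 / s : ℂ)‖ = 1 / s := by
        rw [norm_div, norm_one, Complex.norm_real, Real.norm_of_nonneg hspos.le]
      rw [this, one_div, inv_mul_le_iff₀ hspos, mul_comm]; exact h1
    have h4 := logMahler_le hfne ((log_op_continuous hα lam E b n).intervalIntegrable 0 1)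
      (fun x => hfb (ee x))
    have h5 := norm_coeff_le_choose_mul_mahlerMeasure 0 f
    rw [hf0, Nat.choose_zero_right] at h5
    have h6 : Real.log (|μ| ^ n) ≤ f.logMahlerMeasure := by
      rw [logMahlerMeasure_eq_log_MahlerMeasure]
      apply Real.log_le_log (by positivity)
      simpa using h5
    rw [Real.log_pow] at h6
    have : (n : ℝ) * ((Real.log |μ| - Real.log (kap α)) + Real.log (kap α))
      = n * Real.log |μ| := by ring
    rw [this]
    exact h6.trans h4
  have := lyap_ge_of hα lam E b _ key
  have h7 := Real.log_lt_log hkp hμk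
  linarith

end LD

namespace LD
open MeasureTheory

lemma periodic_uc {φ : ℝ → ℝ} (hc : Continuous φ) (hp : Function.Periodic φ 1) {ε : ℝ} (hε : 0 < ε) :
    ∃ η > 0, ∀ x y, |x - y| < η → φ x ≤ φ y + ε := by
  have h := isCompact_Icc.uniformContinuousOn_of_continuous (s := Set.Icc (-1 : ℝ) 2) hc.continuousOn
  obtain ⟨η, hη, h2⟩ := Metric.uniformContinuousOn_iff.1 h ε hε
  refine ⟨min η 1, by positivity, fun x y hxy => ?_⟩
  have h3 := hxy.trans_le (min_le_left _ _)
  have h4 := abs_lt.1 (hxy.trans_le (min_le_right _ _))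
  have h5 := Int.floor_le x
  have h6 := Int.lt_floor_add_one x
  have := h2 (x - ⌊x⌋) ⟨by linarith, by linarith⟩ (y - ⌊x⌋) ⟨by linarith, by linarith⟩
    (by rw [Real.dist_eq, show x - (⌊x⌋ : ℝ) - (y - ⌊x⌋) = x - y by ring]; exact h3)
  have e1 : φ (x - ⌊x⌋) = φ x := by simpa using hp.sub_int_mul_eq (x := x) ⌊x⌋
  have e2 : φ (y - ⌊x⌋) = φ y := by simpa using hp.sub_int_mul_eq (x := y) ⌊x⌋
  rw [e1, e2, Real.dist_eq, abs_lt] at this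
  linarith [this.2]

lemma furman {F : ℕ → ℂ → ℝ} {b Λ : ℝ} (hb : Irrational b) (hF0 : ∀ n z, 0 ≤ F n z)
    (hFc : ∀ n, Continuous (F n)) (h0 : ∀ z, F 0 z ≤ 1) (hpos : ∀ n x, 0 < F n (ee x))
    (hsub : ∀ m n z, F (m + n) z ≤ F m (ee b ^ n * z) * F n z)
    {m : ℕ} (hm : 0 < m) (hintg : ∫ x in (0 : ℝ)..1, Real.log (F m (ee x)) ≤ m * Λ)
    {δ : ℝ} (hδ : 0 < δ) :
    ∃ τ > 0, ∃ n0 : ℕ, ∀ n ≥ n0, ∀ z : ℂ, 1 ≤ ‖z‖ → ‖z‖ ≤ Real.exp τ →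
      F n z ≤ Real.exp (n * (Λ + δ)) := by
  have hmR : (0 : ℝ) < m := by exact_mod_cast hm
  have hbm : Irrational ((m : ℝ) * b) := by
    exact_mod_cast hb.natCast_mul hm.ne'
  -- iterates
  have hiter : ∀ (l k : ℕ) (z : ℂ), F (k * l) z ≤ ∏ j ∈ Finset.range k, F l (ee b ^ (j * l) * z) := by
    intro l k z
    induction k with
    | zero => simpa using h0 z
    | succ k ih =>
      rw [Finset.prod_range_succ, show (k + 1) * l = l + k * l by ring]
      refine (hsub _ _ _).trans ((mul_le_mul_of_nonneg_left ih (hF0 _ _)).trans (le_of_eq ?_))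
      exact mul_comm _ _
  set φ : ℝ → ℝ := fun x => Real.log (F m (ee x)) with hφ
  have hφc : Continuous φ :=
    Continuous.log ((hFc m).comp ee_continuous) fun x => (hpos m x).ne'
  have hφp : Function.Periodic φ 1 := fun x => by simp only [hφ]; rw [ee_periodic x]
  obtain ⟨η, hη, hη2⟩ := periodic_uc hφc hφp (show 0 < m * (δ / 2) by positivity)
  obtain ⟨Q, hQ⟩ := exists_nat_gt (2 / η)
  obtain ⟨p, q, hQq, hq, hpq, happ⟩ := exists_approx hbm Q
  have hqR : (0 : ℝ) < q := by exact_mod_cast hq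
  have hη3 : 2 / (q : ℝ) < η := by
    rw [div_lt_iff₀ hqR]
    rw [div_lt_iff₀ hη] at hQ
    have : (Q : ℝ) ≤ q := by exact_mod_cast hQq
    nlinarith
  set n1 := q * m with hn1
  have hn1pos : 0 < n1 := Nat.mul_pos hq hm
  have hn1R : (0 : ℝ) < n1 := by exact_mod_cast hn1pos
  have hcirc : ∀ x, F n1 (ee x) ≤ Real.exp (n1 * (Λ + δ / 2)) := by
    intro x
    have h1 := equidist hq hpq happ hφp (g := fun y => φ y + m * (δ / 2))
      (fun y => by simp only; rw [hφp y])
      (fun a c => (Continuous.intervalIntegrable (by fun_prop) _ _))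
      (fun x y hxy => hη2 x y (lt_of_le_of_lt hxy hη3)) x
    rw [intervalIntegral.integral_add (hφc.intervalIntegrable _ _) (by simp),
      intervalIntegral.integral_const] at h1
    refine (hiter m q (ee x)).trans ?_
    have h2 : ∏ j ∈ Finset.range q, F m (ee b ^ (j * m) * ee x)
        = Real.exp (∑ j ∈ Finset.range q, φ (x + j * (m * b))) := by
      rw [Real.exp_sum]
      refine Finset.prod_congr rfl fun j _ => ?_
      rw [hφ]
      simp only
      rw [Real.exp_log (hpos _ _), ee_pow_mul]
      congr 2; push_cast; ring
    rw [h2]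
    apply Real.exp_le_exp.2
    refine h1.trans ?_
    rw [hn1]; push_cast
    have : (∫ x in (0 : ℝ)..1, φ x) + (1 - 0 : ℝ) • (↑m * (δ / 2)) ≤ m * (Λ + δ / 2) := by
      simp only [sub_zero, one_smul]; linarith [hintg]
    nlinarith
  -- extend to annulus
  have hopen : IsOpen {z : ℂ | F n1 z < Real.exp (n1 * (Λ + 3 * δ / 4))} :=
    isOpen_lt (hFc n1) continuous_const
  have hsubset : Metric.sphere (0 : ℂ) 1 ⊆ {z : ℂ | F n1 z < Real.exp (n1 * (Λ + 3 * δ / 4))} := by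
    intro z hz
    obtain ⟨x, rfl⟩ := exists_ee (z := z) (by simpa using hz)
    refine lt_of_le_of_lt (hcirc x) (Real.exp_lt_exp.2 ?_)
    apply mul_lt_mul_of_pos_left _ hn1R
    linarith
  obtain ⟨ε, hε, hthick⟩ := (isCompact_sphere (0 : ℂ) 1).exists_thickening_subset_open hopen hsubset
  set τ := Real.log (1 + ε / 2) with hτ
  have hτpos : 0 < τ := Real.log_pos (by linarith)
  have hexpτ : Real.exp τ = 1 + ε / 2 := Real.exp_log (by linarith)
  have hann : ∀ z : ℂ, 1 ≤ ‖z‖ → ‖z‖ ≤ Real.exp τ → F n1 z ≤ Real.exp (n1 * (Λ + 3 * δ / 4)) := by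
    intro z h1 h2
    apply le_of_lt
    apply hthick
    rw [Metric.mem_thickening_iff]
    have hz0 : (‖z‖ : ℂ) ≠ 0 := by
      have : ‖z‖ ≠ 0 := by linarith
      exact_mod_cast this
    have hzz : ‖z / ‖z‖‖ = 1 := by
      rw [norm_div, Complex.norm_real, norm_norm, div_self]; linarith
    refine ⟨z / ‖z‖, by simpa using hzz, ?_⟩
    rw [dist_eq_norm]
    have : z - z / ‖z‖ = (z / ‖z‖) * ((‖z‖ - 1 : ℝ) : ℂ) := by
      push_cast; field_simp
    rw [this, norm_mul, hzz, Complex.norm_real, Real.norm_of_nonneg (by linarith)]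
    rw [hexpτ] at h2; linarith
  -- bound for remainders
  have hK : ∃ K : ℝ, ∀ s < n1, ∀ z : ℂ, ‖z‖ ≤ Real.exp τ → F s z ≤ Real.exp K := by
    have : ∀ s : ℕ, ∃ K : ℝ, ∀ z : ℂ, ‖z‖ ≤ Real.exp τ → F s z ≤ K := by
      intro s
      obtain ⟨K, hK⟩ := (isCompact_closedBall (0 : ℂ) (Real.exp τ)).bddAbove_image
        (hFc s).continuousOn
      exact ⟨K, fun z hz => hK ⟨z, by simpa using hz, rfl⟩⟩
    choose K hK using this
    refine ⟨∑ s ∈ Finset.range n1, |K s|, fun s hs z hz => ?_⟩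
    calc F s z ≤ K s := hK s z hz
      _ ≤ |K s| := le_abs_self _
      _ ≤ ∑ s ∈ Finset.range n1, |K s| :=
        Finset.single_le_sum (f := fun s => |K s|) (fun i _ => abs_nonneg _)
          (Finset.mem_range.2 hs)
      _ ≤ _ := by linarith [Real.add_one_le_exp (∑ s ∈ Finset.range n1, |K s|)]
  obtain ⟨K, hK⟩ := hK
  obtain ⟨n0, hn0⟩ := exists_nat_gt ((K + n1 * |Λ + 3 * δ / 4|) / (δ / 4))
  refine ⟨τ, hτpos, n0, fun n hn z hz1 hz2 => ?_⟩
  have hmod := Nat.div_add_mod n n1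
  have hs := Nat.mod_lt n hn1pos
  set s := n % n1
  set k := n / n1
  have hrot : ∀ j : ℕ, ‖ee b ^ j * z‖ = ‖z‖ := fun j => by simp [norm_ee]
  have hk : F (k * n1) (ee b ^ s * z) ≤ Real.exp (k * (n1 * (Λ + 3 * δ / 4))) := by
    refine (hiter n1 k _).trans ?_
    rw [Real.exp_nat_mul]
    calc _ ≤ ∏ j ∈ Finset.range k, Real.exp (n1 * (Λ + 3 * δ / 4)) := by
          apply Finset.prod_le_prod (fun j _ => hF0 _ _)
          intro j _
          have : ‖ee b ^ (j * n1) * (ee b ^ s * z)‖ = ‖z‖ := by simp [norm_ee]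
          exact hann _ (by rw [this]; exact hz1) (by rw [this]; exact hz2)
      _ = _ := by simp
  have hnR : (n : ℝ) = k * n1 + s := by
    rw [← hmod]; push_cast; ring
  have hsR : (s : ℝ) ≤ n1 := by exact_mod_cast hs.le
  have hnn : (n0 : ℝ) ≤ n := by exact_mod_cast hn
  calc F n z = F (k * n1 + s) z := by rw [← hmod, mul_comm]
    _ ≤ F (k * n1) (ee b ^ s * z) * F s z := hsub _ _ _
    _ ≤ Real.exp (k * (n1 * (Λ + 3 * δ / 4))) * Real.exp K :=
        mul_le_mul hk (hK s hs z hz2) (hF0 _ _) (Real.exp_pos _).le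
    _ = Real.exp (k * (n1 * (Λ + 3 * δ / 4)) + K) := (Real.exp_add _ _).symm
    _ ≤ _ := by
      apply Real.exp_le_exp.2
      have h1 : (k : ℝ) * (n1 * (Λ + 3 * δ / 4)) = n * (Λ + 3 * δ / 4) - s * (Λ + 3 * δ / 4) := by
        rw [hnR]; ring
      have h2 : -(s * (Λ + 3 * δ / 4)) ≤ n1 * |Λ + 3 * δ / 4| := by
        calc -(s * (Λ + 3 * δ / 4)) ≤ s * |Λ + 3 * δ / 4| := by
              rw [← mul_neg]
              exact mul_le_mul_of_nonneg_left (neg_le_abs _) (by positivity)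
          _ ≤ _ := mul_le_mul_of_nonneg_right hsR (abs_nonneg _)
      rw [div_lt_iff₀ (by positivity)] at hn0
      rw [h1]
      nlinarith

/-- the uniform upper bounds used below -/
lemma upper {α : ℝ} (hα : α ∈ Set.Ioo (-1 : ℝ) 1) (lam E : ℝ) {b : ℝ} (hb : Irrational b) {δ : ℝ}
    (hδ : 0 < δ) : ∃ τ > 0, ∃ n0 : ℕ, ∀ n ≥ n0, ∀ z : ℂ, 1 ≤ ‖z‖ → ‖z‖ ≤ Real.exp τ →
      nm (Pz α lam E (ee b) n z) ≤
        Real.exp (n * (lyap (potV α lam) b E + Real.log (kap α) + δ)) ∧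
      ‖Dz α (ee b) n z‖ ≤ Real.exp (n * (Real.log (kap α) + δ)) := by
  obtain ⟨m, hm, hI⟩ := exists_In_le hα lam E b (show 0 < δ / 2 by positivity)
  obtain ⟨τ1, hτ1, n1, h1⟩ := furman (F := fun n z => opNorm2 (Pz α lam E (ee b) n z)) hb
    (fun n z => opNorm2_nonneg _) (fun n => opNorm2_continuous.comp (Pz_continuous_z _ _ _ _ _))
    (fun z => by simp [Pz_zero, opNorm2_one])
    (fun n x => opNorm2_pos (det_Pz_ne hα _ _ (norm_ee b) (norm_ee x) n))
    (fun m n z => by rw [Pz_add]; exact opNorm2_mul_le _ _) hm hI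
    (show 0 < δ / 2 by positivity)
  obtain ⟨τ2, hτ2, n2, h2⟩ := furman (F := fun n z => ‖Dz α (ee b) n z‖) (m := 1)
    (Λ := Real.log (kap α)) hb
    (fun n z => norm_nonneg _)
    (fun n => ((Dz_continuous α n).comp (f := fun z => (ee b, z)) (by fun_prop)).norm)
    (fun z => by simp [Dz_zero])
    (fun n x => norm_pos_iff.2 (Dz_ne hα (norm_ee b) (norm_ee x) n))
    (fun m n z => by rw [Dz_add, norm_mul]) one_pos (by
      have := integral_log_Dz hα b 1
      rw [this]) hδ
  refine ⟨min τ1 τ2, by positivity, max n1 n2, fun n hn z hz1 hz2 => ⟨?_, ?_⟩⟩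
  · refine (nm_le_opNorm2 _).trans ((h1 n (le_of_max_le_left hn) z hz1
      (hz2.trans (Real.exp_le_exp.2 (min_le_left _ _)))).trans (le_of_eq ?_))
    congr 2; ring
  · exact h2 n (le_of_max_le_right hn) z hz1
      (hz2.trans (Real.exp_le_exp.2 (min_le_right _ _)))

end LD

namespace LD
open MeasureTheory Polynomial

lemma lint_log_eval (p : ℂ[X]) {c : ℝ} (hc : ∀ x, Real.log ‖p.eval (ee x)‖ ≤ c) :
    ∫⁻ x in Set.Ioc (0 : ℝ) 1, ENNReal.ofReal (c - Real.log ‖p.eval (ee x)‖)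
      = ENNReal.ofReal (c - p.logMahlerMeasure) := by
  have hi := log_eval_integrable p
  have hi2 : Integrable (fun x => c - Real.log ‖p.eval (ee x)‖) (volume.restrict (Set.Ioc 0 1)) := by
    have := (intervalIntegrable_iff_integrableOn_Ioc_of_le (zero_le_one' ℝ)).1 hi
    exact (integrable_const c).sub this
  rw [← ofReal_integral_eq_lintegral_ofReal hi2 (Filter.Eventually.of_forall fun x => by
    simpa using hc x)]
  congr 1
  rw [logMahler_eq, integral_sub (integrable_const c)
    ((intervalIntegrable_iff_integrableOn_Ioc_of_le (zero_le_one' ℝ)).1 hi),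
    intervalIntegral.integral_of_le zero_le_one]
  simp

lemma cubic_lower (a : Fin 4 → ℂ) (i : Fin 4) (hi : a i ≠ 0) :
    Real.log ‖a i‖ - Real.log 3 ≤ (∑ k : Fin 4, C (a k) * X ^ (k : ℕ)).logMahlerMeasure := by
  set p : ℂ[X] := ∑ k : Fin 4, C (a k) * X ^ (k : ℕ) with hp
  have hco : p.coeff (i : ℕ) = a i := by
    rw [hp, finsetSum_coeff]
    simp only [coeff_C_mul, coeff_X_pow]
    rw [Finset.sum_eq_single i]
    · simp
    · intro b _ hb
      have : (i : ℕ) ≠ b := fun h => hb (Fin.ext h.symm)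
      simp [this]
    · simp
  have hdeg : p.natDegree ≤ 3 := by
    rw [hp]
    refine natDegree_sum_le_of_forall_le _ _ fun k _ => ?_
    exact (natDegree_C_mul_X_pow_le _ _).trans (by omega)
  have hp0 : p ≠ 0 := fun h => hi (by rw [← hco, h]; simp)
  have h1 := p.norm_coeff_le_choose_mul_mahlerMeasure i
  have h2 : (p.natDegree.choose i : ℝ) ≤ 3 := by
    have : ∀ d ≤ 3, ∀ i < 4, d.choose i ≤ 3 := by decide
    exact_mod_cast this _ hdeg _ i.2
  rw [hco] at h1
  have hM := mahlerMeasure_pos_of_ne_zero hp0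
  have h3 : ‖a i‖ ≤ 3 * p.mahlerMeasure := h1.trans (by gcongr)
  have := Real.log_le_log (norm_pos_iff.2 hi) h3
  rw [Real.log_mul (by norm_num) hM.ne'] at this
  rw [logMahlerMeasure_eq_log_MahlerMeasure]; linarith

lemma random_poly (p : Fin 4 → ℂ[X]) (g : ℝ → ℝ) (hgc : Continuous g) (c : ℝ) (hc : ∀ x, g x ≤ c)
    (hle : ∀ i x, ‖(p i).eval (ee x)‖ ≤ Real.exp (g x))
    (hex : ∀ x, ∃ i, ‖(p i).eval (ee x)‖ = Real.exp (g x)) :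
    ∃ ζ : ℂ, ‖ζ‖ = 1 ∧ (∑ k : Fin 4, C (ζ ^ (k : ℕ)) * p k) ≠ 0 ∧
      (∫ x in (0 : ℝ)..1, g x) - Real.log 3 ≤ (∑ k : Fin 4, C (ζ ^ (k : ℕ)) * p k).logMahlerMeasure := by
  set f : ℂ → ℂ[X] := fun ζ => ∑ k : Fin 4, C (ζ ^ (k : ℕ)) * p k with hf
  set h : ℝ → ℂ[X] := fun x => ∑ k : Fin 4, C ((p k).eval (ee x)) * X ^ (k : ℕ) with hh
  have hfh : ∀ x y, (f (ee y)).eval (ee x) = (h x).eval (ee y) := by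
    intro x y
    simp only [hf, hh, eval_finsetSum, eval_mul, eval_C, eval_pow, eval_X]
    exact Finset.sum_congr rfl fun k _ => mul_comm _ _
  have hlow : ∀ x, g x - Real.log 3 ≤ (h x).logMahlerMeasure := by
    intro x
    obtain ⟨i, hi⟩ := hex x
    have := cubic_lower (fun k => (p k).eval (ee x)) i
      (by rw [← norm_pos_iff, hi]; exact Real.exp_pos _)
    rwa [hi, Real.log_exp] at this
  set c' := |c| + Real.log 4 with hc'
  have hup : ∀ x y, Real.log ‖(h x).eval (ee y)‖ ≤ c' := by
    intro x y
    have h1 : ‖(h x).eval (ee y)‖ ≤ 4 * Real.exp |c| := by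
      simp only [hh, eval_finsetSum, eval_mul, eval_C, eval_pow, eval_X]
      refine (norm_sum_le _ _).trans ?_
      calc _ ≤ ∑ k : Fin 4, Real.exp |c| := by
            refine Finset.sum_le_sum fun k _ => ?_
            rw [norm_mul, norm_pow, norm_ee, one_pow, mul_one]
            exact (hle k x).trans (Real.exp_le_exp.2 ((hc x).trans (le_abs_self c)))
        _ = _ := by simp
    rcases (norm_nonneg ((h x).eval (ee y))).eq_or_lt with h0 | h0
    · rw [← h0, Real.log_zero]
      have := Real.log_pos (show (1 : ℝ) < 4 by norm_num)
      positivity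
    · refine (Real.log_le_log h0 h1).trans ?_
      rw [Real.log_mul (by norm_num) (Real.exp_pos _).ne', Real.log_exp]; linarith
  have hmeas : Measurable (fun q : ℝ × ℝ => ENNReal.ofReal (c' - Real.log ‖(h q.1).eval (ee q.2)‖)) := by
    have : Continuous (fun q : ℝ × ℝ => (h q.1).eval (ee q.2)) := by
      simp only [hh, eval_finsetSum, eval_mul, eval_C, eval_pow, eval_X]
      refine continuous_finsetSum _ fun k _ => Continuous.mul ?_ ?_
      · exact (p k).continuous.comp (ee_continuous.comp continuous_fst)
      · exact (ee_continuous.comp continuous_snd).pow _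
    exact ENNReal.measurable_ofReal.comp (measurable_const.sub (this.norm.measurable.log))
  have hprob : IsProbabilityMeasure (volume.restrict (Set.Ioc (0 : ℝ) 1)) := ⟨by simp⟩
  set F : ℝ → ENNReal := fun y => ∫⁻ x in Set.Ioc (0 : ℝ) 1,
    ENNReal.ofReal (c' - Real.log ‖(h x).eval (ee y)‖) with hF
  have hFm : Measurable F := by
    exact Measurable.lintegral_prod_left' (f := fun q : ℝ × ℝ =>
      ENNReal.ofReal (c' - Real.log ‖(h q.1).eval (ee q.2)‖)) hmeas
  have hFint : ∫⁻ y in Set.Ioc (0 : ℝ) 1, F y ≤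
      ENNReal.ofReal (c' - ((∫ x in (0 : ℝ)..1, g x) - Real.log 3)) := by
    rw [hF, lintegral_lintegral_swap (f := fun y x => ENNReal.ofReal (c' - Real.log ‖(h x).eval (ee y)‖))
      (hmeas.comp measurable_swap).aemeasurable]
    simp_rw [lint_log_eval _ (hup _)]
    have hgi : Integrable (fun x => c' - (g x - Real.log 3)) (volume.restrict (Set.Ioc (0 : ℝ) 1)) := by
      exact (Continuous.integrableOn_Icc (by fun_prop)).mono_set Set.Ioc_subset_Icc_self
    calc _ ≤ ∫⁻ x in Set.Ioc (0 : ℝ) 1, ENNReal.ofReal (c' - (g x - Real.log 3)) := by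
          refine lintegral_mono fun x => ENNReal.ofReal_le_ofReal ?_
          linarith [hlow x]
      _ = ENNReal.ofReal (∫ x in Set.Ioc (0 : ℝ) 1, (c' - (g x - Real.log 3))) := by
          rw [ofReal_integral_eq_lintegral_ofReal hgi]
          refine Filter.Eventually.of_forall fun x => ?_
          have h3 := Real.log_pos (show (1 : ℝ) < 3 by norm_num)
          have h4 := Real.log_pos (show (1 : ℝ) < 4 by norm_num)
          have := hc x
          have := le_abs_self c
          simp only [Pi.zero_apply, hc']; linarith
      _ ≤ _ := by
          apply ENNReal.ofReal_le_ofReal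
          rw [← intervalIntegral.integral_of_le zero_le_one,
            intervalIntegral.integral_sub (by simp) (Continuous.intervalIntegrable (by fun_prop) _ _),
            intervalIntegral.integral_sub (hgc.intervalIntegrable _ _) (by simp)]
          simp
  have hh0 : h 0 ≠ 0 := by
    intro h0
    obtain ⟨i, hi⟩ := hex 0
    have h1 : (h 0).coeff (i : ℕ) = (p i).eval (ee 0) := by
      rw [hh]
      simp only [finsetSum_coeff, coeff_C_mul, coeff_X_pow]
      rw [Finset.sum_eq_single i]
      · simp
      · intro b _ hb
        have : (i : ℕ) ≠ b := fun h => hb (Fin.ext h.symm)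
        simp [this]
      · simp
    rw [h0] at h1
    have h2 := Real.exp_pos (g 0)
    rw [← hi, ← h1] at h2
    simp at h2
  have hnull := ae_restrict_of_ae (s := Set.Ioc (0 : ℝ) 1) (ae_eval_ee_ne hh0)
  rw [ae_iff] at hnull
  obtain ⟨y, hy, hyF⟩ := exists_notMem_null_le_lintegral hFm.aemeasurable hnull
  have hy' : (f (ee y)).eval (ee 0) ≠ 0 := by
    rw [hfh]; simpa using hy
  refine ⟨ee y, norm_ee y, fun h0 => hy' ?_, ?_⟩
  · simp only [hf]; rw [h0]; simp
  · have h1 := hyF.trans hFint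
    have h2 : F y = ENNReal.ofReal (c' - (f (ee y)).logMahlerMeasure) := by
      rw [← lint_log_eval (f (ee y)) (c := c') (fun x => by rw [hfh]; exact hup x y)]
      simp only [hF, hfh]
    rw [h2] at h1
    have h3 : 0 ≤ c' - ((∫ x in (0 : ℝ)..1, g x) - Real.log 3) := by
      have : ∫ x in (0 : ℝ)..1, g x ≤ ∫ x in (0 : ℝ)..1, c :=
        intervalIntegral.integral_mono_on zero_le_one (hgc.intervalIntegrable _ _) (by simp)
          (fun x _ => hc x)
      simp at this
      have h3 := Real.log_pos (show (1 : ℝ) < 3 by norm_num)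
      have h4 := Real.log_pos (show (1 : ℝ) < 4 by norm_num)
      have := le_abs_self c
      simp only [hc']; linarith
    have := (ENNReal.ofReal_le_ofReal_iff h3).1 h1
    linarith

lemma exists_f {α : ℝ} (hα : α ∈ Set.Ioo (-1 : ℝ) 1) (lam E b : ℝ) {N : ℕ} (hN : 0 < N) :
    ∃ f : ℂ[X], f ≠ 0 ∧ f.natDegree ≤ 2 * N ∧
      (∀ z, ‖f.eval z‖ ≤ 4 * nm (Pz α lam E (ee b) N z)) ∧
      N * (lyap (potV α lam) b E + Real.log (kap α)) - Real.log 6 ≤ f.logMahlerMeasure := by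
  have hdet : ∀ x, (Pz α lam E (ee b) N (ee x)).det ≠ 0 := fun x =>
    det_Pz_ne hα _ _ (norm_ee b) (norm_ee x) N
  have hlc := log_nm_continuous hα lam E b N
  have hexp : ∀ x, Real.exp (Real.log (nm (Pz α lam E (ee b) N (ee x)))) =
    nm (Pz α lam E (ee b) N (ee x)) := fun x => Real.exp_log (nm_pos (hdet x))
  obtain ⟨K, hK⟩ := (isCompact_Icc (a := (0 : ℝ)) (b := 1)).bddAbove_image hlc.continuousOn
  let p : Fin 4 → ℂ[X] := ![PP α lam E (ee b) N 0 0, PP α lam E (ee b) N 0 1,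
    PP α lam E (ee b) N 1 0, PP α lam E (ee b) N 1 1]
  have hle : ∀ i z, ‖(p i).eval z‖ ≤ nm (Pz α lam E (ee b) N z) := by
    intro i z
    fin_cases i <;> simp [p, eval_PP, le_nm]
  obtain ⟨ζ, hζ, hf0, hf⟩ := random_poly p (fun x => Real.log (nm (Pz α lam E (ee b) N (ee x)))) hlc K
    (fun x => by
      have h5 := Int.fract_nonneg x
      have h6 := (Int.fract_lt_one x).le
      have : ee (Int.fract x) = ee x := by
        have := ee_periodic.sub_int_mul_eq (x := x) ⌊x⌋
        rw [mul_one] at this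
        exact this
      rw [← this]
      exact hK ⟨Int.fract x, ⟨h5, h6⟩, rfl⟩)
    (fun i x => by rw [hexp]; exact hle i _)
    (fun x => by
      obtain ⟨i, j, hij⟩ := exists_nm (Pz α lam E (ee b) N (ee x))
      simp only [hexp]
      fin_cases i <;> fin_cases j
      · exact ⟨0, by simp [p, eval_PP] at *; exact hij⟩
      · exact ⟨1, by simp [p, eval_PP] at *; exact hij⟩
      · exact ⟨2, by simp [p, eval_PP] at *; exact hij⟩
      · exact ⟨3, by simp [p, eval_PP] at *; exact hij⟩)
  refine ⟨_, hf0, ?_, ?_, ?_⟩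
  · refine natDegree_sum_le_of_forall_le _ _ fun k _ => ?_
    refine (natDegree_C_mul_le _ _).trans ?_
    fin_cases k <;> simp [p, natDegree_PP]
  · intro z
    rw [eval_finsetSum]
    refine (norm_sum_le _ _).trans ?_
    calc _ ≤ ∑ k : Fin 4, nm (Pz α lam E (ee b) N z) := by
          refine Finset.sum_le_sum fun k _ => ?_
          rw [eval_mul, eval_C, norm_mul, norm_pow, hζ, one_pow, one_mul]
          exact hle k z
      _ = _ := by simp
  · refine le_trans ?_ hf
    have h1 := In_ge hα lam E b hN
    have h2 : In α lam E b N ≤ (∫ x in (0 : ℝ)..1, Real.log (nm (Pz α lam E (ee b) N (ee x)))) + Real.log 2 := by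
      have : In α lam E b N ≤ ∫ x in (0 : ℝ)..1, (Real.log (nm (Pz α lam E (ee b) N (ee x))) + Real.log 2) := by
        unfold In
        refine intervalIntegral.integral_mono_on zero_le_one
          ((log_op_continuous hα lam E b N).intervalIntegrable _ _)
          (Continuous.intervalIntegrable (by fun_prop) _ _) fun x _ => ?_
        have := Real.log_le_log (opNorm2_pos (hdet x)) (opNorm2_le_nm (Pz α lam E (ee b) N (ee x)))
        rw [Real.log_mul (by norm_num) (nm_pos (hdet x)).ne'] at this
        linarith
      rw [intervalIntegral.integral_add (hlc.intervalIntegrable _ _) (by simp)] at this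
      simpa using this
    have h3 : Real.log 6 = Real.log 2 + Real.log 3 := by
      rw [← Real.log_mul (by norm_num) (by norm_num)]; norm_num
    linarith

end LD

namespace LD
open MeasureTheory Polynomial

lemma nm_adj_le (A : Matrix (Fin 2) (Fin 2) ℂ) : nm A.adjugate ≤ nm A := by
  refine nm_le (fun i j => ?_)
  rw [Matrix.adjugate_fin_two]
  fin_cases i <;> fin_cases j <;> simp [le_nm]

lemma rot_bound {α : ℝ} (hα : α ∈ Set.Ioo (-1 : ℝ) 1) (lam E : ℝ) :
    ∃ τ > 0, ∃ C1 ≥ (0 : ℝ), ∀ (w : ℂ), ‖w‖ = 1 → ∀ n : ℕ, ∀ z : ℂ, 1 ≤ ‖z‖ → ‖z‖ ≤ Real.exp τ →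
      nm (Pz α lam E w n (w * z)) ≤ Real.exp C1 * nm (Pz α lam E w n z) := by
  have hopen : IsOpen {z : ℂ | Cz α z ≠ 0} := isOpen_ne_fun (Cz_continuous α) continuous_const
  have hsubset : Metric.sphere (0 : ℂ) 1 ⊆ {z : ℂ | Cz α z ≠ 0} := fun z hz =>
    Cz_ne hα (by simpa using hz)
  obtain ⟨ε, hε, hthick⟩ := (isCompact_sphere (0 : ℂ) 1).exists_cthickening_subset_open hopen hsubset
  set τ := Real.log (1 + ε) with hτ
  have hτpos : 0 < τ := Real.log_pos (by linarith)
  have hexpτ : Real.exp τ = 1 + ε := Real.exp_log (by linarith)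
  set A : Set ℂ := {z : ℂ | 1 ≤ ‖z‖ ∧ ‖z‖ ≤ Real.exp τ} with hA
  have hAc : IsCompact A := by
    refine (isCompact_closedBall (0 : ℂ) (Real.exp τ)).of_isClosed_subset ?_ ?_
    · exact (isClosed_le continuous_const continuous_norm).inter
        (isClosed_le continuous_norm continuous_const)
    · intro z hz; simpa using hz.2
  have hAne : ∀ z ∈ A, Cz α z ≠ 0 := by
    intro z hz
    apply hthick
    have hz1 : 1 ≤ ‖z‖ := hz.1
    have hz2 : ‖z‖ ≤ Real.exp τ := hz.2
    have hz0 : (‖z‖ : ℂ) ≠ 0 := by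
      have : ‖z‖ ≠ 0 := by linarith
      exact_mod_cast this
    have hzz : ‖z / ‖z‖‖ = 1 := by
      rw [norm_div, Complex.norm_real, norm_norm, div_self]; linarith
    refine Metric.mem_cthickening_of_dist_le z (z / ‖z‖) _ _ (by simpa using hzz) ?_
    rw [dist_eq_norm]
    have : z - z / ‖z‖ = (z / ‖z‖) * ((‖z‖ - 1 : ℝ) : ℂ) := by
      push_cast; field_simp
    rw [this, norm_mul, hzz, Complex.norm_real, Real.norm_of_nonneg (by linarith)]
    rw [hexpτ] at hz2; linarith
  have hMc : Continuous fun z => nm (Mz α lam E z) :=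
    nm_continuous.comp ((Mz_continuous α lam).comp (f := fun z => (E, z)) (by fun_prop))
  obtain ⟨K, hK⟩ := hAc.bddAbove_image hMc.continuousOn
  have hcc : ContinuousOn (fun z => (‖Cz α z‖)⁻¹) A :=
    (Cz_continuous α).norm.continuousOn.inv₀ fun z hz => by simpa using hAne z hz
  obtain ⟨c, hc⟩ := hAc.bddAbove_image hcc
  refine ⟨τ, hτpos, 4 * |K| ^ 2 * |c| ^ 2, by positivity, fun w hw n z h1 h2 => ?_⟩
  have hzA : z ∈ A := ⟨h1, h2⟩
  have hwzA : w ^ n * z ∈ A := by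
    have : ‖w ^ n * z‖ = ‖z‖ := by simp [hw]
    exact ⟨by rw [this]; exact h1, by rw [this]; exact h2⟩
  have hk1 : nm (Mz α lam E z) ≤ |K| := (hK ⟨z, hzA, rfl⟩).trans (le_abs_self _)
  have hk2 : nm (Mz α lam E (w ^ n * z)) ≤ |K| := (hK ⟨_, hwzA, rfl⟩).trans (le_abs_self _)
  have hc1 : (‖Cz α z‖)⁻¹ ≤ |c| := (hc ⟨z, hzA, rfl⟩).trans (le_abs_self _)
  have hne := hAne z hzA
  have hkey : (Cz α z ^ 2) • Pz α lam E w n (w * z) =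
      Mz α lam E (w ^ n * z) * (Pz α lam E w n z * (Mz α lam E z).adjugate) := by
    rw [← mul_assoc, ← Pz_rot, mul_assoc, Matrix.mul_adjugate, det_Mz]
    simp
  have hkey2 := congrArg nm hkey
  rw [nm_smul] at hkey2
  have hP := nm_nonneg (Pz α lam E w n z)
  have h3 : nm (Mz α lam E (w ^ n * z) * (Pz α lam E w n z * (Mz α lam E z).adjugate))
      ≤ 2 * (|K| * (2 * (nm (Pz α lam E w n z) * |K|))) := by
    refine (nm_mul_le _ _).trans ?_
    gcongr
    · exact nm_nonneg _
    · refine (nm_mul_le _ _).trans ?_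
      gcongr
      exact (nm_adj_le _).trans hk1
  rw [← hkey2, norm_pow] at h3
  have hcpos : 0 < ‖Cz α z‖ := norm_pos_iff.2 hne
  have h4 : nm (Pz α lam E w n (w * z)) ≤ (4 * |K| ^ 2 * |c| ^ 2) * nm (Pz α lam E w n z) := by
    have h5 : nm (Pz α lam E w n (w * z)) = (‖Cz α z‖⁻¹) ^ 2 * (‖Cz α z‖ ^ 2 * nm (Pz α lam E w n (w * z))) := by
      field_simp
    rw [h5]
    calc _ ≤ (‖Cz α z‖⁻¹) ^ 2 * (2 * (|K| * (2 * (nm (Pz α lam E w n z) * |K|)))) := by gcongr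
      _ ≤ |c| ^ 2 * (2 * (|K| * (2 * (nm (Pz α lam E w n z) * |K|)))) := by gcongr
      _ = _ := by ring
  refine h4.trans (mul_le_mul_of_nonneg_right ?_ hP)
  linarith [Real.add_one_le_exp (4 * |K| ^ 2 * |c| ^ 2)]

end LD

namespace LD
open MeasureTheory Polynomial

lemma ee_lip (x y : ℝ) : ‖ee x - ee y‖ ≤ 2 * Real.pi * |x - y| := by
  have h1 : ee x = ee y * ee (x - y) := by rw [← ee_add]; congr 1; ring
  have h2 : ee x - ee y = ee y * (ee (x - y) - 1) := by rw [h1]; ring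
  rw [h2, norm_mul, norm_ee, one_mul]
  have := Real.norm_exp_I_mul_ofReal_sub_one_le (x := 2 * Real.pi * (x - y))
  rw [mul_comm Complex.I] at this
  refine this.trans ?_
  rw [Real.norm_eq_abs, abs_mul, abs_of_pos (by positivity)]

lemma mahler_scale {f : ℂ[X]} (hf : f ≠ 0) {r : ℝ} (hr : 1 ≤ r) :
    f.logMahlerMeasure ≤ (f.comp (C (r : ℂ) * X)).logMahlerMeasure := by
  have hr0 : (r : ℂ) ≠ 0 := by
    have : r ≠ 0 := by linarith
    exact_mod_cast this
  rw [logMahlerMeasure_eq_log_MahlerMeasure, logMahlerMeasure_eq_log_MahlerMeasure]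
  apply Real.log_le_log (mahlerMeasure_pos_of_ne_zero hf)
  have hsplit := (IsAlgClosed.splits f).eq_prod_roots
  have h1 : f.comp (C (r : ℂ) * X) = C f.leadingCoeff * (f.roots.map (fun w => C (r : ℂ) * X + C (-w))).prod := by
    conv_lhs => rw [hsplit]
    rw [mul_comp, C_comp, multiset_prod_comp, Multiset.map_map]
    congr 3
    ext w : 1
    simp [sub_eq_add_neg]
  rw [h1, mahlerMeasure_mul, mahlerMeasure_const, prod_mahlerMeasure_eq_mahlerMeasure_prod,
    mahlerMeasure_eq_leadingCoeff_mul_prod_roots, Multiset.map_map]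
  refine mul_le_mul_of_nonneg_left ?_ (norm_nonneg _)
  apply Multiset.prod_map_le_prod_map₀
  · intro w _; positivity
  · intro w _
    simp only [Function.comp]
    rw [mahlerMeasure_C_mul_X_add_C hr0, norm_neg, Complex.norm_real, Real.norm_of_nonneg (by linarith)]
    exact max_le_max_right _ hr

lemma prod_bound (s : Multiset ℂ) (z z' : ℂ) (l : ℂ → ℝ)
    (h : ∀ w ∈ s, ‖z' - w‖ ≤ ‖z - w‖ * Real.exp (l w)) :
    (s.map fun w => ‖z' - w‖).prod ≤ (s.map fun w => ‖z - w‖).prod * Real.exp (s.map l).sum := by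
  induction s using Multiset.induction_on with
  | empty => simp
  | cons a s ih =>
    simp only [Multiset.map_cons, Multiset.prod_cons, Multiset.sum_cons]
    have h1 := ih fun w hw => h w (Multiset.mem_cons_of_mem hw)
    have h2 := h a (Multiset.mem_cons_self a s)
    have h3 : 0 ≤ (s.map fun w => ‖z' - w‖).prod :=
      Multiset.prod_nonneg (by simp only [Multiset.mem_map]; rintro _ ⟨w, _, rfl⟩; positivity)
    rw [Real.exp_add]
    calc _ ≤ (‖z - a‖ * Real.exp (l a)) * ((s.map fun w => ‖z - w‖).prod * Real.exp (s.map l).sum) :=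
          mul_le_mul h2 h1 h3 (by positivity)
      _ = _ := by ring

lemma norm_eval_roots (f : ℂ[X]) (z : ℂ) :
    ‖f.eval z‖ = ‖f.leadingCoeff‖ * (f.roots.map fun w => ‖z - w‖).prod := by
  rw [(IsAlgClosed.splits f).eval_eq_prod_roots, norm_mul]
  congr 1
  have h := map_multiset_prod (normHom : ℂ →*₀ ℝ) (f.roots.map (fun a => z - a))
  simp only [normHom, MonoidWithZeroHom.coe_mk, ZeroHom.coe_mk, Multiset.map_map] at h
  exact h

lemma dist_lower {t : ℝ} (ht : 0 ≤ t) (z w : ℂ) (hz : ‖z‖ = Real.exp t) (hw : t ≠ Real.log ‖w‖) :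
    1 / ‖z - w‖ ≤ 1 + 1 / |t - Real.log ‖w‖| := by
  set d := |t - Real.log ‖w‖| with hd
  have hdpos : 0 < d := abs_pos.2 (sub_ne_zero.2 hw)
  have het : 1 ≤ Real.exp t := Real.one_le_exp ht
  have hkey : d / (1 + d) ≤ ‖z - w‖ := by
    have hd1 : d / (1 + d) ≤ 1 := by rw [div_le_one (by positivity)]; linarith
    rcases eq_or_ne w 0 with rfl | hw0
    · rw [sub_zero, hz]; linarith
    have hwp := norm_pos_iff.2 hw0
    set a := Real.log ‖w‖ with ha
    have hwa : ‖w‖ = Real.exp a := (Real.exp_log hwp).symm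
    have h1 : |‖z‖ - ‖w‖| ≤ ‖z - w‖ := abs_norm_sub_norm_le z w
    refine le_trans ?_ h1
    rw [hz, hwa]
    rcases lt_or_gt_of_ne hw with h | h
    · have hda : d = a - t := by rw [hd, abs_of_neg (by linarith)]; ring
      have h2 : Real.exp a = Real.exp t * Real.exp d := by rw [← Real.exp_add, hda]; congr 1; ring
      have h3 := Real.add_one_le_exp d
      rw [abs_sub_comm]
      refine le_trans ?_ (le_abs_self _)
      have h4 : d / (1 + d) ≤ d := by rw [div_le_iff₀ (by positivity)]; nlinarith
      rw [h2]; nlinarith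
    · have hda : d = t - a := by rw [hd, abs_of_pos (by linarith)]
      have h2 : Real.exp t = Real.exp a * Real.exp d := by rw [← Real.exp_add, hda]; congr 1; ring
      have h3 := Real.add_one_le_exp d
      refine le_trans ?_ (le_abs_self _)
      rw [div_le_iff₀ (by positivity)]
      have h5 : Real.exp a * (1 + d) ≤ Real.exp t := by
        rw [h2]; exact mul_le_mul_of_nonneg_left (by linarith) (Real.exp_pos _).le
      nlinarith
  calc 1 / ‖z - w‖ ≤ 1 / (d / (1 + d)) := one_div_le_one_div_of_le (by positivity) hkey
    _ = _ := by field_simp; ring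

lemma poly_equidist {f : ℂ[X]} (hf : f ≠ 0) {t : ℝ} (ht0 : 0 ≤ t) (ht1 : t ≤ 1)
    (hroots : ∀ w ∈ f.roots, t ≠ Real.log ‖w‖) {b : ℝ} {p : ℤ} {q : ℕ} (hq : 0 < q)
    (hpq : IsCoprime p (q : ℤ)) (hb : |b - p / q| ≤ 1 / (q : ℝ) ^ 2) (x : ℝ) :
    q * f.logMahlerMeasure - 40 * (f.roots.map fun w => 1 + 1 / |t - Real.log ‖w‖|).sum ≤
      ∑ j ∈ Finset.range q, Real.log ‖f.eval (Real.exp t * ee (x + j * b))‖ := by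
  set S := (f.roots.map fun w => 1 + 1 / |t - Real.log ‖w‖|).sum with hS
  have hqR : (0 : ℝ) < q := by exact_mod_cast hq
  have hnz : ∀ x, ‖(Real.exp t : ℂ) * ee x‖ = Real.exp t := fun x => by
    rw [norm_mul, norm_ee, mul_one, Complex.norm_real, Real.norm_of_nonneg (Real.exp_pos _).le]
  have hne : ∀ x, f.eval ((Real.exp t : ℂ) * ee x) ≠ 0 := by
    intro x h0
    have := hroots _ ((mem_roots hf).2 h0)
    rw [hnz, Real.log_exp] at this
    exact this rfl
  have hpos : ∀ x, 0 < ‖f.eval ((Real.exp t : ℂ) * ee x)‖ := fun x => norm_pos_iff.2 (hne x)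
  set F : ℝ → ℝ := fun x => Real.log ‖f.eval ((Real.exp t : ℂ) * ee x)‖ with hF
  have hFc : Continuous F := by
    refine Continuous.log ?_ fun x => (hpos x).ne'
    exact (f.continuous.comp (continuous_const.mul ee_continuous)).norm
  have hFp : Function.Periodic F 1 := fun x => by simp only [hF]; rw [ee_periodic x]
  have hintg : f.logMahlerMeasure ≤ ∫ x in (0 : ℝ)..1, F x := by
    refine (mahler_scale hf (Real.one_le_exp ht0)).trans (le_of_eq ?_)
    rw [logMahler_eq]
    simp [hF]
  have hlip : ∀ x y, |x - y| ≤ 2 / (q : ℝ) → F y ≤ F x + 40 / q * S := by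
    intro x y hxy
    have hzz : ‖(Real.exp t : ℂ) * ee x - (Real.exp t : ℂ) * ee y‖ ≤ 40 / q := by
      rw [← mul_sub, norm_mul, Complex.norm_real, Real.norm_of_nonneg (Real.exp_pos _).le]
      have h1 : Real.exp t ≤ 3 := (Real.exp_le_exp.2 ht1).trans (by linarith [Real.exp_one_lt_d9])
      have h2 := ee_lip x y
      have h3 := Real.pi_lt_d2
      calc _ ≤ 3 * (2 * 3.15 * (2 / (q : ℝ))) := by
            refine mul_le_mul h1 (h2.trans ?_) (norm_nonneg _) (by norm_num)
            gcongr
        _ ≤ _ := by rw [← sub_nonneg]; ring_nf; positivity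
    have h1 := prod_bound f.roots ((Real.exp t : ℂ) * ee x) ((Real.exp t : ℂ) * ee y)
      (fun w => 40 / q * (1 + 1 / |t - Real.log ‖w‖|)) (fun w hw => by
        set z := (Real.exp t : ℂ) * ee x
        set z' := (Real.exp t : ℂ) * ee y
        have h2 := dist_lower ht0 z w (hnz x) (hroots w hw)
        have h3 : 0 < ‖z - w‖ := by
          rw [norm_pos_iff, sub_ne_zero]
          rintro rfl
          have := hroots _ hw
          rw [hnz, Real.log_exp] at this
          exact this rfl
        have h4 : ‖z' - w‖ ≤ ‖z - w‖ + ‖z - z'‖ := by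
          have : z' - w = (z - w) - (z - z') := by ring
          rw [this]; exact norm_sub_le _ _
        have h5 : ‖z - w‖ + ‖z - z'‖ = ‖z - w‖ * (‖z - z'‖ * (1 / ‖z - w‖) + 1) := by
          field_simp; ring
        rw [h5] at h4
        refine h4.trans (mul_le_mul_of_nonneg_left ?_ h3.le)
        refine (Real.add_one_le_exp _).trans (Real.exp_le_exp.2 ?_)
        exact mul_le_mul hzz h2 (by positivity) (by positivity))
    rw [Multiset.sum_map_mul_left] at h1
    have h2 := norm_eval_roots f ((Real.exp t : ℂ) * ee x)
    have h3 := norm_eval_roots f ((Real.exp t : ℂ) * ee y)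
    have h4 : ‖f.eval ((Real.exp t : ℂ) * ee y)‖ ≤
        ‖f.eval ((Real.exp t : ℂ) * ee x)‖ * Real.exp (40 / q * S) := by
      rw [h2, h3, mul_assoc]
      exact mul_le_mul_of_nonneg_left h1 (norm_nonneg _)
    have := Real.log_le_log (hpos y) h4
    rwa [Real.log_mul (hpos x).ne' (Real.exp_pos _).ne', Real.log_exp] at this
  have := equidist hq hpq hb (φ := fun x => - F x) (g := fun y => - F y + 40 / q * S)
    (fun x => by simp only; rw [hFp x]) (fun x => by simp only; rw [hFp x])
    (fun a c => Continuous.intervalIntegrable (by fun_prop) _ _)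
    (fun x y hxy => by linarith [hlip x y hxy]) x
  rw [intervalIntegral.integral_add 
    (Continuous.intervalIntegrable (u := fun y => - F y) (by fun_prop) _ _) (by simp),
    intervalIntegral.integral_neg, Finset.sum_neg_distrib, intervalIntegral.integral_const] at this
  have h6 : (q : ℝ) * (40 / q * S) = 40 * S := by field_simp
  simp only [sub_zero, one_smul] at this
  rw [mul_add, h6] at this
  have h7 : (q : ℝ) * f.logMahlerMeasure ≤ q * ∫ x in (0 : ℝ)..1, F x :=
    mul_le_mul_of_nonneg_left hintg hqR.le
  linarith

end LD

namespace LD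
open MeasureTheory Polynomial

lemma g_lint : ∫⁻ u in Set.Icc (-1 : ℝ) 1, ENNReal.ofReal (|u| ^ (-(3 / 4) : ℝ)) < ⊤ := by
  have h1 : IntervalIntegrable (fun u : ℝ => |u| ^ (-(3 / 4) : ℝ)) volume 0 1 := by
    refine (intervalIntegral.intervalIntegrable_rpow' (a := 0) (b := 1) (r := -(3 / 4)) (by norm_num)).congr ?_
    intro x hx
    rw [Set.uIoc_of_le zero_le_one] at hx
    simp only [abs_of_pos hx.1]
  have h2 : IntervalIntegrable (fun u : ℝ => |u| ^ (-(3 / 4) : ℝ)) volume (-1) 0 := by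
    have := h1.comp_mul_left (c := -1) (by simp)
    simp at this
    have := this.symm
    norm_num at this ⊢
    exact this
  have h3 := h2.trans h1
  rw [intervalIntegrable_iff_integrableOn_Icc_of_le (by norm_num)] at h3
  exact h3.lintegral_lt_top

lemma choose_t {τ : ℝ} (hτ : 0 < τ) : ∃ K > (0 : ℝ), ∀ s : Multiset ℝ, ∃ t, 0 < t ∧ t < τ ∧
    (∀ a ∈ s, t ≠ a) ∧ (s.map fun a => 1 / |t - a|).sum ≤ (K * s.card) ^ (4 / 3 : ℝ) := by
  set g : ℝ → ENNReal := fun u => ENNReal.ofReal (|u| ^ (-(3 / 4) : ℝ)) with hg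
  have hgm : Measurable g := by
    rw [hg]; fun_prop
  set C0 := ∫⁻ u in Set.Icc (-1 : ℝ) 1, g u with hC0
  have hC0f : C0 < ⊤ := g_lint
  have hone : ∀ a : ℝ, ∫⁻ t in Set.Ioo (0 : ℝ) τ, g (t - a) ≤ ENNReal.ofReal τ + C0 := by
    intro a
    have hle : ∀ t, g (t - a) ≤ 1 + (Set.Icc (-1 : ℝ) 1).indicator g (t - a) := by
      intro t
      by_cases h : t - a ∈ Set.Icc (-1 : ℝ) 1
      · rw [Set.indicator_of_mem h]; exact le_add_self
      · rw [Set.indicator_of_notMem h, add_zero]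
        simp only [hg]
        rw [ENNReal.ofReal_le_one]
        apply Real.rpow_le_one_of_one_le_of_nonpos _ (by norm_num)
        by_contra hlt
        push Not at hlt
        exact h ⟨(abs_lt.1 hlt).1.le, (abs_lt.1 hlt).2.le⟩
    calc _ ≤ ∫⁻ t in Set.Ioo (0 : ℝ) τ, (1 + (Set.Icc (-1 : ℝ) 1).indicator g (t - a)) :=
          lintegral_mono fun t => hle t
      _ = ENNReal.ofReal τ + ∫⁻ t in Set.Ioo (0 : ℝ) τ, (Set.Icc (-1 : ℝ) 1).indicator g (t - a) := by
          rw [lintegral_add_left measurable_const]; simp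
      _ ≤ ENNReal.ofReal τ + ∫⁻ t, (Set.Icc (-1 : ℝ) 1).indicator g (t - a) := by
          exact add_le_add le_rfl (setLIntegral_le_lintegral _ _)
      _ = _ := by
          rw [lintegral_sub_right_eq_self (fun t => (Set.Icc (-1 : ℝ) 1).indicator g t) a,
            lintegral_indicator measurableSet_Icc]
  have hτ' : ENNReal.ofReal τ ≠ 0 := by simpa using hτ
  set K : ℝ := ((ENNReal.ofReal τ + C0) / ENNReal.ofReal τ).toReal with hK
  have hKf : (ENNReal.ofReal τ + C0) / ENNReal.ofReal τ ≠ ⊤ :=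
    ENNReal.div_ne_top (by simp [hC0f.ne]) hτ'
  have hK1 : ENNReal.ofReal K = (ENNReal.ofReal τ + C0) / ENNReal.ofReal τ := ENNReal.ofReal_toReal hKf
  have hKpos : 0 < K := by
    apply ENNReal.toReal_pos _ hKf
    simp [hτ]
  refine ⟨K, hKpos, fun s => ?_⟩
  have hsm : ∀ s : Multiset ℝ, Measurable fun t => (s.map fun a => g (t - a)).sum := by
    intro s
    induction s using Multiset.induction_on with
    | empty => simp
    | cons a s ih =>
      simp only [Multiset.map_cons, Multiset.sum_cons]
      exact (hgm.comp (measurable_id.sub_const a)).add ih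
  have hsum : ∀ s : Multiset ℝ, ∫⁻ t in Set.Ioo (0 : ℝ) τ, (s.map fun a => g (t - a)).sum ≤
      s.card * (ENNReal.ofReal τ + C0) := by
    intro s
    induction s using Multiset.induction_on with
    | empty => simp
    | cons a s ih =>
      simp only [Multiset.map_cons, Multiset.sum_cons, Multiset.card_cons]
      rw [lintegral_add_left (f := fun t => g (t - a)) (hgm.comp (measurable_id.sub_const a))]
      push_cast
      rw [add_mul, one_mul, add_comm]
      exact add_le_add ih (hone a)
  have hsr : ∀ (s : Multiset ℝ) (t : ℝ), (s.map fun a => g (t - a)).sum =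
      ENNReal.ofReal (s.map fun a => |t - a| ^ (-(3 / 4) : ℝ)).sum := by
    intro s t
    induction s using Multiset.induction_on with
    | empty => simp
    | cons a s ih =>
      simp only [Multiset.map_cons, Multiset.sum_cons]
      rw [ih, ENNReal.ofReal_add (by positivity)]
      apply Multiset.sum_nonneg
      simp only [Multiset.mem_map]
      rintro _ ⟨w, _, rfl⟩; positivity
  have hnull : (volume.restrict (Set.Ioo (0 : ℝ) τ)) ((Set.Ioo (0 : ℝ) τ)ᶜ ∪ (s.toFinset : Set ℝ)) = 0 := by
    refine measure_union_null ?_ ?_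
    · rw [Measure.restrict_apply measurableSet_Ioo.compl]; simp
    · exact (Finset.countable_toSet _).measure_zero _
  have hμ0 : volume.restrict (Set.Ioo (0 : ℝ) τ) ≠ 0 := by
    intro h
    have := congrArg (fun μ => μ Set.univ) h
    simp at this; linarith
  obtain ⟨t, ht, hle⟩ := exists_notMem_null_le_laverage hμ0 (hsm s).aemeasurable hnull
  simp only [Set.mem_union, Set.mem_compl_iff, not_or, not_not, Finset.mem_coe,
    Multiset.mem_toFinset] at ht
  have hts : ∀ a ∈ s, t ≠ a := fun a ha h => ht.2 (h ▸ ha)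
  refine ⟨t, ht.1.1, ht.1.2, hts, ?_⟩
  rw [laverage_eq, hsr] at hle
  set B := (s.map fun a => |t - a| ^ (-(3 / 4) : ℝ)).sum with hB
  have hnn : ∀ s : Multiset ℝ, 0 ≤ (s.map fun a => |t - a| ^ (-(3 / 4) : ℝ)).sum := by
    intro s
    apply Multiset.sum_nonneg
    simp only [Multiset.mem_map]
    rintro _ ⟨w, _, rfl⟩; positivity
  have hBle : B ≤ K * s.card := by
    have h1 : ENNReal.ofReal B ≤ ENNReal.ofReal (K * s.card) := by
      refine hle.trans ?_
      rw [ENNReal.ofReal_mul hKpos.le, hK1, ENNReal.ofReal_natCast]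
      simp only [Measure.restrict_apply_univ, Real.volume_Ioo, sub_zero]
      calc _ ≤ (s.card * (ENNReal.ofReal τ + C0)) / ENNReal.ofReal τ := by gcongr; exact hsum s
        _ = _ := by rw [mul_div_assoc, mul_comm]
    exact (ENNReal.ofReal_le_ofReal_iff (by positivity)).1 h1
  have hB0 : 0 ≤ B := hnn s
  have hterm : ∀ a ∈ s, 1 / |t - a| ≤ |t - a| ^ (-(3 / 4) : ℝ) * B ^ (1 / 3 : ℝ) := by
    intro a ha
    have hu : 0 < |t - a| := abs_pos.2 (sub_ne_zero.2 (hts a ha))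
    have h1 : |t - a| ^ (-(3 / 4) : ℝ) ≤ B := by
      obtain ⟨s', rfl⟩ := Multiset.exists_cons_of_mem ha
      rw [hB, Multiset.map_cons, Multiset.sum_cons]
      linarith [hnn s']
    have h2 : 1 / |t - a| = |t - a| ^ (-(3 / 4) : ℝ) * (|t - a| ^ (-(3 / 4) : ℝ)) ^ (1 / 3 : ℝ) := by
      rw [← Real.rpow_mul hu.le, ← Real.rpow_add hu, one_div, ← Real.rpow_neg_one]
      norm_num
    rw [h2]
    gcongr
  calc (s.map fun a => 1 / |t - a|).sum ≤ (s.map fun a => |t - a| ^ (-(3 / 4) : ℝ) * B ^ (1 / 3 : ℝ)).sum :=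
        Multiset.sum_map_le_sum_map _ _ hterm
    _ = B * B ^ (1 / 3 : ℝ) := by rw [Multiset.sum_map_mul_right]
    _ = B ^ (4 / 3 : ℝ) := by
        rcases hB0.eq_or_lt with h | h
        · rw [← h]; norm_num
        · nth_rw 1 [← Real.rpow_one B]
          rw [← Real.rpow_add h]; norm_num
    _ ≤ _ := by gcongr

end LD

namespace LD
open MeasureTheory Polynomial

lemma lower_one (α lam E : ℝ) {b Λ : ℝ} {N : ℕ} {f : ℂ[X]} (hf : f ≠ 0)
    (hfb : ∀ z, ‖f.eval z‖ ≤ 4 * nm (Pz α lam E (ee b) N z))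
    (hfm : N * Λ - Real.log 6 ≤ f.logMahlerMeasure)
    {C1 : ℝ} (hC1 : 0 ≤ C1) {t : ℝ} (ht0 : 0 ≤ t) (ht1 : t ≤ 1)
    (hrot : ∀ z : ℂ, ‖z‖ = Real.exp t → nm (Pz α lam E (ee b) N (ee b * z)) ≤
      Real.exp C1 * nm (Pz α lam E (ee b) N z))
    (hroots : ∀ w ∈ f.roots, t ≠ Real.log ‖w‖) {p : ℤ} {q : ℕ} (hq : 0 < q)
    (hpq : IsCoprime p (q : ℤ)) (hb : |b - p / q| ≤ 1 / (q : ℝ) ^ 2) {δ : ℝ}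
    (hS : q * Real.log 24 + C1 * q ^ 2 +
      40 * (f.roots.map fun w => 1 + 1 / |t - Real.log ‖w‖|).sum < q * (N * δ))
    (z : ℂ) (hz : ‖z‖ = Real.exp t) :
    Real.exp (N * (Λ - δ)) ≤ nm (Pz α lam E (ee b) N z) := by
  by_contra hlt
  push Not at hlt
  have het := Real.exp_pos t
  have hetC : (Real.exp t : ℂ) ≠ 0 := by exact_mod_cast het.ne'
  have hqR : (0 : ℝ) < q := by exact_mod_cast hq
  obtain ⟨x, hx⟩ := exists_ee (z := z / Real.exp t) (by
    rw [norm_div, hz, Complex.norm_real, Real.norm_of_nonneg het.le, div_self het.ne'])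
  have hzx : z = Real.exp t * ee x := by rw [hx]; field_simp
  have hzj : ∀ j : ℕ, (Real.exp t : ℂ) * ee (x + j * b) = ee b ^ j * z := by
    intro j; rw [← ee_pow_mul, hzx]; ring
  have hit : ∀ j : ℕ, nm (Pz α lam E (ee b) N (ee b ^ j * z)) ≤
      Real.exp (j * C1) * nm (Pz α lam E (ee b) N z) := by
    intro j
    induction j with
    | zero => simp
    | succ j ih =>
      have h1 := hrot (ee b ^ j * z) (by simp [norm_ee, hz])
      rw [pow_succ', mul_assoc]
      refine h1.trans ((mul_le_mul_of_nonneg_left ih (Real.exp_pos _).le).trans (le_of_eq ?_))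
      rw [← mul_assoc, ← Real.exp_add]; congr 2; push_cast; ring
  have hlog : ∀ j ∈ Finset.range q, Real.log ‖f.eval (Real.exp t * ee (x + j * b))‖ ≤
      Real.log 4 + (q * C1 + N * (Λ - δ)) := by
    intro j hj
    have hjq : (j : ℝ) ≤ q := by exact_mod_cast (Finset.mem_range.1 hj).le
    rw [hzj]
    have hne : f.eval (ee b ^ j * z) ≠ 0 := by
      intro h0
      have := hroots _ ((mem_roots hf).2 h0)
      have hn : ‖ee b ^ j * z‖ = Real.exp t := by simp [norm_ee, hz]
      rw [hn, Real.log_exp] at this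
      exact this rfl
    have h1 : ‖f.eval (ee b ^ j * z)‖ ≤ 4 * Real.exp (q * C1 + N * (Λ - δ)) := by
      refine (hfb _).trans ?_
      rw [Real.exp_add]
      gcongr
      refine (hit j).trans ?_
      exact mul_le_mul (Real.exp_le_exp.2 (mul_le_mul_of_nonneg_right hjq hC1)) hlt.le (nm_nonneg _)
        (Real.exp_pos _).le
    have := Real.log_le_log (norm_pos_iff.2 hne) h1
    rwa [Real.log_mul (by norm_num) (Real.exp_pos _).ne', Real.log_exp] at this
  have h1 := poly_equidist hf ht0 ht1 hroots hq hpq hb x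
  have h2 := h1.trans (Finset.sum_le_sum hlog)
  rw [Finset.sum_const, Finset.card_range, nsmul_eq_mul] at h2
  have h3 : Real.log 24 = Real.log 6 + Real.log 4 := by
    rw [← Real.log_mul (by norm_num) (by norm_num)]; norm_num
  have h4 : (q : ℝ) * (N * Λ - Real.log 6) ≤ q * f.logMahlerMeasure :=
    mul_le_mul_of_nonneg_left hfm hqR.le
  rw [h3] at hS
  nlinarith

lemma growth_pow (A : ℝ) : ∃ Q : ℕ, ∀ q : ℕ, Q ≤ q → A * (q : ℝ) ^ (4 / 3 : ℝ) < (q : ℝ) ^ 2 := by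
  have h1 := (tendsto_rpow_atTop (show (0 : ℝ) < 2 / 3 by norm_num)).comp
    (tendsto_natCast_atTop_atTop (R := ℝ))
  have h2 := (h1.eventually_gt_atTop A).and (Filter.eventually_gt_atTop 0)
  obtain ⟨Q, hQ⟩ := Filter.eventually_atTop.1 h2
  refine ⟨Q, fun q hq => ?_⟩
  obtain ⟨h3, h4⟩ := hQ q hq
  have h5 : (0 : ℝ) < q := by exact_mod_cast h4
  have h6 : (q : ℝ) ^ 2 = (q : ℝ) ^ (2 / 3 : ℝ) * (q : ℝ) ^ (4 / 3 : ℝ) := by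
    rw [← Real.rpow_add h5, ← Real.rpow_natCast]; norm_num
  rw [h6]
  exact mul_lt_mul_of_pos_right h3 (by positivity)

set_option maxHeartbeats 1000000 in
lemma lower {α : ℝ} (hα : α ∈ Set.Ioo (-1 : ℝ) 1) (lam E : ℝ) {b : ℝ} (hb : Irrational b)
    {δ τ : ℝ} (hδ : 0 < δ) (hτ : 0 < τ) (n0 : ℕ) : ∃ n ≥ n0, ∃ r : ℝ, 1 < r ∧ r < Real.exp τ ∧
      ∀ z : ℂ, ‖z‖ = r →
        Real.exp (n * (lyap (potV α lam) b E + Real.log (kap α) - δ)) ≤ nm (Pz α lam E (ee b) n z) ∧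
        Real.exp ((2 * n : ℕ) * (lyap (potV α lam) b E + Real.log (kap α) - δ)) ≤
          nm (Pz α lam E (ee b) (2 * n) z) := by
  obtain ⟨τ1, hτ1, C1, hC1, hrot⟩ := rot_bound hα lam E
  set τ2 := min τ (min τ1 1) with hτ2
  have hposTau : 0 < τ2 := by positivity
  obtain ⟨K, hK, hch⟩ := choose_t hposTau
  obtain ⟨m, hm⟩ := exists_nat_gt ((C1 + 1) / δ)
  have hm1 : C1 + 1 < m * δ := by rwa [div_lt_iff₀ hδ] at hm
  have hmpos : 0 < m := by
    rcases Nat.eq_zero_or_pos m with h | h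
    · rw [h] at hm1; simp at hm1; linarith
    · exact h
  have hmR : (0 : ℝ) < m := by exact_mod_cast hmpos
  set A : ℝ := Real.log 24 + 40 * (6 * m) + 40 * (K * (6 * m)) ^ (4 / 3 : ℝ) with hA
  obtain ⟨Q, hQ⟩ := growth_pow A
  obtain ⟨p, q, hQq, hq, hpq, happ⟩ := exists_approx hb (max Q n0)
  have hqR : (1 : ℝ) ≤ q := by exact_mod_cast hq
  have hqA := hQ q (le_of_max_le_left hQq)
  set n := m * q with hn
  have hnpos : 0 < n := Nat.mul_pos hmpos hq
  obtain ⟨f, hf0, hfd, hfb, hfm⟩ := exists_f hα lam E b hnpos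
  obtain ⟨f', hf0', hfd', hfb', hfm'⟩ := exists_f hα lam E b (N := 2 * n) (by omega)
  set s : Multiset ℝ := (f.roots.map fun w => Real.log ‖w‖) + (f'.roots.map fun w => Real.log ‖w‖) with hs
  obtain ⟨t, ht0, htτ, hts, htsum⟩ := hch s
  have hcard : (s.card : ℝ) ≤ 6 * n := by
    have h1 := f.card_roots'
    have h2 := f'.card_roots'
    have h3 : s.card ≤ 6 * n := by
      rw [hs, Multiset.card_add, Multiset.card_map, Multiset.card_map]; omega
    exact_mod_cast h3
  have hkey : (q : ℝ) * Real.log 24 + 40 * (s.card + (s.map fun a => 1 / |t - a|).sum) < q ^ 2 := by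
    refine lt_of_le_of_lt ?_ hqA
    have hnR : (n : ℝ) = m * q := by rw [hn]; push_cast; ring
    have h1 : (q : ℝ) ≤ (q : ℝ) ^ (4 / 3 : ℝ) := by
      nth_rw 1 [← Real.rpow_one (q : ℝ)]
      exact Real.rpow_le_rpow_of_exponent_le hqR (by norm_num)
    have h2 : (s.map fun a => 1 / |t - a|).sum ≤ (K * (6 * m)) ^ (4 / 3 : ℝ) * (q : ℝ) ^ (4 / 3 : ℝ) := by
      refine htsum.trans ?_
      rw [← Real.mul_rpow (by positivity) (by positivity)]
      refine Real.rpow_le_rpow (by positivity) ?_ (by norm_num)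
      have := mul_le_mul_of_nonneg_left hcard hK.le
      rw [hnR] at this
      linarith
    have h3 : (s.card : ℝ) ≤ 6 * m * (q : ℝ) ^ (4 / 3 : ℝ) := by
      refine hcard.trans ?_
      rw [hnR]
      nlinarith
    have h4 : 0 < Real.log 24 := Real.log_pos (by norm_num)
    rw [hA]
    nlinarith
  have hsplit : (s.map fun a => 1 / |t - a|).sum = (f.roots.map fun w => 1 / |t - Real.log ‖w‖|).sum +
      (f'.roots.map fun w => 1 / |t - Real.log ‖w‖|).sum := by
    rw [hs, Multiset.map_add, Multiset.sum_add, Multiset.map_map, Multiset.map_map]; rfl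
  have hnn : ∀ g : ℂ[X], 0 ≤ (g.roots.map fun w => 1 / |t - Real.log ‖w‖|).sum := by
    intro g
    apply Multiset.sum_nonneg
    simp only [Multiset.mem_map]
    rintro _ ⟨w, _, rfl⟩; positivity
  have hcsplit : (s.card : ℝ) = (f.roots.card : ℝ) + f'.roots.card := by
    rw [hs]; simp
  have hone : ∀ g : ℂ[X], (g.roots.map fun w => 1 + 1 / |t - Real.log ‖w‖|).sum =
      g.roots.card + (g.roots.map fun w => 1 / |t - Real.log ‖w‖|).sum := by
    intro g
    rw [Multiset.sum_map_add]; simp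
  have ht1 : t ≤ 1 := htτ.le.trans ((min_le_right _ _).trans (min_le_right _ _))
  have htτ1 : t ≤ τ1 := htτ.le.trans ((min_le_right _ _).trans (min_le_left _ _))
  have htτ0 : t < τ := htτ.trans_le (min_le_left _ _)
  have hrot' : ∀ N : ℕ, ∀ z : ℂ, ‖z‖ = Real.exp t → nm (Pz α lam E (ee b) N (ee b * z)) ≤
      Real.exp C1 * nm (Pz α lam E (ee b) N z) := fun N z hz =>
    hrot (ee b) (norm_ee b) N z (by rw [hz]; exact Real.one_le_exp ht0.le)
      (by rw [hz]; exact Real.exp_le_exp.2 htτ1)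
  have hq2 : C1 * (q : ℝ) ^ 2 + q ^ 2 ≤ q * (n * δ) := by
    have : (n : ℝ) = m * q := by rw [hn]; push_cast; ring
    rw [this]
    have h1 := mul_le_mul_of_nonneg_right hm1.le (sq_nonneg (q : ℝ))
    have h2 : (q : ℝ) * (m * q * δ) = m * δ * q ^ 2 := by ring
    rw [h2]; linarith
  have hq3 : (q : ℝ) * (n * δ) ≤ q * ((2 * n : ℕ) * δ) := by
    push_cast
    have h1 : 0 ≤ (q : ℝ) * (n * δ) := by positivity
    have h2 : (q : ℝ) * (2 * n * δ) = 2 * (q * (n * δ)) := by ring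
    rw [h2]; linarith
  refine ⟨n, ?_, Real.exp t, Real.one_lt_exp_iff.2 ht0, Real.exp_lt_exp.2 htτ0, fun z hz => ⟨?_, ?_⟩⟩
  · have h1 : n0 ≤ q := le_of_max_le_right hQq
    exact h1.trans (Nat.le_mul_of_pos_left q hmpos)
  · refine lower_one α lam E hf0 hfb hfm hC1 ht0.le ht1 (hrot' _) ?_ hq hpq happ ?_ z hz
    · intro w hw
      exact hts _ (by rw [hs]; exact Multiset.mem_add.2 (Or.inl (Multiset.mem_map_of_mem _ hw)))
    · rw [hone]
      have := hnn f'
      have : (0 : ℝ) ≤ f'.roots.card := by positivity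
      linarith
  · refine lower_one α lam E hf0' hfb' hfm' hC1 ht0.le ht1 (hrot' _) ?_ hq hpq happ ?_ z hz
    · intro w hw
      exact hts _ (by rw [hs]; exact Multiset.mem_add.2 (Or.inr (Multiset.mem_map_of_mem _ hw)))
    · rw [hone]
      have := hnn f
      have : (0 : ℝ) ≤ f.roots.card := by positivity
      linarith

end LD

namespace LD

section
open scoped Matrix.Norms.L2Operator ENNReal

lemma gelfand (B : Matrix (Fin 2) (Fin 2) ℂ) (s : ℝ) {n : ℕ} (hn : 0 < n)
    (h : ∀ k : ℕ, Real.exp ((n * k : ℕ) * s) ≤ nm (B ^ (n * k))) :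
    ∃ x : ℂ, Real.exp s ≤ ‖x‖ ∧ x ^ 2 - B.trace * x + B.det = 0 := by
  have : CompleteSpace (Matrix (Fin 2) (Fin 2) ℂ) := FiniteDimensional.complete ℂ _
  obtain ⟨x, hx, hxr⟩ := spectrum.exists_nnnorm_eq_spectralRadius (A := Matrix (Fin 2) (Fin 2) ℂ) B
  refine ⟨x, ?_, ?_⟩
  · by_contra hcon
    push Not at hcon
    have h1 : spectralRadius ℂ B < ENNReal.ofReal (Real.exp s) := by
      rw [← hxr, ← ENNReal.ofReal_coe_nnreal]
      exact (ENNReal.ofReal_lt_ofReal_iff (Real.exp_pos s)).2 (by simpa using hcon)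
    have h2 := (spectrum.pow_nnnorm_pow_one_div_tendsto_nhds_spectralRadius B).eventually_lt_const h1
    obtain ⟨N, hN⟩ := Filter.eventually_atTop.1 h2
    have hk : N + 1 ≤ n * (N + 1) := Nat.le_mul_of_pos_left _ hn
    have h3 := hN (n * (N + 1)) (by omega)
    have h4 := h (N + 1)
    set k := n * (N + 1) with hkdef
    have hk0 : (0 : ℝ) < k := by
      have : 0 < k := by omega
      exact_mod_cast this
    have h5 : Real.exp (k * s) ≤ ‖B ^ k‖ := h4.trans ((nm_le_opNorm2 _).trans (opNorm2_eq _).le)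
    have h6 : ENNReal.ofReal (Real.exp s) ≤ (‖B ^ k‖₊ : ℝ≥0∞) ^ (1 / (k : ℝ)) := by
      have h7 : (ENNReal.ofReal (Real.exp (k * s))) ^ (1 / (k : ℝ)) = ENNReal.ofReal (Real.exp s) := by
        rw [ENNReal.ofReal_rpow_of_pos (Real.exp_pos _), ← Real.exp_mul]
        congr 2; field_simp
      rw [← h7]
      refine ENNReal.rpow_le_rpow ?_ (by positivity)
      rw [← ENNReal.ofReal_coe_nnreal]
      exact ENNReal.ofReal_le_ofReal (by simpa using h5)
    exact absurd h3 (not_lt.2 h6)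
  · have := (Matrix.mem_spectrum_iff_isRoot_charpoly).1 hx
    rw [Matrix.charpoly_fin_two] at this
    simpa [Polynomial.IsRoot] using this

end

/-- Stability: bounds on a circle persist. -/
lemma stab_lt {f g : ℝ × ℂ × ℂ → ℝ} (hf : Continuous f) (hg : Continuous g) (E : ℝ) (w : ℂ) (r : ℝ)
    (h : ∀ z : ℂ, ‖z‖ = r → f (E, w, z) < g (E, w, z)) :
    ∃ η > 0, ∀ E' : ℝ, |E' - E| < η → ∀ w' : ℂ, ‖w' - w‖ < η → ∀ z : ℂ, ‖z‖ = r →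
      f (E', w', z) < g (E', w', z) := by
  have hK : IsCompact (Metric.sphere (0 : ℂ) r) := isCompact_sphere _ _
  have h1 := hK.eventually_forall_of_forall_eventually (x₀ := (E, w))
    (P := fun (x : ℝ × ℂ) (z : ℂ) => f (x.1, x.2, z) < g (x.1, x.2, z)) (by
      intro z hz
      have hF : Continuous fun q : (ℝ × ℂ) × ℂ => f (q.1.1, q.1.2, q.2) := by fun_prop
      have hG : Continuous fun q : (ℝ × ℂ) × ℂ => g (q.1.1, q.1.2, q.2) := by fun_prop
      exact (isOpen_lt hF hG).mem_nhds (h z (by simpa using hz)))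
  obtain ⟨η, hη, hh⟩ := Metric.eventually_nhds_iff.1 h1
  refine ⟨η, hη, fun E' hE' w' hw' z hz => ?_⟩
  have h2 : dist (E', w') (E, w) < η := by
    rw [Prod.dist_eq]
    exact max_lt (by rwa [Real.dist_eq]) (by rwa [dist_eq_norm])
  exact hh h2 z (by simpa using hz)

/-- The growth recursion. -/
lemma growth (α lam E : ℝ) {w : ℂ} (hw : ‖w‖ = 1) {n : ℕ} {r A B U D ρ : ℝ}
    (hA : ρ ≤ A) (hρ : 0 < ρ) (hD0 : 0 ≤ D) (hD : D ≤ ρ) (hU : 0 < U) (hB : 2 * U * ρ ≤ B)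
    (h1 : ∀ z : ℂ, ‖z‖ = r → A ≤ nm (Pz α lam E w n z))
    (h2 : ∀ z : ℂ, ‖z‖ = r → B ≤ nm (Pz α lam E w (2 * n) z))
    (h3 : ∀ z : ℂ, ‖z‖ = r → nm (Pz α lam E w n z) ≤ U)
    (h4 : ∀ z : ℂ, ‖z‖ = r → ‖Dz α w n z‖ ≤ D) (z : ℂ) (hz : ‖z‖ = r) (m : ℕ) :
    ρ ^ m ≤ nm (Pz α lam E w (m * n) z) ∧
      ρ * nm (Pz α lam E w (m * n) z) ≤ nm (Pz α lam E w ((m + 1) * n) z) := by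
  have hrot : ∀ k : ℕ, ‖w ^ k * z‖ = r := fun k => by rw [norm_mul, norm_pow, hw, one_pow, one_mul, hz]
  induction m with
  | zero =>
    simp only [pow_zero, Nat.zero_mul, Pz_zero, nm_one, le_refl, true_and, zero_add, one_mul, mul_one]
    exact hA.trans (h1 z hz)
  | succ m ih =>
    obtain ⟨ih1, ih2⟩ := ih
    refine ⟨?_, ?_⟩
    · rw [pow_succ, mul_comm]
      exact (mul_le_mul_of_nonneg_left ih1 hρ.le).trans ih2
    · have p1 := plucker (Pz α lam E w n (w ^ ((m + 1) * n) * z)) (Pz α lam E w n (w ^ (m * n) * z))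
        (Pz α lam E w (m * n) z)
      have e1 : Pz α lam E w n (w ^ ((m + 1) * n) * z) * Pz α lam E w n (w ^ (m * n) * z) =
          Pz α lam E w (2 * n) (w ^ (m * n) * z) := by
        rw [two_mul, Pz_add]
        congr 2
        rw [← mul_assoc, ← pow_add]; congr 2; ring
      have e2 : Pz α lam E w n (w ^ (m * n) * z) * Pz α lam E w (m * n) z =
          Pz α lam E w ((m + 1) * n) z := by
        rw [← Pz_add]; congr 1; ring
      have e3 : Pz α lam E w n (w ^ ((m + 1) * n) * z) * Pz α lam E w ((m + 1) * n) z =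
          Pz α lam E w ((m + 1 + 1) * n) z := by
        rw [← Pz_add]; congr 1; ring
      rw [← e2, ← mul_assoc, e1] at e3
      rw [e1, e2, e3, det_Pz, norm_pow] at p1
      have b1 := h2 _ (hrot (m * n))
      have b2 := h3 _ (hrot (m * n))
      have b3 := h3 _ (hrot ((m + 1) * n))
      have b4 := h4 _ (hrot (m * n))
      set N2 := nm (Pz α lam E w ((m + 1 + 1) * n) z)
      set N1 := nm (Pz α lam E w ((m + 1) * n) z)
      set N0 := nm (Pz α lam E w (m * n) z)
      have n2 : 0 ≤ N2 := nm_nonneg _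
      have n1 : 0 ≤ N1 := nm_nonneg _
      have n0 : 0 ≤ N0 := nm_nonneg _
      have c1 : 2 * U * ρ * N1 ≤ nm (Pz α lam E w (2 * n) (w ^ (m * n) * z)) * N1 :=
        mul_le_mul_of_nonneg_right (hB.trans b1) n1
      have c2 : N2 * nm (Pz α lam E w n (w ^ (m * n) * z)) ≤ N2 * U := mul_le_mul_of_nonneg_left b2 n2
      have c3 : nm (Pz α lam E w n (w ^ ((m + 1) * n) * z)) * N0 * ‖Dz α w n (w ^ (m * n) * z)‖ ^ 2 ≤
          U * N0 * ρ ^ 2 := by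
        gcongr
        exact b4.trans hD
      have c4 : U * N0 * ρ ^ 2 ≤ U * ρ * N1 := by
        have := mul_le_mul_of_nonneg_left ih2 (by positivity : 0 ≤ U * ρ)
        calc U * N0 * ρ ^ 2 = U * ρ * (ρ * N0) := by ring
          _ ≤ _ := this
      have c5 : U * (ρ * N1) ≤ U * N2 := by linarith
      exact le_of_mul_le_mul_left c5 hU

lemma Pz_periodic (α lam E : ℝ) {w : ℂ} {q : ℕ} (hq : w ^ q = 1) (z : ℂ) (k : ℕ) :
    Pz α lam E w (q * k) z = Pz α lam E w q z ^ k := by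
  induction k with
  | zero => simp [Pz_zero]
  | succ k ih =>
    rw [Nat.mul_succ, Pz_add, hq, one_mul, ih, pow_succ]

lemma Dz_periodic (α : ℝ) {w : ℂ} {q : ℕ} (hq : w ^ q = 1) (z : ℂ) (k : ℕ) :
    Dz α w (q * k) z = Dz α w q z ^ k := by
  induction k with
  | zero => simp [Dz_zero]
  | succ k ih =>
    rw [Nat.mul_succ, Dz_add, hq, one_mul, ih, pow_succ]

lemma Dz_block (α : ℝ) {w : ℂ} (hw : ‖w‖ = 1) {n : ℕ} {r D : ℝ}
    (h : ∀ z : ℂ, ‖z‖ = r → ‖Dz α w n z‖ ≤ D) (z : ℂ) (hz : ‖z‖ = r) (k : ℕ) :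
    ‖Dz α w (n * k) z‖ ≤ D ^ k := by
  have hD0 : 0 ≤ D := (norm_nonneg _).trans (h z hz)
  induction k with
  | zero => simp [Dz_zero]
  | succ k ih =>
    rw [Nat.mul_succ, add_comm, Dz_add, norm_mul, pow_succ, mul_comm (D ^ k)]
    have := h (w ^ (n * k) * z) (by rw [norm_mul, norm_pow, hw, one_pow, one_mul, hz])
    gcongr

/-- if `D = exp (n d)` bounds blocks of length n then `exp (q d)` bounds the period product. -/
lemma Dz_per_bound (α : ℝ) {w : ℂ} (hw : ‖w‖ = 1) {n q : ℕ} (hn : 0 < n) (hq : w ^ q = 1) {r d : ℝ}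
    (h : ∀ z : ℂ, ‖z‖ = r → ‖Dz α w n z‖ ≤ Real.exp (n * d)) (z : ℂ) (hz : ‖z‖ = r) :
    ‖Dz α w q z‖ ≤ Real.exp (q * d) := by
  have h1 := Dz_block α hw h z hz q
  rw [mul_comm n q, Dz_periodic α hq, norm_pow, ← Real.exp_nat_mul] at h1
  have h2 : (q : ℝ) * (n * d) = n * (q * d) := by ring
  rw [h2, Real.exp_nat_mul] at h1
  exact (pow_le_pow_iff_left₀ (norm_nonneg _) (Real.exp_pos _).le hn.ne').1 h1

lemma trace_lower (α lam E : ℝ) {w : ℂ} (hw : ‖w‖ = 1) {n q : ℕ} (hn : 0 < n) (hq : w ^ q = 1)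
    {r s d : ℝ}
    (hgr : ∀ z : ℂ, ‖z‖ = r → ∀ m : ℕ, Real.exp (n * s) ^ m ≤ nm (Pz α lam E w (m * n) z))
    (hd : ∀ z : ℂ, ‖z‖ = r → ‖Dz α w n z‖ ≤ Real.exp (n * d))
    (hlarge : Real.log 2 ≤ 2 * q * (s - d)) (z : ℂ) (hz : ‖z‖ = r) :
    Real.exp (q * s) / 2 ≤ ‖(Pz α lam E w q z).trace‖ := by
  obtain ⟨x, hx, hxe⟩ := gelfand (Pz α lam E w q z) (q * s) hn (by
    intro k
    rw [← Pz_periodic α lam E hq]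
    have h1 := hgr z hz (q * k)
    rw [← Real.exp_nat_mul] at h1
    have e1 : ((n * k : ℕ) : ℝ) * (q * s) = ((q * k : ℕ) : ℝ) * (n * s) := by push_cast; ring
    have e2 : q * (n * k) = q * k * n := by ring
    rw [e1, e2]; exact h1)
  have hdet : ‖(Pz α lam E w q z).det‖ ≤ Real.exp (2 * q * d) := by
    rw [det_Pz, norm_pow]
    have := Dz_per_bound α hw hn hq hd z hz
    calc _ ≤ Real.exp (q * d) ^ 2 := by gcongr
      _ = _ := by rw [← Real.exp_nat_mul]; congr 1; push_cast; ring
  set T := (Pz α lam E w q z).trace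
  set Δ := (Pz α lam E w q z).det
  have hx0 : 0 < ‖x‖ := (Real.exp_pos _).trans_le hx
  have h1 : ‖x‖ ^ 2 ≤ ‖T‖ * ‖x‖ + ‖Δ‖ := by
    rw [← norm_pow, ← norm_mul]
    have : x ^ 2 = T * x - Δ := by linear_combination hxe
    rw [this]; exact norm_sub_le _ _
  have h2 : Real.exp (2 * q * d) ≤ Real.exp (q * s) ^ 2 / 2 := by
    rw [le_div_iff₀ (by norm_num), ← Real.exp_log (show (0 : ℝ) < 2 by norm_num), ← Real.exp_add,
      ← Real.exp_nat_mul, Real.exp_log (by norm_num)]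
    apply Real.exp_le_exp.2
    push_cast
    linarith
  have h3 : Real.exp (q * s) ^ 2 ≤ Real.exp (q * s) * ‖x‖ := by
    rw [sq]; exact mul_le_mul_of_nonneg_left hx (Real.exp_pos _).le
  have h4 : Real.exp (q * s) * ‖x‖ ≤ ‖x‖ ^ 2 := by
    rw [sq]; exact mul_le_mul_of_nonneg_right hx hx0.le
  have h5 : (Real.exp (q * s) / 2) * ‖x‖ ≤ ‖T‖ * ‖x‖ := by linarith
  exact le_of_mul_le_mul_right h5 hx0

end LD

namespace LD
open Polynomial

lemma root_bound {s p K : ℝ} {x y : ℂ} (hK : 0 < K) (hp : 0 ≤ p) (hpK : p ≤ K ^ 2)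
    (hs : |s| ≤ K + p / K) (h1 : x + y = s) (h2 : x * y = p) : ‖x‖ ≤ K := by
  have r1 := congrArg Complex.re h1
  have r2 := congrArg Complex.im h1
  have r3 := congrArg Complex.re h2
  have r4 := congrArg Complex.im h2
  simp at r1 r2 r3 r4
  by_cases hx : x.im = 0
  · have hy : y.im = 0 := by linarith
    rw [hx, hy] at r3
    simp at r3
    have hn : ‖x‖ = |x.re| := by
      have : x = (x.re : ℂ) := Complex.ext (by simp) (by simp [hx])
      rw [this]; simp
    rw [hn]
    by_contra hc
    push Not at hc
    set X := |x.re| with hX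
    have hX0 : 0 < X := hK.trans hc
    have hs2 : |s| = X + p / X := by
      rw [← r1]
      rcases le_or_gt 0 x.re with h | h
      · have hxp : 0 < x.re := by rw [hX, abs_of_nonneg h] at hX0; exact hX0
        have hyp : 0 ≤ y.re := by
          by_contra hn; push Not at hn; nlinarith
        rw [abs_of_nonneg (by linarith), hX, abs_of_nonneg h, ← r3]
        field_simp
      · have hyp : y.re ≤ 0 := by
          by_contra hn; push Not at hn; nlinarith
        rw [abs_of_nonpos (by linarith), hX, abs_of_neg h, ← r3]
        have hne : x.re ≠ 0 := h.ne
        have : x.re * y.re / -x.re = - y.re := by rw [div_neg, mul_div_cancel_left₀ _ hne]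
        rw [this]; ring
    rw [hs2] at hs
    have h3 : 0 < (X - K) * (1 - p / (X * K)) := by
      apply mul_pos (by linarith)
      rw [sub_pos, div_lt_one (by positivity)]
      nlinarith
    have h4 : (X - K) * (1 - p / (X * K)) = X + p / X - (K + p / K) := by
      field_simp; ring
    linarith
  · have hy : y.im = - x.im := by linarith
    rw [hy] at r4
    have h5 : y.re = x.re := by
      have : x.im * (y.re - x.re) = 0 := by linarith
      rcases mul_eq_zero.1 this with h | h
      · exact absurd h hx
      · linarith
    rw [hy, h5] at r3
    have h6 : ‖x‖ ^ 2 ≤ K ^ 2 := by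
      rw [← Complex.normSq_eq_norm_sq, Complex.normSq_apply]; linarith
    exact (pow_le_pow_iff_left₀ (norm_nonneg _) hK.le two_ne_zero).1 h6

lemma exists_roots (s p : ℂ) : ∃ x y : ℂ, x + y = s ∧ x * y = p := by
  obtain ⟨t, ht⟩ := IsAlgClosed.exists_pow_nat_eq (s ^ 2 - 4 * p) (n := 2) (by norm_num)
  exact ⟨(s + t) / 2, (s - t) / 2, by ring, by linear_combination (-1 / 4) * ht⟩

lemma trace_pow (A : Matrix (Fin 2) (Fin 2) ℂ) {x y : ℂ} (h1 : x + y = A.trace) (h2 : x * y = A.det)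
    (n : ℕ) : (A ^ n).trace = x ^ n + y ^ n ∧ (A ^ (n + 1)).trace = x ^ (n + 1) + y ^ (n + 1) := by
  have hCH : A * A = A.trace • A - A.det • (1 : Matrix (Fin 2) (Fin 2) ℂ) := by
    ext i j
    fin_cases i <;> fin_cases j <;>
      simp [Matrix.mul_apply, Fin.sum_univ_two, Matrix.trace_fin_two, Matrix.det_fin_two] <;> ring
  induction n with
  | zero => simp [h1, Matrix.trace_fin_two]; norm_num
  | succ n ih =>
    refine ⟨ih.2, ?_⟩
    have : A ^ (n + 1 + 1) = A.trace • A ^ (n + 1) - A.det • A ^ n := by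
      rw [pow_succ, pow_succ, mul_assoc, hCH, mul_sub, mul_smul_comm, mul_smul_comm, mul_one]
    rw [this, Matrix.trace_sub, Matrix.trace_smul, Matrix.trace_smul, ih.1, ih.2, ← h1, ← h2]
    simp only [smul_eq_mul]; ring

lemma trace_top (α lam E : ℝ) {K : ℝ} (hK : 0 < K) (hpK : α ^ 2 / 4 ≤ K ^ 2)
    (hs : |α * E + 2 * lam| / 2 ≤ K + (α ^ 2 / 4) / K) (n : ℕ) :
    ‖(Mz α lam E 0 ^ n).trace‖ ≤ 2 * K ^ n := by
  obtain ⟨x, y, h1, h2⟩ := exists_roots (Mz α lam E 0).trace (Mz α lam E 0).det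
  rw [(trace_pow _ h1 h2 n).1]
  have e1 : (Mz α lam E 0).trace = ((-(α * E + 2 * lam) / 2 : ℝ) : ℂ) := by
    simp [Mz, Matrix.trace_fin_two]; ring
  have e2 : (Mz α lam E 0).det = ((α ^ 2 / 4 : ℝ) : ℂ) := by
    rw [det_Mz]; simp [Cz]; ring
  rw [e1] at h1
  rw [e2] at h2
  have hs' : |-(α * E + 2 * lam) / 2| ≤ K + (α ^ 2 / 4) / K := by
    rw [neg_div, abs_neg, abs_div, abs_two]; exact hs
  have b1 := root_bound hK (by positivity) hpK hs' h1 h2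
  have b2 := root_bound hK (by positivity) hpK hs' (by rw [add_comm]; exact h1) (by rw [mul_comm]; exact h2)
  refine (norm_add_le _ _).trans ?_
  rw [norm_pow, norm_pow]
  have := pow_le_pow_left₀ (norm_nonneg _) b1 n
  have := pow_le_pow_left₀ (norm_nonneg _) b2 n
  linarith

lemma ee_root {p : ℤ} {q : ℕ} (hq : 0 < q) : ee (p / q) ^ q = 1 := by
  have hqR : (q : ℝ) ≠ 0 := by positivity
  rw [← ee_nat_mul, mul_div_cancel₀ _ hqR, ee_int]

lemma ee_pow_eq_one {p : ℤ} {q : ℕ} (hq : 0 < q) (hpq : IsCoprime p (q : ℤ)) {k : ℕ}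
    (h : ee (p / q) ^ k = 1) : q ∣ k := by
  have hqR : (q : ℝ) ≠ 0 := by positivity
  rw [← ee_nat_mul, ← ee_zero] at h
  obtain ⟨m, hm⟩ := ee_eq_iff h
  rw [zero_add] at hm
  have h1 : (k : ℤ) * p = m * q ∨ (k : ℤ) * p = - m * q := by
    field_simp at hm
    first
      | (left; have : (k : ℝ) * p = m * q := by linarith
         exact_mod_cast this)
      | (right; have : (k : ℝ) * p = -m * q := by linarith
         exact_mod_cast this)
  have h2 : (q : ℤ) ∣ k * p := by
    rcases h1 with h1 | h1 <;> rw [h1] <;> exact Dvd.intro_left _ rfl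
  exact_mod_cast hpq.symm.dvd_of_dvd_mul_right h2

lemma trace_rot {α : ℝ} (hα : α ∈ Set.Ioo (-1 : ℝ) 1) (lam E : ℝ) {w : ℂ} {q : ℕ} (hq : w ^ q = 1)
    {z : ℂ} (hz : ‖z‖ = 1) : (Pz α lam E w q (w * z)).trace = (Pz α lam E w q z).trace := by
  have h := Pz_rot α lam E w q z
  rw [hq, one_mul] at h
  have hu : IsUnit (Mz α lam E z).det := by
    rw [det_Mz]; exact (pow_ne_zero 2 (Cz_ne hα hz)).isUnit
  have h1 : Pz α lam E w q (w * z) = Mz α lam E z * Pz α lam E w q z * (Mz α lam E z)⁻¹ := by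
    rw [← h, mul_assoc, Matrix.mul_nonsing_inv _ hu, mul_one]
  rw [h1, Matrix.trace_mul_comm, ← mul_assoc, Matrix.nonsing_inv_mul _ hu, one_mul]

lemma trace_form {α : ℝ} (hα : α ∈ Set.Ioo (-1 : ℝ) 1) (lam E : ℝ) {p : ℤ} {q : ℕ} (hq : 0 < q)
    (hpq : IsCoprime p (q : ℤ)) : ∃ t0 t1 t2 : ℂ,
      ‖t0‖ = ‖(Mz α lam E 0 ^ q).trace‖ ∧ ‖t2‖ = ‖(Mz α lam E 0 ^ q).trace‖ ∧
      ∀ z : ℂ, (Pz α lam E (ee (p / q)) q z).trace = t0 + t1 * z ^ q + t2 * z ^ (2 * q) := by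
  set w := ee (p / q) with hw
  set T : ℂ[X] := PP α lam E w q 0 0 + PP α lam E w q 1 1 with hT
  have hev : ∀ z, T.eval z = (Pz α lam E w q z).trace := by
    intro z; rw [hT, eval_add, eval_PP, eval_PP, Matrix.trace_fin_two]
  have hdeg : T.natDegree ≤ 2 * q :=
    (natDegree_add_le _ _).trans (max_le (natDegree_PP ..) (natDegree_PP ..))
  have hcomp : T.comp (C w * X) = T := by
    apply Polynomial.eq_of_infinite_eval_eq
    have hinf : (Metric.sphere (0 : ℂ) 1).Infinite := by
      apply Set.infinite_of_injective_forall_mem (f := fun n : ℕ => ee (1 / (n + 2)))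
      · intro m n hmn
        obtain ⟨k, hk⟩ := ee_eq_iff hmn
        have a1 : (0 : ℝ) < 1 / ((m : ℝ) + 2) := by positivity
        have a2 : (0 : ℝ) < 1 / ((n : ℝ) + 2) := by positivity
        have a3 : 1 / ((m : ℝ) + 2) < 1 := by rw [div_lt_one (by positivity)]; linarith [Nat.cast_nonneg (α := ℝ) m]
        have a4 : 1 / ((n : ℝ) + 2) < 1 := by rw [div_lt_one (by positivity)]; linarith [Nat.cast_nonneg (α := ℝ) n]
        have k1 : (k : ℝ) < 1 := by linarith
        have k2 : (-1 : ℝ) < k := by linarith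
        have k1' : k < 1 := by exact_mod_cast k1
        have k2' : -1 < k := by exact_mod_cast k2
        have k0 : k = 0 := by omega
        rw [k0] at hk
        have : 1 / ((m : ℝ) + 2) = 1 / ((n : ℝ) + 2) := by simpa using hk
        rw [div_eq_div_iff (by positivity) (by positivity)] at this
        have : (m : ℝ) = n := by linarith
        exact_mod_cast this
      · intro n; simp [norm_ee]
    refine hinf.mono ?_
    intro z hz
    have hz1 : ‖z‖ = 1 := by simpa using hz
    simp only [Set.mem_ofPred_eq, eval_comp, eval_mul, eval_C, eval_X]
    rw [hev, hev, trace_rot hα lam E (ee_root hq) hz1]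
  have hcoef : ∀ k, ¬ q ∣ k → T.coeff k = 0 := by
    intro k hk
    have h1 := congrArg (fun f => f.coeff k) hcomp
    simp only [comp_C_mul_X_coeff] at h1
    have h2 : T.coeff k * (w ^ k - 1) = 0 := by rw [mul_sub, h1, mul_one, sub_self]
    rcases mul_eq_zero.1 h2 with h | h
    · exact h
    · exact absurd (ee_pow_eq_one hq hpq (sub_eq_zero.1 h)) hk
  refine ⟨T.coeff 0, T.coeff q, T.coeff (2 * q), ?_, ?_, ?_⟩
  · rw [coeff_zero_eq_eval_zero, hev, Pz_at_zero]
  · obtain ⟨c, hc, hcc⟩ := coeff_top_PP α lam E w (norm_ee _) q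
    rw [hT, coeff_add, hcc, hcc, ← mul_add, norm_mul, hc, one_mul, Matrix.trace_fin_two]
  · intro z
    rw [← hev, eval_eq_sum_range' (n := 2 * q + 1) (by omega)]
    have hsub : ({0, q, 2 * q} : Finset ℕ) ⊆ Finset.range (2 * q + 1) := by
      intro k hk
      simp only [Finset.mem_insert, Finset.mem_singleton] at hk
      rw [Finset.mem_range]; omega
    rw [← Finset.sum_subset hsub]
    · rw [Finset.sum_insert (by simp; omega), Finset.sum_insert (by simp; omega), Finset.sum_singleton]
      simp; ring
    · intro k hk hk2
      rw [hcoef k, zero_mul]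
      rintro ⟨c, rfl⟩
      simp only [Finset.mem_range] at hk
      have hc : c < 3 := by
        by_contra hc
        push Not at hc
        have := Nat.mul_le_mul_left q hc
        omega
      interval_cases c <;> simp [mul_comm] at hk2

lemma trace_unit {α : ℝ} (hα : α ∈ Set.Ioo (-1 : ℝ) 1) (lam E : ℝ) {p : ℤ} {q : ℕ} (hq : 0 < q)
    (hpq : IsCoprime p (q : ℤ)) {K r S : ℝ} (hr : 1 ≤ r) (hK : 0 < K) (hpK : α ^ 2 / 4 ≤ K ^ 2)
    (hs : |α * E + 2 * lam| / 2 ≤ K + (α ^ 2 / 4) / K)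
    (h : ∀ z : ℂ, ‖z‖ = r → S ≤ ‖(Pz α lam E (ee (p / q)) q z).trace‖) (z : ℂ) (hz : ‖z‖ = 1) :
    S ≤ (‖(Pz α lam E (ee (p / q)) q z).trace‖ + 8 * K ^ q * r ^ q) * r ^ q := by
  obtain ⟨t0, t1, t2, h0, h2, hf⟩ := trace_form hα lam E hq hpq
  have ht := trace_top α lam E hK hpK hs q
  rw [← h0] at ht
  have ht2 := trace_top α lam E hK hpK hs q
  rw [← h2] at ht2
  have hrn : ‖(r : ℂ)‖ = r := by simp; linarith
  have h3 := h r hrn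
  rw [hf] at h3
  have h4 : S ≤ ‖t0‖ + ‖t1‖ * r ^ q + ‖t2‖ * r ^ (2 * q) := by
    refine h3.trans ((norm_add_le _ _).trans (add_le_add ((norm_add_le _ _).trans ?_) ?_))
    · rw [norm_mul, norm_pow, hrn]
    · rw [norm_mul, norm_pow, hrn]
  have h5 : ‖t1‖ ≤ ‖(Pz α lam E (ee (p / q)) q z).trace‖ + ‖t0‖ + ‖t2‖ := by
    have e : t1 * z ^ q = (Pz α lam E (ee (p / q)) q z).trace - t0 - t2 * z ^ (2 * q) := by
      rw [hf]; ring
    have e2 : ‖t1‖ = ‖t1 * z ^ q‖ := by rw [norm_mul, norm_pow, hz]; simp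
    rw [e2, e]
    refine (norm_sub_le _ _).trans (add_le_add (norm_sub_le _ _) ?_)
    rw [norm_mul, norm_pow, hz]; simp
  have hR : 1 ≤ r ^ q := one_le_pow₀ hr
  have hKq : 0 < K ^ q := by positivity
  rw [pow_mul' r 2 q] at h4
  set R := r ^ q
  set τ := ‖(Pz α lam E (ee (p / q)) q z).trace‖
  have hτ : 0 ≤ τ := norm_nonneg _
  have hKR : K ^ q * R ≤ K ^ q * (R * R) :=
    mul_le_mul_of_nonneg_left (le_mul_of_one_le_left (by linarith) hR) hKq.le
  have hKR1 : K ^ q * 1 ≤ K ^ q * R := mul_le_mul_of_nonneg_left hR hKq.le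
  have a1 : ‖t1‖ * R ≤ (τ + 4 * K ^ q) * R := mul_le_mul_of_nonneg_right (by linarith) (by linarith)
  have a2 : ‖t2‖ * R ^ 2 ≤ 2 * K ^ q * R ^ 2 := mul_le_mul_of_nonneg_right ht2 (by positivity)
  nlinarith

end LD

namespace LD

set_option maxHeartbeats 1000000 in
lemma gap_trace {α : ℝ} (hα : α ∈ Set.Ioo (-1 : ℝ) 1) (lam E : ℝ) {b : ℝ} (hb : Irrational b)
    (hL : 0 < lyap (potV α lam) b E) (hβ : |α * E + 2 * lam| ≤ 2) :
    ∃ η > 0, ∃ Q : ℕ, ∀ E' : ℝ, |E' - E| < η → ∀ (p : ℤ) (q : ℕ), Q ≤ q → 0 < q → IsCoprime p (q : ℤ) →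
      ‖ee (p / q) - ee b‖ < η → ∀ x : ℝ, 2 < ‖(tProd (potV α lam) (p / q) q x E').trace‖ := by
  set L := lyap (potV α lam) b E with hLdef
  set κ := kap α with hκ
  have hκ0 : 0 < κ := kap_pos α
  set l := Real.log κ with hl
  set δ := L / 40 with hδdef
  have hδ : 0 < δ := by positivity
  have hL40 : L = 40 * δ := by rw [hδdef]; ring
  obtain ⟨τ0, hτ0, n0, hup⟩ := upper hα lam E hb hδ
  obtain ⟨N, hN⟩ := exists_nat_gt (1 / δ)
  have hbig : ∀ q : ℕ, N ≤ q → 1 < q * δ := by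
    intro q hq
    rw [div_lt_iff₀ hδ] at hN
    have : (N : ℝ) ≤ q := by exact_mod_cast hq
    exact hN.trans_le (mul_le_mul_of_nonneg_right this hδ.le)
  obtain ⟨n, hn, r, hr1, hrτ, hlow⟩ := lower hα lam E hb hδ (lt_min hτ0 hδ) (max n0 (max N 1))
  have hn0 : n0 ≤ n := le_of_max_le_left hn
  have hnN : N ≤ n := (le_max_left _ _).trans (le_of_max_le_right hn)
  have hn1 : 0 < n := (le_max_right _ _).trans (le_of_max_le_right hn)
  have hnR : (0 : ℝ) < n := by exact_mod_cast hn1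
  have hnδ : 1 < n * δ := hbig n hnN
  have hrτ0 : r ≤ Real.exp τ0 := hrτ.le.trans (Real.exp_le_exp.2 (min_le_left _ _))
  have hrδ : r ≤ Real.exp δ := hrτ.le.trans (Real.exp_le_exp.2 (min_le_right _ _))
  have hlog2 : Real.log 2 < 1 := by linarith [Real.log_two_lt_d9]
  have cP : ∀ m : ℕ, Continuous fun y : ℝ × ℂ × ℂ => nm (Pz α lam y.1 y.2.1 m y.2.2) :=
    fun m => nm_continuous.comp (Pz_continuous α lam m)
  have cD : Continuous fun y : ℝ × ℂ × ℂ => ‖Dz α y.2.1 n y.2.2‖ :=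
    ((Dz_continuous α n).comp (continuous_snd)).norm
  obtain ⟨η1, hη1, s1⟩ := stab_lt (f := fun _ => Real.exp (n * (L + l - 2 * δ))) continuous_const (cP n)
    E (ee b) r (fun z hz => lt_of_lt_of_le (Real.exp_lt_exp.2 (by
      apply mul_lt_mul_of_pos_left _ hnR; linarith)) (hlow z hz).1)
  obtain ⟨η2, hη2, s2⟩ := stab_lt (f := fun _ => Real.exp ((2 * n : ℕ) * (L + l - 2 * δ))) continuous_const
    (cP (2 * n)) E (ee b) r (fun z hz => lt_of_lt_of_le (Real.exp_lt_exp.2 (by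
      apply mul_lt_mul_of_pos_left _ (by push_cast; positivity); linarith)) (hlow z hz).2)
  obtain ⟨η3, hη3, s3⟩ := stab_lt (g := fun _ => Real.exp (n * (L + l + 2 * δ))) (cP n) continuous_const
    E (ee b) r (fun z hz => lt_of_le_of_lt (hup n hn0 z (by rw [hz]; exact hr1.le) (by rw [hz]; exact hrτ0)).1
      (Real.exp_lt_exp.2 (by apply mul_lt_mul_of_pos_left _ hnR; linarith)))
  obtain ⟨η4, hη4, s4⟩ := stab_lt (g := fun _ => Real.exp (n * (l + 2 * δ))) cD continuous_const
    E (ee b) r (fun z hz => lt_of_le_of_lt (hup n hn0 z (by rw [hz]; exact hr1.le) (by rw [hz]; exact hrτ0)).2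
      (Real.exp_lt_exp.2 (by apply mul_lt_mul_of_pos_left _ hnR; linarith)))
  obtain ⟨η5, hη5, s5⟩ := stab_lt (g := fun _ => Real.exp (n * (l + 2 * δ))) cD continuous_const
    E (ee b) 1 (fun z hz => lt_of_le_of_lt (hup n hn0 z (by rw [hz]) (by rw [hz]; exact Real.one_le_exp hτ0.le)).2
      (Real.exp_lt_exp.2 (by apply mul_lt_mul_of_pos_left _ hnR; linarith)))
  set K := κ * Real.exp δ with hK
  have hK0 : 0 < K := by positivity
  have hκ12 : 1 / 2 ≤ κ := by rw [hκ, kap]; linarith [Real.sqrt_nonneg (1 - α ^ 2)]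
  have hα2 : α ^ 2 < 1 := by nlinarith [hα.1, hα.2]
  have hκK : κ < K := by
    rw [hK]; exact lt_mul_of_one_lt_right hκ0 (Real.one_lt_exp_iff.2 hδ)
  have hpK : α ^ 2 / 4 ≤ K ^ 2 := by nlinarith
  have hK1 : 1 < K + (α ^ 2 / 4) / K := by
    have h1 := kap_eq hα
    rw [← hκ] at h1
    have h2 : 0 < (K - κ) * (1 - (α ^ 2 / 4) / (K * κ)) := by
      apply mul_pos (by linarith)
      rw [sub_pos, div_lt_one (by positivity)]
      nlinarith
    have h3 : (K - κ) * (1 - (α ^ 2 / 4) / (K * κ)) = K + (α ^ 2 / 4) / K - (κ + α ^ 2 / (4 * κ)) := by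
      field_simp; ring
    linarith
  set η6 := 2 * (K + (α ^ 2 / 4) / K - 1) with hη6
  have hposEta : 0 < η6 := by rw [hη6]; linarith
  refine ⟨min (min η1 η2) (min (min η3 η4) (min η5 η6)), by positivity, N, ?_⟩
  intro E' hE' p q hNq hq hpq hw x
  simp only [lt_min_iff] at hE' hw
  obtain ⟨⟨e1, e2⟩, ⟨e3, e4⟩, e5, e6⟩ := hE'
  obtain ⟨⟨w1, w2⟩, ⟨w3, w4⟩, w5, -⟩ := hw
  have hwn : ‖ee (p / q)‖ = 1 := norm_ee _
  have hqδ : 1 < q * δ := hbig q hNq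
  have hwq : ee (p / q) ^ q = 1 := ee_root hq
  have hgr : ∀ z : ℂ, ‖z‖ = r → ∀ m : ℕ, Real.exp (n * (L + l - 7 * δ)) ^ m ≤
      nm (Pz α lam E' (ee (p / q)) (m * n) z) := by
    intro z hz m
    refine (growth α lam E' hwn (n := n) (r := r) (A := Real.exp (n * (L + l - 2 * δ)))
      (B := Real.exp ((2 * n : ℕ) * (L + l - 2 * δ))) (U := Real.exp (n * (L + l + 2 * δ)))
      (D := Real.exp (n * (l + 2 * δ))) (ρ := Real.exp (n * (L + l - 7 * δ))) ?_ (Real.exp_pos _)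
      (Real.exp_pos _).le ?_ (Real.exp_pos _) ?_ (fun z hz => (s1 E' e1 _ w1 z hz).le)
      (fun z hz => (s2 E' e2 _ w2 z hz).le) (fun z hz => (s3 E' e3 _ w3 z hz).le)
      (fun z hz => (s4 E' e4 _ w4 z hz).le) z hz m).1
    · apply Real.exp_le_exp.2
      apply mul_le_mul_of_nonneg_left _ hnR.le; linarith
    · apply Real.exp_le_exp.2
      apply mul_le_mul_of_nonneg_left _ hnR.le; linarith
    · have h2 : Real.exp (Real.log 2) = 2 := Real.exp_log (by norm_num)
      rw [← h2, ← Real.exp_add, ← Real.exp_add]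
      apply Real.exp_le_exp.2
      push_cast
      nlinarith
  have htr := trace_lower α lam E' hwn hn1 hwq hgr (fun z hz => (s4 E' e4 _ w4 z hz).le)
    (by rw [hL40]; nlinarith)
  have hβ' : |α * E' + 2 * lam| / 2 ≤ K + (α ^ 2 / 4) / K := by
    have h1 : α * E' + 2 * lam = (α * E + 2 * lam) + α * (E' - E) := by ring
    have h2 : |α * (E' - E)| ≤ |E' - E| := by
      rw [abs_mul]
      exact mul_le_of_le_one_left (abs_nonneg _) (abs_le.2 ⟨hα.1.le, hα.2.le⟩)
    have h3 := abs_add_le (α * E + 2 * lam) (α * (E' - E))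
    rw [← h1] at h3
    rw [hη6] at e6
    linarith
  have hun := trace_unit hα lam E' hq hpq hr1.le hK0 hpK hβ' htr (ee x) (norm_ee x)
  have hDq := Dz_per_bound α hwn hn1 hwq (fun z hz => (s5 E' e5 _ w5 z hz).le) (ee x) (norm_ee x)
  rw [Pz_ee hα, Matrix.trace_smul, norm_smul] at hun
  set t := ‖(tProd (potV α lam) (p / q) q x E').trace‖ with ht
  by_contra hcon
  push Not at hcon
  have hrq : r ^ q ≤ Real.exp (q * δ) := by
    rw [Real.exp_nat_mul]; exact pow_le_pow_left₀ (by linarith) hrδ q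
  have hKq : K ^ q = Real.exp (q * (l + δ)) := by
    rw [Real.exp_nat_mul, Real.exp_add, hl, Real.exp_log hκ0]
  rw [hKq] at hun
  have h1 : Real.exp (q * (l + δ)) * r ^ q ≤ Real.exp (q * (l + 2 * δ)) := by
    calc _ ≤ Real.exp (q * (l + δ)) * Real.exp (q * δ) := by gcongr
      _ = _ := by rw [← Real.exp_add]; congr 1; ring
  have h2 : ‖Dz α (ee (p / q)) q (ee x)‖ * t ≤ Real.exp (q * (l + 2 * δ)) * 2 :=
    mul_le_mul hDq hcon (norm_nonneg _) (Real.exp_pos _).le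
  have hrq0 : 0 < r ^ q := by positivity
  have h3 : Real.exp (q * (L + l - 7 * δ)) / 2 ≤ 10 * Real.exp (q * (l + 3 * δ)) := by
    calc _ ≤ _ := hun
      _ ≤ (10 * Real.exp (q * (l + 2 * δ))) * Real.exp (q * δ) := by
        apply mul_le_mul _ hrq hrq0.le (by positivity)
        linarith
      _ = 10 * (Real.exp (q * (l + 2 * δ)) * Real.exp (q * δ)) := by ring
      _ = _ := by rw [← Real.exp_add]; congr 2; ring
  have h4 : Real.exp (q * (L + l - 7 * δ)) = Real.exp (30 * (q * δ)) * Real.exp (q * (l + 3 * δ)) := by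
    rw [← Real.exp_add]; congr 1; rw [hL40]; ring
  rw [h4] at h3
  have h5 : 31 < Real.exp (30 * (q * δ)) := by
    have := Real.add_one_le_exp (30 * (q * δ)); linarith
  have h6 := Real.exp_pos (q * (l + 3 * δ))
  nlinarith

end LD

namespace LD

/-- A cyclic Schrodinger operator on a finite set with a permutation. -/
noncomputable def cyc {ι : Type} [Fintype ι] (σ : Equiv.Perm ι) (W : ι → ℝ) :
    EuclideanSpace ℂ ι →ₗ[ℂ] EuclideanSpace ℂ ι where
  toFun v := WithLp.toLp 2 (fun i => v (σ i) + v (σ.symm i) + (W i : ℂ) * v i)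
  map_add' u v := by ext i; simp; ring
  map_smul' c v := by ext i; simp; ring

lemma cyc_apply {ι : Type} [Fintype ι] (σ : Equiv.Perm ι) (W : ι → ℝ) (v : EuclideanSpace ℂ ι) (i : ι) :
    cyc σ W v i = v (σ i) + v (σ.symm i) + (W i : ℂ) * v i := rfl

lemma cyc_symm {ι : Type} [Fintype ι] (σ : Equiv.Perm ι) (W : ι → ℝ) : (cyc σ W).IsSymmetric := by
  intro u v
  simp only [PiLp.inner_apply, cyc_apply, RCLike.inner_apply, map_add, map_mul, Complex.conj_ofReal,
    mul_add, add_mul, Finset.sum_add_distrib]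
  have h1 : ∑ i, v i * (starRingEnd ℂ) (u (σ i)) = ∑ i, v (σ.symm i) * (starRingEnd ℂ) (u i) := by
    rw [← Equiv.sum_comp σ (fun i => v (σ.symm i) * (starRingEnd ℂ) (u i))]
    simp
  have h2 : ∑ i, v i * (starRingEnd ℂ) (u (σ.symm i)) = ∑ i, v (σ i) * (starRingEnd ℂ) (u i) := by
    rw [← Equiv.sum_comp σ.symm (fun i => v (σ i) * (starRingEnd ℂ) (u i))]
    simp
  rw [h1, h2]
  have h3 : ∑ i, v i * ((W i : ℂ) * (starRingEnd ℂ) (u i)) = ∑ i, (W i : ℂ) * v i * (starRingEnd ℂ) (u i) :=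
    Finset.sum_congr rfl fun i _ => by ring
  rw [h3]; ring

lemma sym_gap {V : Type} [NormedAddCommGroup V] [InnerProductSpace ℂ V] [FiniteDimensional ℂ V]
    {T : V →ₗ[ℂ] V} (hT : T.IsSymmetric) (E τ : ℝ) (hτ : 0 ≤ τ)
    (h : ∀ E' : ℝ, |E' - E| < τ → ∀ v, T v = (E' : ℂ) • v → v = 0) (v : V) :
    τ ^ 2 * ‖v‖ ^ 2 ≤ ‖T v - (E : ℂ) • v‖ ^ 2 := by
  have hn : Module.finrank ℂ V = Module.finrank ℂ V := rfl
  set B := hT.eigenvectorBasis hn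
  rw [← B.repr.norm_map v, ← B.repr.norm_map (T v - (E : ℂ) • v), EuclideanSpace.norm_sq_eq,
    EuclideanSpace.norm_sq_eq, Finset.mul_sum]
  refine Finset.sum_le_sum fun i _ => ?_
  have h1 : B.repr (T v - (E : ℂ) • v) i = ((hT.eigenvalues hn i - E : ℝ) : ℂ) * B.repr v i := by
    rw [map_sub, map_smul]
    simp only [PiLp.sub_apply, PiLp.smul_apply, smul_eq_mul]
    rw [hT.eigenvectorBasis_apply_self_apply hn v i]
    change ((hT.eigenvalues hn i : ℝ) : ℂ) * B.repr v i - E * B.repr v i = _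
    push_cast; ring
  rw [h1, norm_mul, mul_pow]
  apply mul_le_mul_of_nonneg_right _ (by positivity)
  rw [Complex.norm_real, Real.norm_eq_abs]
  apply pow_le_pow_left₀ hτ
  by_contra hc
  push Not at hc
  have h2 := h _ hc (B i) (hT.apply_eigenvectorBasis hn i)
  have h3 := B.norm_eq_one i
  rw [h2] at h3; simp at h3

lemma rot_pow {m : ℕ} (n : ℕ) (hn : n < m + 1) :
    ((finRotate (m + 1)) ^ n) 0 = ⟨n, hn⟩ := by
  induction n with
  | zero => rfl
  | succ n ih =>
    rw [pow_succ', Equiv.Perm.mul_apply, ih (by omega), finRotate_of_lt (by omega)]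

lemma rot_pow_last (m : ℕ) : ((finRotate (m + 1)) ^ (m + 1)) 0 = 0 := by
  rw [pow_succ', Equiv.Perm.mul_apply, rot_pow m (by omega), finRotate_last']; rfl

lemma cyc_no_eig (V : ℝ → ℝ) (a x E : ℝ) (m : ℕ)
    (htr : 2 < ‖(tProd V a (m + 1) x E).trace‖) (v : EuclideanSpace ℂ (Fin (m + 1)))
    (hv : cyc (finRotate (m + 1)) (fun i => V (x + (i : ℕ) * a)) v = (E : ℂ) • v) : v = 0 := by
  set σ := finRotate (m + 1) with hσ
  have hrec : ∀ i, v (σ i) = ((E : ℂ) - V (x + (i : ℕ) * a)) * v i - v (σ.symm i) := by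
    intro i
    have h1 : cyc σ (fun i => V (x + (i : ℕ) * a)) v i = ((E : ℂ) • v) i := by rw [hv]
    rw [cyc_apply] at h1
    simp only [PiLp.smul_apply, smul_eq_mul] at h1
    linear_combination h1
  set c : Fin 2 → ℂ := ![v 0, v (σ.symm 0)] with hc
  have hprod : ∀ n, n ≤ m + 1 → (tProd V a n x E).mulVec c = ![v ((σ ^ n) 0), v (σ.symm ((σ ^ n) 0))] := by
    intro n
    induction n with
    | zero => intro _; rw [tProd_zero, Matrix.one_mulVec]; simp [hc]
    | succ n ih =>
      intro hn
      rw [tProd_succ, ← Matrix.mulVec_mulVec, ih (by omega), pow_succ', Equiv.Perm.mul_apply,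
        Equiv.symm_apply_apply, hrec]
      have h1 : (((σ ^ n) 0 : Fin (m + 1)) : ℕ) = n := by rw [hσ, rot_pow n (by omega)]
      ext i
      fin_cases i <;> simp [tMat, h1, Matrix.mulVec, dotProduct, Fin.sum_univ_two]
      ring
  have hfix : (tProd V a (m + 1) x E).mulVec c = c := by
    rw [hprod _ le_rfl, hσ, rot_pow_last]
  have hc0 : c = 0 := by
    by_contra hne
    have h1 : (tProd V a (m + 1) x E - 1).det = 0 := by
      apply Matrix.exists_mulVec_eq_zero_iff.1
      exact ⟨c, hne, by rw [Matrix.sub_mulVec, hfix, Matrix.one_mulVec, sub_self]⟩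
    have h2 := det_tProd V a (m + 1) x E
    rw [Matrix.det_fin_two] at h1 h2
    simp at h1
    have h3 : (tProd V a (m + 1) x E).trace = 2 := by
      rw [Matrix.trace_fin_two]; linear_combination h2 - h1
    rw [h3] at htr; simp at htr
  ext i
  have h1 := hprod i i.2.le
  rw [hc0, Matrix.mulVec_zero] at h1
  have h2 := congrFun h1 0
  simp only [Pi.zero_apply, Matrix.cons_val_zero] at h2
  rw [hσ, rot_pow _ i.2] at h2
  simpa using h2.symm

lemma window (V : ℝ → ℝ) (a x E τ : ℝ) (hτ : 0 ≤ τ) (m : ℕ)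
    (htr : ∀ E' : ℝ, |E' - E| < τ → 2 < ‖(tProd V a (m + 1) x E').trace‖)
    (v : EuclideanSpace ℂ (Fin (m + 1))) :
    τ ^ 2 * ∑ i, ‖v i‖ ^ 2 ≤ ∑ i : Fin (m + 1), ‖v (finRotate (m + 1) i) + v ((finRotate (m + 1)).symm i) +
      (V (x + (i : ℕ) * a) : ℂ) * v i - E * v i‖ ^ 2 := by
  have := sym_gap (cyc_symm (finRotate (m + 1)) (fun i => V (x + (i : ℕ) * a))) E τ hτ
    (fun E' hE' v hv => cyc_no_eig V a x E' m (htr E' hE') v hv) v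
  rw [EuclideanSpace.norm_sq_eq, EuclideanSpace.norm_sq_eq] at this
  exact this

end LD

namespace LD


lemma not_spec (H : (lp (fun _ : ℤ => ℂ) 2) →L[ℂ] (lp (fun _ : ℤ => ℂ) 2)) (hsym : ∀ u v : (lp (fun _ : ℤ => ℂ) 2), inner ℂ (H u) v = inner ℂ u (H v)) (E c : ℝ) (hc : 0 < c)
    (h : ∀ u : (lp (fun _ : ℤ => ℂ) 2), c * ‖u‖ ≤ ‖H u - (E : ℂ) • u‖) : (E : ℂ) ∉ spectrum ℂ H := by
  rw [spectrum.notMem_iff]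
  set T : (lp (fun _ : ℤ => ℂ) 2) →L[ℂ] (lp (fun _ : ℤ => ℂ) 2) := algebraMap ℂ ((lp (fun _ : ℤ => ℂ) 2) →L[ℂ] (lp (fun _ : ℤ => ℂ) 2)) E - H with hT
  have hTa : ∀ u, T u = (E : ℂ) • u - H u := fun u => by
    rw [hT, Algebra.algebraMap_eq_smul_one]; rfl
  have hb : ∀ u, c * ‖u‖ ≤ ‖T u‖ := fun u => by rw [hTa, norm_sub_rev]; exact h u
  have hTsym : ∀ u v, inner ℂ (T u) v = inner ℂ u (T v) := fun u v => by
    rw [hTa, hTa, inner_sub_left, inner_sub_right, hsym, inner_smul_left, inner_smul_right,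
      Complex.conj_ofReal]
  have hanti : AntilipschitzWith (Real.toNNReal c⁻¹) T := by
    apply ContinuousLinearMap.antilipschitz_of_bound
    intro u
    rw [Real.coe_toNNReal _ (by positivity), ← div_eq_inv_mul, le_div_iff₀ hc, mul_comm]
    exact hb u
  have hclosed : IsClosed (Set.range T) := hanti.isClosed_range T.uniformContinuous
  rw [ContinuousLinearMap.isUnit_iff_bijective]
  refine ⟨hanti.injective, ?_⟩
  have hcl : IsClosed ((LinearMap.range T.toLinearMap : Submodule ℂ (lp (fun _ : ℤ => ℂ) 2)) : Set (lp (fun _ : ℤ => ℂ) 2)) := by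
    rw [LinearMap.coe_range]; exact hclosed
  have hcomp : CompleteSpace (LinearMap.range T.toLinearMap : Submodule ℂ (lp (fun _ : ℤ => ℂ) 2)) := hcl.completeSpace_coe
  have hort : (LinearMap.range T.toLinearMap)ᗮ = ⊥ := by
    rw [Submodule.eq_bot_iff]
    intro w hw
    rw [Submodule.mem_orthogonal] at hw
    have h1 : ∀ u, inner ℂ u (T w) = 0 := fun u => by
      rw [← hTsym]; exact hw _ ⟨u, rfl⟩
    have h2 : T w = 0 := inner_self_eq_zero.1 (h1 (T w))
    exact hanti.injective (by rw [h2, map_zero])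
  have htop := (Submodule.orthogonal_eq_bot_iff).1 hort
  intro y
  have : y ∈ LinearMap.range T.toLinearMap := by rw [htop]; trivial
  exact this

lemma sq_summable (u : (lp (fun _ : ℤ => ℂ) 2)) : Summable fun n => ‖u n‖ ^ 2 := by
  have := (memℓp_gen_iff (p := 2) (by norm_num)).1 (lp.memℓp u)
  simpa using this

lemma sq_norm (u : (lp (fun _ : ℤ => ℂ) 2)) : ‖u‖ ^ 2 = ∑' n, ‖u n‖ ^ 2 := by
  have := lp.norm_rpow_eq_tsum (p := 2) (by norm_num) u
  simpa using this

lemma shift_summable {F : ℤ → ℝ} (hF : Summable F) (k : ℤ) : Summable fun n => F (n + k) :=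
  hF.comp_injective (add_left_injective k)

lemma shift_tsum (F : ℤ → ℝ) (k : ℤ) : ∑' n, F (n + k) = ∑' n, F n :=
  (Equiv.addRight k).tsum_eq F

lemma shift_tsumC (F : ℤ → ℂ) (k : ℤ) : ∑' n, F (n + k) = ∑' n, F n :=
  (Equiv.addRight k).tsum_eq F

lemma prod_summable (u v : (lp (fun _ : ℤ => ℂ) 2)) (k : ℤ) : Summable fun n => v n * (starRingEnd ℂ) (u (n + k)) := by
  refine Summable.of_norm_bounded ((sq_summable v).add (shift_summable (sq_summable u) k)) ?_
  intro n
  rw [norm_mul, RCLike.norm_conj]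
  nlinarith [sq_nonneg (‖v n‖ - ‖u (n + k)‖), norm_nonneg (v n), norm_nonneg (u (n + k))]

lemma prod_shift (u v : (lp (fun _ : ℤ => ℂ) 2)) (k : ℤ) :
    ∑' n, v n * (starRingEnd ℂ) (u (n + k)) = ∑' n, v (n + -k) * (starRingEnd ℂ) (u n) := by
  rw [← shift_tsumC (fun n => v (n + -k) * (starRingEnd ℂ) (u n)) k]
  simp

lemma prod_summable' (u v : (lp (fun _ : ℤ => ℂ) 2)) (k : ℤ) : Summable fun n => v (n + k) * (starRingEnd ℂ) (u n) := by
  refine Summable.of_norm_bounded ((shift_summable (sq_summable v) k).add (sq_summable u)) ?_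
  intro n
  rw [norm_mul, RCLike.norm_conj]
  nlinarith [sq_nonneg (‖v (n + k)‖ - ‖u n‖), norm_nonneg (v (n + k)), norm_nonneg (u n)]

lemma schr_sym {V : ℝ → ℝ} {b θ : ℝ} {H : (lp (fun _ : ℤ => ℂ) 2) →L[ℂ] (lp (fun _ : ℤ => ℂ) 2)} (hH : IsSchrodingerOp V b θ H) (u v : (lp (fun _ : ℤ => ℂ) 2)) :
    inner ℂ (H u) v = inner ℂ u (H v) := by
  have t1 : Summable fun n : ℤ => inner ℂ (H u n) (v n) := lp.summable_inner (H u) v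
  have t2 : Summable fun n : ℤ => inner ℂ (u n) (H v n) := lp.summable_inner u (H v)
  rw [← sub_eq_zero, lp.inner_eq_tsum, lp.inner_eq_tsum]
  refine (t1.tsum_sub t2).symm.trans ?_
  have h1 : ∀ n, inner ℂ (H u n) (v n) - inner ℂ (u n) (H v n) =
      (v n * (starRingEnd ℂ) (u (n + 1)) - v (n + -1) * (starRingEnd ℂ) (u n)) +
      (v n * (starRingEnd ℂ) (u (n + -1)) - v (n + 1) * (starRingEnd ℂ) (u n)) := by
    intro n
    rw [hH u n, hH v n]
    simp only [RCLike.inner_apply, map_add, map_mul, Complex.conj_ofReal, ← sub_eq_add_neg]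
    ring
  simp_rw [h1]
  have s1 := prod_summable u v 1
  have s2 := prod_summable u v (-1)
  have s3 := prod_summable' u v (-1)
  have s4 := prod_summable' u v 1
  rw [(s1.sub s3).tsum_add (s2.sub s4), s1.tsum_sub s3, s2.tsum_sub s4, prod_shift, prod_shift]
  simp

lemma pot_lip {α : ℝ} (hα : α ∈ Set.Ioo (-1 : ℝ) 1) (lam : ℝ) :
    ∃ C : ℝ, 0 ≤ C ∧ ∀ x y, |potV α lam x - potV α lam y| ≤ C * |x - y| := by
  have ha : 0 < 1 - |α| := by
    have := abs_lt.2 hα; linarith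
  refine ⟨2 * |lam| / (1 - |α|) ^ 2 * (2 * Real.pi), by positivity, fun x y => ?_⟩
  have hc : |Real.cos (2 * Real.pi * x) - Real.cos (2 * Real.pi * y)| ≤ 2 * Real.pi * |x - y| := by
    have h1 := Real.abs_cos_sub_cos_le (2 * Real.pi * x) (2 * Real.pi * y)
    have h2 : 2 * Real.pi * x - 2 * Real.pi * y = 2 * Real.pi * (x - y) := by ring
    rw [h2, abs_mul, abs_of_pos (by positivity : 0 < 2 * Real.pi)] at h1
    exact h1
  have hd : ∀ t : ℝ, 1 - |α| ≤ 1 - α * Real.cos t := by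
    intro t
    have h1 : |α * Real.cos t| ≤ |α| := by
      rw [abs_mul]; exact mul_le_of_le_one_right (abs_nonneg _) (Real.abs_cos_le_one _)
    have := (abs_le.1 h1).2
    linarith
  have d1 := hd (2 * Real.pi * x)
  have d2 := hd (2 * Real.pi * y)
  unfold potV
  set c1 := Real.cos (2 * Real.pi * x)
  set c2 := Real.cos (2 * Real.pi * y)
  have p1 : 0 < 1 - α * c1 := by linarith
  have p2 : 0 < 1 - α * c2 := by linarith
  have e : 2 * lam * c1 / (1 - α * c1) - 2 * lam * c2 / (1 - α * c2) =
      2 * lam * (c1 - c2) / ((1 - α * c1) * (1 - α * c2)) := by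
    rw [div_sub_div _ _ p1.ne' p2.ne']; congr 1; ring
  rw [e, abs_div, abs_mul, abs_mul, abs_two, abs_of_pos (mul_pos p1 p2)]
  calc 2 * |lam| * |c1 - c2| / ((1 - α * c1) * (1 - α * c2)) ≤
      2 * |lam| * (2 * Real.pi * |x - y|) / ((1 - |α|) * (1 - |α|)) := by
        gcongr
    _ = _ := by rw [sq]; ring

/-- the lower spectral bound. -/
lemma beta_ge {α lam b θ : ℝ} (hα : α ∈ Set.Ioo (-1 : ℝ) 1) (hlam : 0 < lam) {H : (lp (fun _ : ℤ => ℂ) 2) →L[ℂ] (lp (fun _ : ℤ => ℂ) 2)}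
    (hH : IsSchrodingerOp (potV α lam) b θ H) {E : ℝ} (hE : (E : ℂ) ∈ spectrum ℂ H) :
    -2 ≤ α * E + 2 * lam := by
  by_contra hcon
  push Not at hcon
  have hα0 : α ≠ 0 := by rintro rfl; linarith
  have hE2 : 2 + 2 * lam < |E| := by
    have h1 : 2 + 2 * lam < |α * E| := by rw [lt_abs]; right; linarith
    rw [abs_mul] at h1
    have h2 : |α| ≤ 1 := (abs_lt.2 hα).le
    exact h1.trans_le (mul_le_of_le_one_left (abs_nonneg _) h2)
  set c := |E| - 2 * lam - 2 with hc
  have hc0 : 0 < c := by rw [hc]; linarith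
  have hV : ∀ x, 2 + c ≤ |potV α lam x - E| := by
    intro x
    have hd := cden_pos hα (2 * Real.pi * x)
    have k1 := Real.neg_one_le_cos (2 * Real.pi * x)
    have k2 := Real.cos_le_one (2 * Real.pi * x)
    rcases lt_or_gt_of_ne hα0 with h | h
    · have hEpos : 0 < E := by
        by_contra hn; push Not at hn; nlinarith
      have hv : potV α lam x ≤ 2 * lam := by
        unfold potV
        rw [div_le_iff₀ hd]
        have : (1 + α) * Real.cos (2 * Real.pi * x) ≤ 1 := by nlinarith [hα.1]
        nlinarith
      rw [abs_sub_comm]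
      refine le_trans ?_ (le_abs_self _)
      rw [hc, abs_of_pos hEpos]; linarith
    · have hEneg : E < 0 := by
        by_contra hn; push Not at hn; nlinarith
      have hv : -(2 * lam) ≤ potV α lam x := by
        unfold potV
        rw [le_div_iff₀ hd]
        have : -1 ≤ (1 - α) * Real.cos (2 * Real.pi * x) := by nlinarith [hα.2]
        nlinarith
      refine le_trans ?_ (le_abs_self _)
      rw [hc, abs_of_neg hEneg]; linarith
  refine not_spec H (schr_sym hH) E (c / Real.sqrt (1 + 1 / c)) (by positivity) (fun u => ?_) hE
  set g : (lp (fun _ : ℤ => ℂ) 2) := H u - (E : ℂ) • u with hg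
  have hgn : ∀ n, g n = u (n + 1) + u (n - 1) + ((potV α lam (n * b + θ) : ℂ) - E) * u n := by
    intro n
    have : g n = H u n - E * u n := rfl
    rw [this, hH u n]; ring
  have hpt : ∀ n, (2 + c) ^ 2 * ‖u n‖ ^ 2 ≤ (1 + 1 / c) * ‖g n‖ ^ 2 +
      2 * (1 + c) * (‖u (n + 1)‖ ^ 2 + ‖u (n + -1)‖ ^ 2) := by
    intro n
    have h1 : ((potV α lam (n * b + θ) : ℂ) - E) * u n = g n - u (n + 1) - u (n + -1) := by
      rw [hgn, ← sub_eq_add_neg]; ring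
    have h2 : (2 + c) * ‖u n‖ ≤ ‖g n‖ + ‖u (n + 1)‖ + ‖u (n + -1)‖ := by
      calc (2 + c) * ‖u n‖ ≤ |potV α lam (n * b + θ) - E| * ‖u n‖ := by gcongr; exact hV _
        _ = ‖((potV α lam (n * b + θ) : ℂ) - E) * u n‖ := by
          rw [norm_mul, ← Complex.ofReal_sub, Complex.norm_real, Real.norm_eq_abs]
        _ ≤ _ := by
          rw [h1]; exact (norm_sub_le _ _).trans (add_le_add_left (norm_sub_le _ _) _)
    rw [← mul_pow]
    refine (pow_le_pow_left₀ (by positivity) h2 2).trans ?_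
    set x := ‖g n‖
    set y := ‖u (n + 1)‖
    set z := ‖u (n + -1)‖
    have e : (1 + 1 / c) * x ^ 2 + 2 * (1 + c) * (y ^ 2 + z ^ 2) - (x + y + z) ^ 2 =
        (x - c * (y + z)) ^ 2 / c + (1 + c) * (y - z) ^ 2 := by field_simp; ring
    have : 0 ≤ (x - c * (y + z)) ^ 2 / c + (1 + c) * (y - z) ^ 2 := by positivity
    linarith
  have sF := sq_summable u
  have sG := sq_summable g
  have sF1 := shift_summable sF 1
  have sF2 := shift_summable sF (-1)
  have hs := (sF.mul_left ((2 + c) ^ 2)).tsum_le_tsum hpt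
    ((sG.mul_left (1 + 1 / c)).add ((sF1.add sF2).mul_left (2 * (1 + c))))
  rw [tsum_mul_left, (sG.mul_left (1 + 1 / c)).tsum_add ((sF1.add sF2).mul_left (2 * (1 + c))), tsum_mul_left,
    tsum_mul_left, sF1.tsum_add sF2, shift_tsum (fun n => ‖u n‖ ^ 2), shift_tsum (fun n => ‖u n‖ ^ 2),
    ← sq_norm, ← sq_norm] at hs
  have h3 : c ^ 2 * ‖u‖ ^ 2 ≤ (1 + 1 / c) * ‖g‖ ^ 2 := by nlinarith
  rw [div_mul_eq_mul_div, div_le_iff₀ (by positivity)]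
  refine (pow_le_pow_iff_left₀ (by positivity) (by positivity) two_ne_zero).1 ?_
  rw [mul_pow, mul_pow, Real.sq_sqrt (by positivity)]
  linarith

end LD

namespace LD


lemma norm_add_sq_le2 (x y : ℂ) : ‖x + y‖ ^ 2 ≤ 2 * ‖x‖ ^ 2 + 2 * ‖y‖ ^ 2 := by
  have h := norm_add_le x y
  have := pow_le_pow_left₀ (norm_nonneg _) h 2
  nlinarith [sq_nonneg (‖x‖ - ‖y‖)]

lemma norm_sub_sq_le2 (x y : ℂ) : ‖x - y‖ ^ 2 ≤ 2 * ‖x‖ ^ 2 + 2 * ‖y‖ ^ 2 := by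
  have := norm_add_sq_le2 x (-y)
  rwa [norm_neg, ← sub_eq_add_neg] at this

lemma norm_add_sq_le3 (x y z : ℂ) : ‖x + y + z‖ ^ 2 ≤ 3 * ‖x‖ ^ 2 + 3 * ‖y‖ ^ 2 + 3 * ‖z‖ ^ 2 := by
  have h := norm_add₃_le (a := x) (b := y) (c := z)
  have := pow_le_pow_left₀ (norm_nonneg _) h 2
  nlinarith [sq_nonneg (‖x‖ - ‖y‖), sq_nonneg (‖x‖ - ‖z‖), sq_nonneg (‖y‖ - ‖z‖)]

lemma window_sum {V : ℝ → ℝ} {b θ E τ C a : ℝ} (hC : 0 ≤ C) (hV : ∀ x y, |V x - V y| ≤ C * |x - y|)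
    (hτ : 0 ≤ τ) {m : ℕ} (ha : |b - a| ≤ 1 / ((m + 1 : ℕ) : ℝ) ^ 2)
    (htr : ∀ E' : ℝ, |E' - E| < τ → ∀ x, 2 < ‖(tProd V a (m + 1) x E').trace‖)
    (u g : ℤ → ℂ) (hg : ∀ n : ℤ, g n = u (n + 1) + u (n - 1) + (V (n * b + θ) : ℂ) * u n - E * u n) (y : ℤ) :
    τ ^ 2 * ∑ i : Fin (m + 1), ‖u (y + ((i : ℕ) : ℤ))‖ ^ 2 ≤
      3 * ∑ i : Fin (m + 1), ‖g (y + ((i : ℕ) : ℤ))‖ ^ 2 +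
      3 * C ^ 2 * ∑ i : Fin (m + 1), ((m + 1 : ℕ) : ℝ)⁻¹ ^ 2 * ‖u (y + ((i : ℕ) : ℤ))‖ ^ 2 +
      12 * (‖u y‖ ^ 2 + ‖u (y + (m + 1 : ℕ))‖ ^ 2 + ‖u (y + m)‖ ^ 2 + ‖u (y + -1)‖ ^ 2) := by
  set σ := finRotate (m + 1) with hσ
  set x := (y : ℝ) * b + θ with hx
  set v : EuclideanSpace ℂ (Fin (m + 1)) := WithLp.toLp 2 (fun i => u (y + ((i : ℕ) : ℤ))) with hv
  have hvi : ∀ i, v i = u (y + ((i : ℕ) : ℤ)) := fun i => rfl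
  have hw := window V a x E τ hτ m (fun E' hE' => htr E' hE' x) v
  simp only [hvi] at hw
  rw [← hσ] at hw
  set d1 : Fin (m + 1) → ℂ := fun i => u (y + ((σ i : Fin (m + 1)) : ℕ)) - u (y + ((i : ℕ) : ℤ) + 1) with hd1
  set d2 : Fin (m + 1) → ℂ := fun i => u (y + ((σ.symm i : Fin (m + 1)) : ℕ)) - u (y + ((i : ℕ) : ℤ) - 1) with hd2
  have hlast : ((σ (Fin.last m) : Fin (m + 1)) : ℕ) = 0 := by rw [hσ, finRotate_last]; rfl
  have hcast : ∀ i : Fin m, ((σ i.castSucc : Fin (m + 1)) : ℕ) = i + 1 := by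
    intro i
    have := finRotate_of_lt i.2
    have h2 : i.castSucc = ⟨i, by omega⟩ := rfl
    rw [hσ, h2, this]
  have S1 : ∑ i, ‖d1 i‖ ^ 2 ≤ 2 * ‖u y‖ ^ 2 + 2 * ‖u (y + (m + 1 : ℕ))‖ ^ 2 := by
    rw [Fin.sum_univ_castSucc]
    have z : ∑ i : Fin m, ‖d1 i.castSucc‖ ^ 2 = 0 := by
      apply Finset.sum_eq_zero
      intro i _
      simp only [hd1, hcast]
      simp [add_assoc]
    rw [z, zero_add]
    simp only [hd1, hlast]
    have := norm_sub_sq_le2 (u y) (u (y + (m + 1 : ℕ)))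
    simpa [add_assoc] using this
  have S2 : ∑ i, ‖d2 i‖ ^ 2 ≤ 2 * ‖u (y + m)‖ ^ 2 + 2 * ‖u (y + -1)‖ ^ 2 := by
    rw [← Equiv.sum_comp σ, Fin.sum_univ_castSucc]
    have z : ∑ i : Fin m, ‖d2 (σ i.castSucc)‖ ^ 2 = 0 := by
      apply Finset.sum_eq_zero
      intro i _
      simp only [hd2, hcast, Equiv.symm_apply_apply]
      have : y + ((i + 1 : ℕ) : ℤ) - 1 = y + (i : ℕ) := by push_cast; ring
      rw [this]; simp
    rw [z, zero_add]
    simp only [hd2, hlast, Equiv.symm_apply_apply]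
    have := norm_sub_sq_le2 (u (y + m)) (u (y + -1))
    simpa [sub_eq_add_neg] using this
  have hpt : ∀ i : Fin (m + 1), ‖u (y + ((σ i : Fin (m + 1)) : ℕ)) + u (y + ((σ.symm i : Fin (m + 1)) : ℕ)) +
      (V (x + (i : ℕ) * a) : ℂ) * u (y + ((i : ℕ) : ℤ)) - E * u (y + ((i : ℕ) : ℤ))‖ ^ 2 ≤
      3 * ‖g (y + ((i : ℕ) : ℤ))‖ ^ 2 + 3 * C ^ 2 * (((m + 1 : ℕ) : ℝ)⁻¹ ^ 2 * ‖u (y + ((i : ℕ) : ℤ))‖ ^ 2) +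
      (6 * ‖d1 i‖ ^ 2 + 6 * ‖d2 i‖ ^ 2) := by
    intro i
    have e : u (y + ((σ i : Fin (m + 1)) : ℕ)) + u (y + ((σ.symm i : Fin (m + 1)) : ℕ)) +
      (V (x + (i : ℕ) * a) : ℂ) * u (y + ((i : ℕ) : ℤ)) - E * u (y + ((i : ℕ) : ℤ)) =
      g (y + ((i : ℕ) : ℤ)) + ((V (x + (i : ℕ) * a) - V (x + (i : ℕ) * b) : ℝ) : ℂ) * u (y + ((i : ℕ) : ℤ)) +
      (d1 i + d2 i) := by
      rw [hg]
      have : ((y + ((i : ℕ) : ℤ) : ℤ) : ℝ) * b + θ = x + (i : ℕ) * b := by rw [hx]; push_cast; ring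
      rw [this]
      simp only [hd1, hd2]
      push_cast; ring
    rw [e]
    have h1 := norm_add_sq_le3 (g (y + ((i : ℕ) : ℤ)))
      (((V (x + (i : ℕ) * a) - V (x + (i : ℕ) * b) : ℝ) : ℂ) * u (y + ((i : ℕ) : ℤ))) (d1 i + d2 i)
    have h2 := norm_add_sq_le2 (d1 i) (d2 i)
    have h3 : |V (x + (i : ℕ) * a) - V (x + (i : ℕ) * b)| ≤ C * ((m + 1 : ℕ) : ℝ)⁻¹ := by
      refine (hV _ _).trans (mul_le_mul_of_nonneg_left ?_ hC)
      have e2 : x + (i : ℕ) * a - (x + (i : ℕ) * b) = (i : ℕ) * (a - b) := by ring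
      rw [e2, abs_mul, abs_sub_comm a b, Nat.abs_cast]
      have hi : ((i : ℕ) : ℝ) ≤ (m + 1 : ℕ) := by exact_mod_cast i.2.le
      calc ((i : ℕ) : ℝ) * |b - a| ≤ (m + 1 : ℕ) * (1 / ((m + 1 : ℕ) : ℝ) ^ 2) := by gcongr
        _ = _ := by field_simp
    rw [norm_mul, Complex.norm_real, Real.norm_eq_abs, mul_pow] at h1
    have h4 : |V (x + (i : ℕ) * a) - V (x + (i : ℕ) * b)| ^ 2 * ‖u (y + ((i : ℕ) : ℤ))‖ ^ 2 ≤
        (C * ((m + 1 : ℕ) : ℝ)⁻¹) ^ 2 * ‖u (y + ((i : ℕ) : ℤ))‖ ^ 2 := by gcongr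
    rw [mul_pow, mul_assoc] at h4
    linarith
  have hsum := Finset.sum_le_sum (fun i (_ : i ∈ Finset.univ) => hpt i)
  simp only [Finset.sum_add_distrib, ← Finset.mul_sum] at hsum
  simp only [← Finset.mul_sum]
  linarith

lemma tsum_window {F : ℤ → ℝ} (hF : Summable F) (q : ℕ) :
    Summable (fun y => ∑ i : Fin q, F (y + ((i : ℕ) : ℤ))) ∧
    ∑' y, ∑ i : Fin q, F (y + ((i : ℕ) : ℤ)) = q * ∑' y, F y := by
  have hs : ∀ i ∈ (Finset.univ : Finset (Fin q)), Summable fun y => F (y + ((i : ℕ) : ℤ)) :=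
    fun i _ => shift_summable hF _
  refine ⟨summable_sum hs, ?_⟩
  rw [Summable.tsum_finsetSum hs]
  simp only [shift_tsum]
  simp

lemma gap_bound {V : ℝ → ℝ} {b θ E τ C a : ℝ} (hC : 0 ≤ C) (hV : ∀ x y, |V x - V y| ≤ C * |x - y|)
    (hτ : 0 < τ) {m : ℕ} (ha : |b - a| ≤ 1 / ((m + 1 : ℕ) : ℝ) ^ 2)
    (hm : 2 * (3 * C ^ 2 + 48) ≤ τ ^ 2 * (m + 1 : ℕ))
    (htr : ∀ E' : ℝ, |E' - E| < τ → ∀ x, 2 < ‖(tProd V a (m + 1) x E').trace‖)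
    {H : (lp (fun _ : ℤ => ℂ) 2) →L[ℂ] (lp (fun _ : ℤ => ℂ) 2)} (hH : IsSchrodingerOp V b θ H) : (E : ℂ) ∉ spectrum ℂ H := by
  refine not_spec H (schr_sym hH) E (τ / 3) (by positivity) (fun u => ?_)
  set g : (lp (fun _ : ℤ => ℂ) 2) := H u - (E : ℂ) • u with hgdef
  have hgn : ∀ n : ℤ, g n = u (n + 1) + u (n - 1) + (V (n * b + θ) : ℂ) * u n - E * u n := by
    intro n
    have : g n = H u n - E * u n := rfl
    rw [this, hH u n]
  have hpt := window_sum hC hV hτ.le ha htr u g hgn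
  have sF := sq_summable u
  have sG := sq_summable g
  obtain ⟨wF, eF⟩ := tsum_window sF (m + 1)
  obtain ⟨wG, eG⟩ := tsum_window sG (m + 1)
  obtain ⟨wF', eF'⟩ := tsum_window (sF.mul_left (((m + 1 : ℕ) : ℝ)⁻¹ ^ 2)) (m + 1)
  have s2 := shift_summable sF (m + 1 : ℕ)
  have s3 := shift_summable sF m
  have s4 := shift_summable sF (-1)
  have r1 := (((wG.mul_left 3).hasSum.add (wF'.mul_left (3 * C ^ 2)).hasSum).add
    ((((sF.hasSum.add s2.hasSum).add s3.hasSum).add s4.hasSum).mul_left 12))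
  have hs := hasSum_le hpt (wF.mul_left (τ ^ 2)).hasSum r1
  rw [tsum_mul_left, tsum_mul_left, tsum_mul_left, eF, eG, eF', shift_tsum (fun n => ‖u n‖ ^ 2),
    shift_tsum (fun n => ‖u n‖ ^ 2), shift_tsum (fun n => ‖u n‖ ^ 2), tsum_mul_left, ← sq_norm, ← sq_norm] at hs
  set q : ℝ := ((m + 1 : ℕ) : ℝ) with hq
  have hq1 : 1 ≤ q := by rw [hq]; exact_mod_cast Nat.succ_le_succ (Nat.zero_le m)
  have hq0 : 0 < q := by linarith
  have e1 : q * (q⁻¹ ^ 2 * ‖u‖ ^ 2) ≤ ‖u‖ ^ 2 := by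
    have : q * (q⁻¹ ^ 2 * ‖u‖ ^ 2) = q⁻¹ * ‖u‖ ^ 2 := by field_simp
    rw [this]
    exact mul_le_of_le_one_left (by positivity) (inv_le_one_of_one_le₀ hq1)
  have e2 : 3 * C ^ 2 * (q * (q⁻¹ ^ 2 * ‖u‖ ^ 2)) ≤ 3 * C ^ 2 * ‖u‖ ^ 2 :=
    mul_le_mul_of_nonneg_left e1 (by positivity)
  have e3 : 2 * (3 * C ^ 2 + 48) * ‖u‖ ^ 2 ≤ τ ^ 2 * q * ‖u‖ ^ 2 :=
    mul_le_mul_of_nonneg_right hm (by positivity)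
  have e4 : q * (τ ^ 2 * ‖u‖ ^ 2) ≤ q * (6 * ‖g‖ ^ 2) := by nlinarith
  have e5 := le_of_mul_le_mul_left e4 hq0
  refine (pow_le_pow_iff_left₀ (by positivity) (by positivity) two_ne_zero).1 ?_
  rw [mul_pow, div_pow]
  nlinarith [sq_nonneg ‖g‖, sq_nonneg ‖u‖]

lemma not_spec_of_pos {α lam b θ : ℝ} (hα : α ∈ Set.Ioo (-1 : ℝ) 1) (hb : Irrational b)
    {H : (lp (fun _ : ℤ => ℂ) 2) →L[ℂ] (lp (fun _ : ℤ => ℂ) 2)} (hH : IsSchrodingerOp (potV α lam) b θ H) {E : ℝ}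
    (hβ : |α * E + 2 * lam| ≤ 2) (hL : 0 < lyap (potV α lam) b E) : (E : ℂ) ∉ spectrum ℂ H := by
  obtain ⟨η, hη, Q, hgap⟩ := gap_trace hα lam E hb hL hβ
  obtain ⟨C, hC, hV⟩ := pot_lip hα lam
  obtain ⟨N1, hN1⟩ := exists_nat_gt (2 * Real.pi / η)
  obtain ⟨N2, hN2⟩ := exists_nat_gt (2 * (3 * C ^ 2 + 48) / η ^ 2)
  obtain ⟨p, q, hQ, hq, hpq, happ⟩ := exists_approx hb (max Q (max N1 N2))
  have hqQ : Q ≤ q := le_of_max_le_left hQ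
  have hq1 : N1 ≤ q := (le_max_left _ _).trans (le_of_max_le_right hQ)
  have hq2 : N2 ≤ q := (le_max_right _ _).trans (le_of_max_le_right hQ)
  obtain ⟨m, rfl⟩ : ∃ m, q = m + 1 := ⟨q - 1, by omega⟩
  have hq1R : (N1 : ℝ) ≤ ((m + 1 : ℕ) : ℝ) := by exact_mod_cast hq1
  have hq2R : (N2 : ℝ) ≤ ((m + 1 : ℕ) : ℝ) := by exact_mod_cast hq2
  have hqone : (1 : ℝ) ≤ ((m + 1 : ℕ) : ℝ) := by exact_mod_cast hq
  rw [div_lt_iff₀ hη] at hN1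
  rw [div_lt_iff₀ (by positivity)] at hN2
  have hw : ‖ee (p / (m + 1 : ℕ)) - ee b‖ < η := by
    refine (ee_lip _ _).trans_lt ?_
    rw [abs_sub_comm]
    have h1 : 2 * Real.pi < ((m + 1 : ℕ) : ℝ) * η := hN1.trans_le (by gcongr)
    calc 2 * Real.pi * |b - p / (m + 1 : ℕ)| ≤ 2 * Real.pi * (1 / ((m + 1 : ℕ) : ℝ) ^ 2) := by gcongr
      _ ≤ 2 * Real.pi * (1 / ((m + 1 : ℕ) : ℝ)) := by
        gcongr
        nlinarith
      _ < η := by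
        rw [mul_one_div, div_lt_iff₀ (by linarith)]; linarith
  refine gap_bound hC hV hη happ ?_ (fun E' hE' x => hgap E' hE' p (m + 1) hqQ hq hpq hw x) hH
  have : (N2 : ℝ) * η ^ 2 ≤ ((m + 1 : ℕ) : ℝ) * η ^ 2 := by gcongr
  linarith

end LD

/-- suppose `λ > 0`; then for every `θ` and every `E` in the spectrum of
`H_{α,θ,b}`: `L(E) > 0 ↔ αE > 2(1-λ)`, and `L(E) = 0 ↔ αE ≤ 2(1-λ)`. -/
theorem lyapunov_dichotomy_pos_coupling (α lam b θ : ℝ) (hα : α ∈ Set.Ioo (-1 : ℝ) 1)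
    (hb : Irrational b) (hlam : 0 < lam)
    (H : lp (fun _ : ℤ => ℂ) 2 →L[ℂ] lp (fun _ : ℤ => ℂ) 2)
    (hH : IsSchrodingerOp (potV α lam) b θ H)
    (E : ℝ) (hE : (E : ℂ) ∈ spectrum ℂ H) :
    (0 < lyap (potV α lam) b (E : ℂ) ↔ 2 * (1 - lam) < α * E) ∧
    (lyap (potV α lam) b (E : ℂ) = 0 ↔ α * E ≤ 2 * (1 - lam)) := by
  have h0 := LD.lyap_nonneg (potV α lam) b (E : ℂ)
  have hpos : 2 * (1 - lam) < α * E → 0 < lyap (potV α lam) b (E : ℂ) :=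
    fun h => LD.herman hα lam E b (by linarith)
  have hzero : α * E ≤ 2 * (1 - lam) → lyap (potV α lam) b (E : ℂ) = 0 := by
    intro h
    by_contra hne
    have hL : 0 < lyap (potV α lam) b (E : ℂ) := lt_of_le_of_ne h0 (Ne.symm hne)
    exact LD.not_spec_of_pos hα hb hH (abs_le.2 ⟨LD.beta_ge hα hlam hH hE, by linarith⟩) hL hE
  refine ⟨⟨fun h => ?_, hpos⟩, ⟨fun h => ?_, hzero⟩⟩
  · by_contra hc
    exact absurd (hzero (not_lt.1 hc)) h.ne'
  · by_contra hc
    exact absurd (hpos (not_le.1 hc)) (by rw [h]; exact lt_irrefl 0)
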